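/- arXiv:1306.3598 — 2 statements merged into one kernel-verified Lean document; each statement's English description precedes it below -/
import Mathlib

section
/- Let d ≥ 2, 2 ≤ k ≤ d, and let E ⊂ ℝ^d be a compact set. If the Hausdorff dimension of E is greater than (dk+1)/(k+1), then the k(k+1)/2-dimensional Lebesgue measure of T_k(E) is positive. -/
open MeasureTheory Metric Set Topology
open scoped ENNReal

noncomputable section

/-- `ℝ^d` as Euclidean space. -/
abbrev Pt (d : ℕ) := EuclideanSpace ℝ (Fin d)

/-- The index set of pairs `i < j` in `{1, …, k+1}`; it has `k(k+1)/2` elements. -/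
abbrev PairIdx (k : ℕ) : Type := {p : Fin (k+1) × Fin (k+1) // p.1 < p.2}

/-- The map sending a `(k+1)`-tuple of points to its vector of pairwise distances. -/
def simplexMap (d k : ℕ) (x : Fin (k+1) → Pt d) : PairIdx k → ℝ :=
  fun p => dist (x p.1.1) (x p.1.2)

/-- A `(k+1)`-tuple is nondegenerate if `x^2 - x^1, …, x^{k+1} - x^1` are linearly
independent. -/
def Nondeg (d k : ℕ) (x : Fin (k+1) → Pt d) : Prop :=
  LinearIndependent ℝ (fun i : Fin k => x i.succ - x 0)

/-- `T_k(E)`: the set of congruence classes of nondegenerate `k`-simplices with vertices in `E`,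
realized as a subset of `ℝ^{k(k+1)/2}` via the pairwise-distance map. -/
def Tconf (d k : ℕ) (E : Set (Pt d)) : Set (PairIdx k → ℝ) :=
  simplexMap d k '' {x | (∀ i, x i ∈ E) ∧ Nondeg d k x}

/-
By Frostman's lemma `E` carries a probability measure `μ` with `μ (B (x, r)) ≤ C r ^ s` for some `s`
with `d k + 1 < s (k + 1)`. Let `μ_R` be the mollification of `μ` at scale `1 / R`, and let
`N_R (g, z)` be the correlation of `μ_R` with its image under the rigid motion `x ↦ g x + z`.
In Fourier space, `N_R (g, ·)` has spectrum `ξ ↦ μ̂ (g⁻¹ ξ) * conj (μ̂ ξ)`. The energy bound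
`∫_{|ξ| ≤ R} |μ̂| ^ 2 ≲ R ^ (d - s)` and the bound `≲ |ξ| ^ (1 - s)` for the averages of `|μ̂| ^ 2`
over spheres control the frequency bands `|ξ| ~ 2 ^ j` of `N_R` in `L ^ ∞` and in `L ^ 2`, so that
`∫ N_R ^ (k + 1)` is bounded uniformly in `R` by a geometric series, which converges exactly when
`d k + 1 < s (k + 1)`.

Now `∫ N_R ^ (k + 1)` is the squared `L ^ 2` norm, per unit volume of rigid motions, of the average
over rigid motions of `μ_R ⊗ ⋯ ⊗ μ_R` on `(k + 1)`-tuples. Hence this average cannot concentrate on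
a null set, and the `(k + 1)`-tuples congruent to a nondegenerate tuple of points of `E` have
positive measure. As the distance map is a submersion at nondegenerate tuples, null sets of distance
vectors have null preimages there, so `T_k(E)` is not null.
-/

/-! ### Frostman's lemma -/

section Content

variable {X : Type*} [EMetricSpace X]

/-- The `s`-dimensional Hausdorff content: the Hausdorff measure without the restriction to covers
by small sets. -/
def hausdorffContent (s : ℝ) : OuterMeasure X :=
  OuterMeasure.boundedBy fun A ↦ ediam A ^ s

lemma hausdorffContent_le_ediam_rpow {s : ℝ} (A : Set X) :
    hausdorffContent s A ≤ ediam A ^ s :=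
  OuterMeasure.boundedBy_le A

variable [MeasurableSpace X] [BorelSpace X]

lemma hausdorffMeasure_eq_zero_of_hausdorffContent_eq_zero {s : ℝ} (hs : 0 < s) {E : Set X}
    (h : hausdorffContent s E = 0) : μH[s] E = 0 := by
  rw [hausdorffContent, OuterMeasure.boundedBy_apply] at h
  rw [← nonpos_iff_eq_zero, Measure.hausdorffMeasure_apply]
  refine iSup₂_le fun r hr ↦ le_of_forall_gt_imp_ge_of_dense fun δ hδ ↦ ?_
  have hrs : 0 < r ^ s := by
    rcases eq_or_ne r ⊤ with rfl | hr_top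
    · simp [hs]
    · exact ENNReal.rpow_pos hr hr_top
  -- A cover of total weight below `r ^ s` consists of sets of diameter below `r`.
  obtain ⟨t, htE, ht⟩ : ∃ t : ℕ → Set X, E ⊆ ⋃ n, t n ∧
      ∑' n, ⨆ _ : (t n).Nonempty, ediam (t n) ^ s < min δ (r ^ s) := by
    simpa only [iInf_lt_iff, exists_prop] using h.trans_lt (lt_min hδ hrs)
  refine iInf_le_of_le t (iInf₂_le_of_le htE (fun n ↦ ?_) (ht.le.trans (min_le_left _ _)))
  rcases (t n).eq_empty_or_nonempty with hempty | hne
  · simp [hempty]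
  · rw [← ENNReal.rpow_le_rpow_iff hs]
    calc ediam (t n) ^ s = ⨆ _ : (t n).Nonempty, ediam (t n) ^ s := by simp [hne]
      _ ≤ ∑' n, ⨆ _ : (t n).Nonempty, ediam (t n) ^ s := ENNReal.le_tsum n
      _ ≤ r ^ s := ht.le.trans (min_le_right _ _)

lemma hausdorffContent_ne_zero_of_lt_dimH {s : ℝ} (hs : 0 < s) {E : Set X}
    (h : ENNReal.ofReal s < dimH E) : hausdorffContent s E ≠ 0 := by
  intro h0
  have htop : μH[(s.toNNReal : ℝ)] E = ⊤ := hausdorffMeasure_of_lt_dimH h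
  rw [Real.coe_toNNReal s hs.le, hausdorffMeasure_eq_zero_of_hausdorffContent_eq_zero hs h0] at htop
  exact ENNReal.zero_ne_top htop

end Content

section TreeMass

variable {ι : Type*} (par : ι → ι) (a : ℕ → ι → ℝ≥0∞)

/-- Mass flowing down a forest: the node `q` of generation `n + 1` has the parent `par q` of
generation `n`. Generation `0` carries the mass `a 0`, and each node distributes its mass among its
children in proportion to the capacities `a (n + 1)`. -/
def treeMass : ℕ → ι → ℝ≥0∞
  | 0, q => a 0 q
  | n + 1, q => treeMass n (par q) * (a (n + 1) q / ∑' r : {r // par r = par q}, a (n + 1) r)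

variable {par a} (ha : ∀ n p, a n p ≤ ∑' r : {r // par r = p}, a (n + 1) r)
include ha

lemma treeMass_le (n : ℕ) (q : ι) : treeMass par a n q ≤ a n q := by
  induction n generalizing q with
  | zero => exact le_rfl
  | succ n ih =>
    rw [treeMass]
    grw [ih (par q), ha n (par q)]
    exact ENNReal.mul_div_le

variable (ha_top : ∀ n p, ∑' r : {r // par r = p}, a (n + 1) r ≠ ⊤)
include ha_top

lemma tsum_fiber_treeMass (n : ℕ) (p : ι) :
    ∑' q : {q // par q = p}, treeMass par a (n + 1) q = treeMass par a n p := by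
  set S := ∑' r : {r // par r = p}, a (n + 1) r with hS
  have hchild (q : {q // par q = p}) :
      treeMass par a (n + 1) q = treeMass par a n p / S * a (n + 1) q := by
    rw [treeMass, q.2, ← hS, div_eq_mul_inv, div_eq_mul_inv]
    ring
  simp_rw [hchild, ENNReal.tsum_mul_left, ← hS]
  refine ENNReal.div_mul_cancel' (fun hS0 ↦ ?_) fun hS_top ↦ absurd hS_top (ha_top n p)
  simpa [← hS, hS0] using (treeMass_le ha n p).trans (ha n p)

lemma tsum_mul_treeMass (φ : ι → ℝ≥0∞) (n j : ℕ) :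
    ∑' q, φ (par^[j] q) * treeMass par a (n + j) q = ∑' p, φ p * treeMass par a n p := by
  induction j with
  | zero => rfl
  | succ j ih =>
    rw [← ih, ← (Equiv.sigmaFiberEquiv par).tsum_eq, ENNReal.tsum_sigma']
    refine tsum_congr fun p ↦ ?_
    rw [← tsum_fiber_treeMass ha ha_top, ← ENNReal.tsum_mul_left]
    refine tsum_congr fun q ↦ ?_
    simp only [Equiv.sigmaFiberEquiv, Equiv.coe_fn_mk, Function.iterate_succ_apply, q.2, add_assoc]

end TreeMass

section Dyadic

variable {d : ℕ}

/-- The index of the half-open dyadic cube of side `2⁻ⁿ` containing `x`. -/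
def dyadicIndex (n : ℕ) (x : Pt d) : Fin d → ℤ := fun i ↦ ⌊(2 : ℝ) ^ n * x i⌋

/-- The index of the dyadic cube of the previous generation containing the cube of index `q`. -/
def dyadicParent (q : Fin d → ℤ) : Fin d → ℤ := fun i ↦ q i / 2

lemma dyadicParent_dyadicIndex (n : ℕ) (x : Pt d) :
    dyadicParent (dyadicIndex (n + 1) x) = dyadicIndex n x := by
  ext i
  calc ⌊(2 : ℝ) ^ (n + 1) * x i⌋ / ((2 : ℕ) : ℤ)
      = ⌊(2 : ℝ) ^ (n + 1) * x i / (2 : ℕ)⌋ := (Int.floor_div_natCast _ 2).symm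
    _ = ⌊(2 : ℝ) ^ n * x i⌋ := by congr 1; push_cast; ring

lemma iterate_dyadicParent_dyadicIndex (n j : ℕ) (x : Pt d) :
    dyadicParent^[j] (dyadicIndex (n + j) x) = dyadicIndex n x := by
  induction j with
  | zero => rfl
  | succ j ih => rw [Function.iterate_succ_apply, ← add_assoc, dyadicParent_dyadicIndex, ih]

instance finite_fiber_dyadicParent (p : Fin d → ℤ) : Finite {q // dyadicParent q = p} := by
  refine ((Set.Finite.pi' fun i ↦ finite_Icc (2 * p i) (2 * p i + 1)).subset fun q hq i ↦ ?_ :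
    {q | dyadicParent q = p}.Finite).to_subtype
  have hqi : q i / 2 = p i := congrFun hq i
  simp only [mem_Icc]
  omega

lemma measurable_dyadicIndex (n : ℕ) : Measurable (dyadicIndex n : Pt d → Fin d → ℤ) :=
  measurable_pi_lambda _ fun i ↦ Int.measurable_floor.comp (by fun_prop)

lemma ediam_preimage_dyadicIndex_le (n : ℕ) (q : Fin d → ℤ) :
    ediam (dyadicIndex n ⁻¹' {q} : Set (Pt d)) ≤ ENNReal.ofReal (√d * (1 / 2) ^ n) := by
  refine Metric.ediam_le fun x hx y hy ↦ ?_
  have hcoord (i : Fin d) : dist (x i) (y i) ≤ (1 / 2) ^ n := by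
    have h := Int.abs_sub_lt_one_of_floor_eq_floor
      ((congrFun hx i : ⌊(2 : ℝ) ^ n * x i⌋ = q i).trans (congrFun hy i).symm)
    rw [← mul_sub, abs_mul, abs_of_pos (by positivity)] at h
    rw [Real.dist_eq, one_div_pow, le_div_iff₀' (by positivity)]
    exact h.le
  rw [edist_dist, EuclideanSpace.dist_eq]
  apply ENNReal.ofReal_le_ofReal
  calc √(∑ i, dist (x i) (y i) ^ 2) ≤ √(∑ _ : Fin d, ((1 / 2 : ℝ) ^ n) ^ 2) := by
        gcongr with i
        exact hcoord i
    _ = √d * (1 / 2) ^ n := by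
        simp [Real.sqrt_mul, Real.sqrt_sq]

lemma dyadicIndex_mem_Icc_of_dist_le {n : ℕ} {x y : Pt d} (h : dist x y ≤ (1 / 2) ^ n)
    (i : Fin d) :
    dyadicIndex n x i ∈ Finset.Icc (dyadicIndex n y i - 1) (dyadicIndex n y i + 1) := by
  have hcoord : |x i - y i| ≤ (1 / 2) ^ n := by
    rw [dist_eq_norm] at h
    exact (PiLp.norm_apply_le (x - y) i).trans h
  have hscaled : |(2 : ℝ) ^ n * x i - 2 ^ n * y i| ≤ 1 := by
    rw [← mul_sub, abs_mul, abs_of_pos (by positivity)]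
    calc (2 : ℝ) ^ n * |x i - y i| ≤ 2 ^ n * (1 / 2) ^ n := by gcongr
      _ = 1 := by rw [← mul_pow]; norm_num
  rw [abs_le] at hscaled
  simp only [dyadicIndex, Finset.mem_Icc, ← Int.floor_sub_one, ← Int.floor_add_one]
  exact ⟨Int.floor_le_floor (by linarith), Int.floor_le_floor (by linarith)⟩

lemma measure_closedBall_le_of_dyadic {μ : Measure (Pt d)} {n : ℕ} {c : ℝ≥0∞}
    (h : ∀ q, μ (dyadicIndex n ⁻¹' {q}) ≤ c) (y : Pt d) :
    μ (closedBall y ((1 / 2) ^ n)) ≤ 3 ^ d * c := by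
  let N : Finset (Fin d → ℤ) :=
    Fintype.piFinset fun i ↦ Finset.Icc (dyadicIndex n y i - 1) (dyadicIndex n y i + 1)
  have hN : N.card = 3 ^ d := by
    have hIcc (i : Fin d) : (dyadicIndex n y i + 1 + 1 - (dyadicIndex n y i - 1)).toNat = 3 := by
      omega
    simp [N, hIcc]
  have hcover : closedBall y ((1 / 2) ^ n) ⊆ ⋃ q ∈ N, dyadicIndex n ⁻¹' {q} := fun x hx ↦ by
    simpa [N] using fun i ↦ Finset.mem_Icc.1 (dyadicIndex_mem_Icc_of_dist_le hx i)
  calc μ (closedBall y ((1 / 2) ^ n)) ≤ ∑ q ∈ N, μ (dyadicIndex n ⁻¹' {q}) :=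
        (measure_mono hcover).trans (measure_biUnion_finset_le _ _)
    _ ≤ ∑ _q ∈ N, c := Finset.sum_le_sum fun q _ ↦ h q
    _ = 3 ^ d * c := by simp [hN]

lemma finite_dyadicIndex_image {E : Set (Pt d)} (hE : Bornology.IsBounded E) (n : ℕ) :
    (dyadicIndex n '' E).Finite := by
  obtain ⟨R, hR⟩ := hE.exists_norm_le
  refine (Set.Finite.pi' fun _ : Fin d ↦
    finite_Icc ⌊-((2 : ℝ) ^ n * R)⌋ ⌊(2 : ℝ) ^ n * R⌋).subset ?_
  rintro _ ⟨x, hx, rfl⟩ i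
  have hxi : |x i| ≤ R := (PiLp.norm_apply_le x i).trans (hR x hx)
  rw [abs_le] at hxi
  refine ⟨Int.floor_le_floor ?_, Int.floor_le_floor (by gcongr; exact hxi.2)⟩
  rw [← mul_neg]
  gcongr
  exact hxi.1

end Dyadic

section Frostman

variable {X : Type*} [PseudoMetricSpace X] [MeasurableSpace X]

/-- The Frostman condition `μ (B(x, r)) ≤ C r ^ s`, for all radii `r > 0`. -/
def IsFrostman (μ : Measure X) (C s : ℝ) : Prop :=
  ∀ x, ∀ r > 0, μ (closedBall x r) ≤ ENNReal.ofReal (C * r ^ s)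

lemma exists_isFrostman_of_dyadic {μ : Measure X} [IsProbabilityMeasure μ] {s : ℝ} (hs : 0 ≤ s)
    {c : ℝ≥0∞} (hc : c ≠ ⊤)
    (h : ∀ (n : ℕ) (x : X), μ (ball x ((1 / 2) ^ n)) ≤ c * ENNReal.ofReal ((1 / 2) ^ n) ^ s) :
    ∃ C > 0, IsFrostman μ C s := by
  refine ⟨max 1 c.toReal * 4 ^ s, by positivity, fun x r hr ↦ ?_⟩
  have hCr : max 1 c.toReal * 4 ^ s * r ^ s = max 1 c.toReal * (4 * r) ^ s := by
    rw [Real.mul_rpow (by norm_num) hr.le, mul_assoc]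
  rw [hCr]
  rcases lt_or_ge 1 (2 * r) with hr1 | hr1
  · refine prob_le_one.trans (ENNReal.one_le_ofReal.2 ?_)
    exact one_le_mul_of_one_le_of_one_le (le_max_left _ _) (Real.one_le_rpow (by linarith) hs)
  · obtain ⟨n, hn, hn'⟩ := exists_nat_pow_near_of_lt_one (by positivity : 0 < 2 * r) hr1
      (by norm_num : (0 : ℝ) < 1 / 2) (by norm_num)
    have hn4 : (1 / 2 : ℝ) ^ n ≤ 4 * r := by rw [pow_succ] at hn; linarith
    calc μ (closedBall x r) ≤ μ (ball x ((1 / 2) ^ n)) :=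
          measure_mono (closedBall_subset_ball (by linarith))
      _ ≤ ENNReal.ofReal c.toReal * ENNReal.ofReal (((1 / 2) ^ n) ^ s) := by
          rw [ENNReal.ofReal_toReal hc, ← ENNReal.ofReal_rpow_of_nonneg (by positivity) hs]
          exact h n x
      _ ≤ ENNReal.ofReal (max 1 c.toReal * (4 * r) ^ s) := by
          rw [← ENNReal.ofReal_mul (by positivity)]
          gcongr
          exact le_max_right _ _

end Frostman

lemma exists_probabilityMeasure_forall_isOpen_le {X : Type*} [TopologicalSpace X]
    [MeasurableSpace X] [OpensMeasurableSpace X] [HasOuterApproxClosed X]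
    [CompactSpace (ProbabilityMeasure X)] (P : ℕ → ProbabilityMeasure X) :
    ∃ Q : ProbabilityMeasure X, ∀ U, IsOpen U → ∀ c : ℝ≥0∞,
      (∀ᶠ n in Filter.atTop, (P n : Measure X) U ≤ c) → (Q : Measure X) U ≤ c := by
  let F : Ultrafilter ℕ := Filter.hyperfilter ℕ
  have hF : (F : Filter ℕ) ≤ Filter.atTop :=
    Filter.hyperfilter_le_cofinite.trans_eq Nat.cofinite_eq_atTop
  have : Nonempty (ProbabilityMeasure X) := ⟨P 0⟩
  refine ⟨(F.map P).lim, fun U hU c hc ↦ ?_⟩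
  exact (ProbabilityMeasure.le_liminf_measure_open_of_tendsto (F.map P).le_nhds_lim hU).trans
    (Filter.liminf_le_of_frequently_le' (Filter.Eventually.filter_mono hF hc).frequently)

lemma exists_probabilityMeasure_preimage_eq_tsum {X ι : Type*} [MeasurableSpace X]
    [MeasurableSpace ι] {f : X → ι} (hf : Measurable f) {w : ι → ℝ≥0∞}
    (hw : ∀ q, w q ≠ 0 → q ∈ range f) (h0 : ∑' q, w q ≠ 0) (h_top : ∑' q, w q ≠ ⊤) :
    ∃ P : ProbabilityMeasure X, ∀ S, MeasurableSet S →
      (P : Measure X) (f ⁻¹' S) = (∑' q, w q)⁻¹ * ∑' q, S.indicator 1 q * w q := by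
  obtain ⟨q₀, hq₀⟩ : ∃ q, w q ≠ 0 := by simpa using h0
  obtain ⟨x₀, -⟩ := hw q₀ hq₀
  have hpoint (q : ι) : ∃ x, w q ≠ 0 → f x = q := by
    by_cases hq : w q = 0
    · exact ⟨x₀, fun h ↦ absurd hq h⟩
    · exact (hw q hq).imp fun x hx _ ↦ hx
  choose x hx using hpoint
  let M : Measure X := (∑' q, w q)⁻¹ • Measure.sum fun q ↦ w q • Measure.dirac (x q)
  have hM : IsProbabilityMeasure M :=
    ⟨by simp [M, Measure.sum_apply, ENNReal.inv_mul_cancel h0 h_top]⟩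
  refine ⟨⟨M, hM⟩, fun S hS ↦ ?_⟩
  classical
  have hterm (q : ι) : w q * Measure.dirac (x q) (f ⁻¹' S) = S.indicator 1 q * w q := by
    rcases eq_or_ne (w q) 0 with hq | hq
    · simp [hq]
    · rw [Measure.dirac_apply' _ (hf hS), mul_comm]
      simp [indicator_apply, hx q hq]
  simp [M, Measure.sum_apply _ (hf hS), hterm]

section FrostmanConstruction

variable {d : ℕ} {s : ℝ} {E : Set (Pt d)}

/-- The Hausdorff content of the part of `E` in the dyadic cube of generation `n` and index `q`:
the most mass that a measure as in Frostman's lemma may give to that cube. -/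
def dyadicCapacity (s : ℝ) (E : Set (Pt d)) (n : ℕ) (q : Fin d → ℤ) : ℝ≥0∞ :=
  hausdorffContent s (E ∩ dyadicIndex n ⁻¹' {q})

lemma dyadicCapacity_le (hs : 0 ≤ s) (n : ℕ) (q : Fin d → ℤ) :
    dyadicCapacity s E n q ≤ ENNReal.ofReal (√d) ^ s * ENNReal.ofReal ((1 / 2) ^ n) ^ s := by
  rw [← ENNReal.mul_rpow_of_nonneg _ _ hs, ← ENNReal.ofReal_mul (by positivity)]
  refine (measure_mono inter_subset_right).trans ((hausdorffContent_le_ediam_rpow _).trans ?_)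
  exact ENNReal.rpow_le_rpow (ediam_preimage_dyadicIndex_le n q) hs

lemma dyadicCapacity_ne_top (hs : 0 ≤ s) (n : ℕ) (q : Fin d → ℤ) :
    dyadicCapacity s E n q ≠ ⊤ :=
  ne_top_of_le_ne_top (by finiteness) (dyadicCapacity_le hs n q)

lemma dyadicCapacity_le_tsum (n : ℕ) (p : Fin d → ℤ) :
    dyadicCapacity s E n p ≤
      ∑' q : {q // dyadicParent q = p}, dyadicCapacity s E (n + 1) q := by
  refine (measure_mono fun x hx ↦ ?_).trans (measure_iUnion_le _)
  rw [mem_iUnion]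
  exact ⟨⟨dyadicIndex (n + 1) x, (dyadicParent_dyadicIndex n x).trans hx.2⟩, hx.1, rfl⟩

lemma tsum_dyadicCapacity_ne_top (hs : 0 ≤ s) (n : ℕ) (p : Fin d → ℤ) :
    ∑' q : {q // dyadicParent q = p}, dyadicCapacity s E (n + 1) q ≠ ⊤ := by
  have := Fintype.ofFinite {q // dyadicParent q = p}
  rw [tsum_fintype]
  exact ENNReal.sum_ne_top.2 fun q _ ↦ dyadicCapacity_ne_top hs _ _

lemma mem_image_of_dyadicCapacity_ne_zero {n : ℕ} {q : Fin d → ℤ}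
    (h : dyadicCapacity s E n q ≠ 0) : q ∈ dyadicIndex n '' E := by
  obtain ⟨x, hx, hxq⟩ : (E ∩ dyadicIndex n ⁻¹' {q}).Nonempty :=
    nonempty_iff_ne_empty.2 fun hempty ↦ h (by rw [dyadicCapacity, hempty, measure_empty])
  exact ⟨x, hx, hxq⟩

lemma tsum_dyadicCapacity_ne_zero (h : hausdorffContent s E ≠ 0) :
    ∑' q, dyadicCapacity s E 0 q ≠ 0 := fun h0 ↦ by
  have hcover : E ⊆ ⋃ q, E ∩ dyadicIndex 0 ⁻¹' {q} := fun x hx ↦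
    mem_iUnion.2 ⟨dyadicIndex 0 x, hx, rfl⟩
  exact h (nonpos_iff_eq_zero.1 (((measure_mono hcover).trans (measure_iUnion_le _)).trans_eq h0))

lemma tsum_dyadicCapacity_ne_top_of_isBounded (hs : 0 ≤ s) (hE : Bornology.IsBounded E) (n : ℕ) :
    ∑' q, dyadicCapacity s E n q ≠ ⊤ := by
  rw [tsum_eq_sum (s := (finite_dyadicIndex_image hE n).toFinset) fun q hq ↦ ?_]
  · exact ENNReal.sum_ne_top.2 fun q _ ↦ dyadicCapacity_ne_top hs n q
  · by_contra hq0
    exact hq (by simpa using mem_image_of_dyadicCapacity_ne_zero hq0)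

lemma exists_probabilityMeasure_dyadic_le (hs : 0 ≤ s) (hE : Bornology.IsBounded E)
    (hcontent : hausdorffContent s E ≠ 0) (n : ℕ) :
    ∃ P : ProbabilityMeasure E, ∀ m ≤ n, ∀ p,
      (P : Measure E) ((fun x : E ↦ dyadicIndex m x.1) ⁻¹' {p}) ≤
        (∑' q, dyadicCapacity s E 0 q)⁻¹ *
          (ENNReal.ofReal (√d) ^ s * ENNReal.ofReal ((1 / 2) ^ m) ^ s) := by
  classical
  let w := treeMass dyadicParent (dyadicCapacity s E)
  let Z := ∑' q, dyadicCapacity s E 0 q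
  have hle := dyadicCapacity_le_tsum (s := s) (E := E)
  have hmass := tsum_mul_treeMass hle (tsum_dyadicCapacity_ne_top hs)
  have htotal : ∑' q, w n q = Z := by
    simpa [w, Z, treeMass] using hmass (fun _ ↦ 1) 0 n
  have hrange (q : Fin d → ℤ) (hq : w n q ≠ 0) : q ∈ range fun x : E ↦ dyadicIndex n x.1 := by
    have hcap : dyadicCapacity s E n q ≠ 0 := fun h0 ↦
      hq (nonpos_iff_eq_zero.1 ((treeMass_le hle n q).trans_eq h0))
    simpa [image_eq_range] using mem_image_of_dyadicCapacity_ne_zero hcap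
  obtain ⟨P, hP⟩ := exists_probabilityMeasure_preimage_eq_tsum
    ((measurable_dyadicIndex n).comp measurable_subtype_coe) hrange
    (htotal ▸ tsum_dyadicCapacity_ne_zero hcontent)
    (htotal ▸ tsum_dyadicCapacity_ne_top_of_isBounded hs hE 0)
  refine ⟨P, fun m hmn p ↦ ?_⟩
  obtain ⟨j, rfl⟩ := Nat.exists_eq_add_of_le hmn
  have hcell : (fun x : E ↦ dyadicIndex m x.1) ⁻¹' {p} =
      (fun x : E ↦ dyadicIndex (m + j) x.1) ⁻¹' {q | dyadicParent^[j] q = p} := by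
    ext x
    simp [iterate_dyadicParent_dyadicIndex]
  calc (P : Measure E) ((fun x : E ↦ dyadicIndex m x.1) ⁻¹' {p})
      = Z⁻¹ * ∑' q, {q | dyadicParent^[j] q = p}.indicator 1 q * w (m + j) q := by
        rw [hcell, ← htotal]
        exact hP _ .of_discrete
    _ = Z⁻¹ * w m p := by
        congr 1
        refine (hmass (({p} : Set _).indicator 1) m j).trans ?_
        simp [w, indicator_apply]
    _ ≤ _ := by
        gcongr
        exact (treeMass_le hle m p).trans (dyadicCapacity_le hs m p)

theorem exists_isFrostman_of_lt_dimH (hE : IsCompact E) (hs : 0 < s)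
    (h : ENNReal.ofReal s < dimH E) :
    ∃ μ : Measure (Pt d), IsProbabilityMeasure μ ∧ μ Eᶜ = 0 ∧ ∃ C > 0, IsFrostman μ C s := by
  have hcontent := hausdorffContent_ne_zero_of_lt_dimH hs h
  have : CompactSpace E := isCompact_iff_compactSpace.1 hE
  choose P hP using exists_probabilityMeasure_dyadic_le hs.le hE.isBounded hcontent
  set Z := ∑' q, dyadicCapacity s E 0 q
  have hZ : Z ≠ 0 := tsum_dyadicCapacity_ne_zero hcontent
  obtain ⟨Q, hQ⟩ := exists_probabilityMeasure_forall_isOpen_le P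
  have hval : Measurable (Subtype.val : E → Pt d) := measurable_subtype_coe
  have hprob : IsProbabilityMeasure ((Q : Measure E).map Subtype.val) :=
    Measure.isProbabilityMeasure_map hval.aemeasurable
  refine ⟨_, hprob, by simp [Measure.map_apply hval hE.measurableSet.compl],
    exists_isFrostman_of_dyadic hs.le (c := 3 ^ d * (Z⁻¹ * ENNReal.ofReal (√d) ^ s))
      (by finiteness) fun m y ↦ ?_⟩
  rw [Measure.map_apply hval measurableSet_ball]
  refine hQ _ (isOpen_ball.preimage continuous_subtype_val) _ ?_
  filter_upwards [Filter.eventually_ge_atTop m] with n hmn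
  rw [← Measure.map_apply hval measurableSet_ball]
  calc ((P n : Measure E).map Subtype.val) (ball y ((1 / 2) ^ m))
      ≤ ((P n : Measure E).map Subtype.val) (closedBall y ((1 / 2) ^ m)) :=
        measure_mono ball_subset_closedBall
    _ ≤ 3 ^ d * (Z⁻¹ * (ENNReal.ofReal (√d) ^ s * ENNReal.ofReal ((1 / 2) ^ m) ^ s)) := by
        refine measure_closedBall_le_of_dyadic (fun q ↦ ?_) y
        rw [Measure.map_apply hval (measurable_dyadicIndex m .of_discrete)]
        exact hP n m hmn q
    _ = _ := by ring

end FrostmanConstruction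

/-! ### Preimages of null sets under submersions -/

section Submersion

variable {X Y : Type*} [NormedAddCommGroup X] [NormedSpace ℝ X] [FiniteDimensional ℝ X]
  [MeasurableSpace X] [BorelSpace X] [NormedAddCommGroup Y] [NormedSpace ℝ Y]
  [FiniteDimensional ℝ Y] [MeasurableSpace Y] [BorelSpace Y]
  (μ : Measure X) [μ.IsAddHaarMeasure] (ν : Measure Y) [ν.IsAddHaarMeasure]

lemma exists_mem_nhds_addHaar_inter_preimage_eq_zero_of_equiv {f : X → X} {f' : X ≃L[ℝ] X} {w : X}
    (hf : ContDiffAt ℝ 1 f w) (hf' : HasFDerivAt f (f' : X →L[ℝ] X) w) :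
    ∃ N ∈ 𝓝 w, ∀ T, μ T = 0 → μ (N ∩ f ⁻¹' T) = 0 := by
  have hstrict := hf.hasStrictFDerivAt' hf' one_ne_zero
  let g := hf.localInverse hf' one_ne_zero
  have hg : ∀ᶠ y in 𝓝 (f w), DifferentiableAt ℝ g y :=
    ((hf.to_localInverse hf' one_ne_zero).eventually (by norm_num)).mono fun y hy ↦
      hy.differentiableAt one_ne_zero
  refine ⟨_, Filter.inter_mem hstrict.eventually_left_inverse (hf.continuousAt.eventually hg),
    fun T hT ↦ ?_⟩
  have hgT : μ (g '' ({y | DifferentiableAt ℝ g y} ∩ T)) = 0 :=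
    addHaar_image_eq_zero_of_differentiableOn_of_addHaar_eq_zero μ
      (fun y hy ↦ hy.1.differentiableWithinAt) (measure_mono_null inter_subset_right hT)
  refine measure_mono_null ?_ hgT
  rintro x ⟨⟨hleft, hdiff⟩, hx⟩
  exact ⟨f x, ⟨hdiff, hx⟩, hleft⟩

lemma exists_mem_nhds_addHaar_inter_preimage_eq_zero {f : X → Y} {w : X}
    (hf : ContDiffAt ℝ 1 f w) (hsurj : (fderiv ℝ f w : X →ₗ[ℝ] Y).range = ⊤) :
    ∃ N ∈ 𝓝 w, ∀ T, ν T = 0 → μ (N ∩ f ⁻¹' T) = 0 := by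
  set f' := fderiv ℝ f w
  obtain ⟨π, hπ⟩ := f'.ker_closedComplemented_of_finiteDimensional_range
  -- Completing `f` by the projection to the kernel of its derivative reduces to a local
  -- diffeomorphism between spaces of the same dimension.
  let L : X ≃L[ℝ] Y × f'.ker := f'.equivProdOfSurjectiveOfIsCompl π hsurj
    (LinearMap.range_eq_of_proj hπ) (LinearMap.isCompl_of_proj hπ)
  let F : X → X := fun x ↦ L.symm (f x, π x)
  have hF : ContDiffAt ℝ 1 F w :=
    L.symm.contDiff.contDiffAt.comp w (hf.prodMk π.contDiff.contDiffAt)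
  have hF' : HasFDerivAt F (ContinuousLinearEquiv.refl ℝ X : X →L[ℝ] X) w := by
    refine (L.symm.hasFDerivAt.comp w
      ((hf.differentiableAt one_ne_zero).hasFDerivAt.prodMk π.hasFDerivAt)).congr_fderiv ?_
    ext x
    exact L.symm_apply_apply x
  obtain ⟨N, hN, hnull⟩ := exists_mem_nhds_addHaar_inter_preimage_eq_zero_of_equiv μ hF hF'
  refine ⟨N, hN, fun T hT ↦ ?_⟩
  have hL : Measure.QuasiMeasurePreserving L μ (ν.prod (Measure.addHaar : Measure f'.ker)) :=
    have := L.isAddHaarMeasure_map μ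
    ⟨L.continuous.measurable, Measure.absolutelyContinuous_isAddHaarMeasure _ _⟩
  have hcyl : μ (L ⁻¹' (T ×ˢ univ)) = 0 :=
    hL.preimage_null (by rw [Measure.prod_prod, hT, zero_mul])
  refine measure_mono_null (inter_subset_inter_right N fun x hx ↦ ?_) (hnull _ hcyl)
  simpa [F] using hx

lemma addHaar_inter_preimage_eq_zero_of_submersion {f : X → Y} {U : Set X}
    (hf : ∀ x ∈ U, ContDiffAt ℝ 1 f x) (hsurj : ∀ x ∈ U, (fderiv ℝ f x : X →ₗ[ℝ] Y).range = ⊤)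
    {T : Set Y} (hT : ν T = 0) : μ (U ∩ f ⁻¹' T) = 0 := by
  refine measure_null_of_locally_null _ fun w hw ↦ ?_
  obtain ⟨N, hN, hnull⟩ :=
    exists_mem_nhds_addHaar_inter_preimage_eq_zero μ ν (hf w hw.1) (hsurj w hw.1)
  exact ⟨N ∩ f ⁻¹' T, Filter.inter_mem (mem_nhdsWithin_of_mem_nhds hN)
    (Filter.mem_of_superset self_mem_nhdsWithin inter_subset_right), hnull T hT⟩

end Submersion

section Distances

variable {d k : ℕ}

lemma exists_forall_inner_eq {V ι : Type*} [NormedAddCommGroup V] [InnerProductSpace ℝ V]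
    [FiniteDimensional ℝ V] {u : ι → V} (hu : LinearIndependent ℝ u) (c : ι → ℝ) :
    ∃ y, ∀ i, inner ℝ (u i) y = c i := by
  obtain ⟨φ, hφ⟩ := LinearMap.exists_extend ((Module.Basis.span hu).constr ℝ c)
  refine ⟨(InnerProductSpace.toDual ℝ V).symm (LinearMap.toContinuousLinearMap φ), fun i ↦ ?_⟩
  rw [real_inner_comm, InnerProductSpace.toDual_symm_apply]
  have hi := LinearMap.congr_fun hφ (Module.Basis.span hu i)
  rwa [LinearMap.comp_apply, Module.Basis.constr_basis, Submodule.subtype_apply,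
    Module.Basis.span_apply] at hi

lemma exists_symmetric_extension {ι : Type*} [LinearOrder ι] (t : {p : ι × ι // p.1 < p.2} → ℝ) :
    ∃ D : ι → ι → ℝ, (∀ i j, D i j = D j i) ∧ (∀ i, D i i = 0) ∧ ∀ p, D p.1.1 p.1.2 = t p := by
  refine ⟨fun i j ↦ if h : i < j then t ⟨(i, j), h⟩ else if h : j < i then t ⟨(j, i), h⟩ else 0,
    fun i j ↦ ?_, fun i ↦ by simp, fun p ↦ dif_pos p.2⟩
  rcases lt_trichotomy i j with h | rfl | h
  · simp [h, h.not_gt]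
  · rfl
  · simp [h, h.not_gt]

/-- The vector of squared pairwise distances, a polynomial version of `simplexMap`. -/
def sqDistMap (d k : ℕ) (x : Fin (k + 1) → Pt d) : PairIdx k → ℝ :=
  fun p ↦ ‖x p.1.1 - x p.1.2‖ ^ 2

lemma contDiff_sqDistMap : ContDiff ℝ 1 (sqDistMap d k) :=
  contDiff_pi.2 fun p ↦
    ((contDiff_apply ℝ (Pt d) p.1.1).sub (contDiff_apply ℝ (Pt d) p.1.2)).norm_sq ℝ

lemma fderiv_sqDistMap_apply (w v : Fin (k + 1) → Pt d) (p : PairIdx k) :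
    fderiv ℝ (sqDistMap d k) w v p = 2 * inner ℝ (w p.1.1 - w p.1.2) (v p.1.1 - v p.1.2) := by
  have hp := hasFDerivAt_pi'.1 (contDiff_sqDistMap.differentiable one_ne_zero w).hasFDerivAt p
  have hsub := (hasFDerivAt_apply (𝕜 := ℝ) (F' := fun _ ↦ Pt d) p.1.1 w).sub
    (hasFDerivAt_apply p.1.2 w)
  simpa [inner_sub_left, inner_sub_right] using DFunLike.congr_fun (hp.unique hsub.norm_sq) v

lemma range_fderiv_sqDistMap {w : Fin (k + 1) → Pt d} (hw : Nondeg d k w) :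
    (fderiv ℝ (sqDistMap d k) w : (Fin (k + 1) → Pt d) →ₗ[ℝ] (PairIdx k → ℝ)).range = ⊤ := by
  refine LinearMap.range_eq_top.2 fun t ↦ ?_
  obtain ⟨D, hsymm, hdiag, hD⟩ := exists_symmetric_extension t
  -- Polarization: `S i j` plays the role of `⟪w i - w 0, v j - v 0⟫`.
  let S : Fin (k + 1) → Fin (k + 1) → ℝ := fun i j ↦ (D 0 i + D 0 j - D i j) / 4
  choose v hv using fun j ↦ exists_forall_inner_eq hw fun i ↦ S i.succ j
  have hvS (i j : Fin (k + 1)) : inner ℝ (w i - w 0) (v j) = S i j := by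
    cases i using Fin.cases with
    | zero => simp [S, hdiag]
    | succ i => exact hv j i
  refine ⟨v, funext fun p ↦ (fderiv_sqDistMap_apply w v p).trans ?_⟩
  rw [← sub_sub_sub_cancel_right (w p.1.1) (w p.1.2) (w 0), inner_sub_left, inner_sub_right,
    inner_sub_right, hvS, hvS, hvS, hvS, ← hD p]
  simp only [S, hdiag]
  rw [hsymm p.1.2 p.1.1]
  ring

lemma volume_nondeg_simplexMap_mem_eq_zero {T : Set (PairIdx k → ℝ)} (hT : volume T = 0) :
    volume {w : Fin (k + 1) → Pt d | Nondeg d k w ∧ simplexMap d k w ∈ T} = 0 := by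
  let square : (PairIdx k → ℝ) → PairIdx k → ℝ := fun t p ↦ t p ^ 2
  have hsquare : Differentiable ℝ square :=
    differentiable_pi.2 fun p ↦ (differentiable_apply p).pow 2
  have hT2 : volume (square '' T) = 0 :=
    addHaar_image_eq_zero_of_differentiableOn_of_addHaar_eq_zero volume hsquare.differentiableOn hT
  refine measure_mono_null ?_
    (addHaar_inter_preimage_eq_zero_of_submersion volume volume (U := {w | Nondeg d k w})
      (fun w _ ↦ contDiff_sqDistMap.contDiffAt) (fun w hw ↦ range_fderiv_sqDistMap hw) hT2)
  rintro w ⟨hw, hwT⟩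
  refine ⟨hw, simplexMap d k w, hwT, ?_⟩
  ext p
  simp [square, simplexMap, sqDistMap, dist_eq_norm]

end Distances

/-! ### Averages over the orthogonal group -/

section OrthogonalGroup

variable {V : Type*} [NormedAddCommGroup V] [InnerProductSpace ℝ V] [FiniteDimensional ℝ V]

/-- The orthogonal group of `V`, as the group of unitary elements of the star algebra of operators,
from which it inherits its topology. -/
abbrev OrthogonalGroup (V : Type*) [NormedAddCommGroup V] [InnerProductSpace ℝ V]
    [FiniteDimensional ℝ V] : Type _ := unitary (V →L[ℝ] V)

/-- The isometry of `V` given by an element of the orthogonal group. -/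
abbrev rot (g : OrthogonalGroup V) : V ≃ₗᵢ[ℝ] V := Unitary.linearIsometryEquiv g

lemma rot_inv (g : OrthogonalGroup V) : rot g⁻¹ = (rot g).symm :=
  map_inv Unitary.linearIsometryEquiv g

lemma continuous_rot_apply : Continuous fun p : OrthogonalGroup V × V ↦ rot p.1 p.2 :=
  (continuous_subtype_val.comp continuous_fst).clm_apply continuous_snd

lemma continuous_rot_symm_apply :
    Continuous fun p : OrthogonalGroup V × V ↦ (rot p.1).symm p.2 := by
  simp_rw [← rot_inv]
  exact continuous_rot_apply.comp (continuous_fst.inv.prodMk continuous_snd)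

lemma exists_rot_apply_eq {v w : V} (h : ‖v‖ = ‖w‖) : ∃ g : OrthogonalGroup V, rot g v = w := by
  refine ⟨Unitary.linearIsometryEquiv.symm (Submodule.reflection (Submodule.span ℝ {v - w})ᗮ), ?_⟩
  rw [rot, MulEquiv.apply_symm_apply, Submodule.reflection_sub h]

instance compactSpace_orthogonalGroup : CompactSpace (OrthogonalGroup V) := by
  have : ProperSpace (V →L[ℝ] V) := FiniteDimensional.proper ℝ _
  refine isCompact_iff_compactSpace.1 (Metric.isCompact_of_isClosed_isBounded isClosed_unitary
    (isBounded_iff_forall_norm_le.2 ⟨1, fun A hA ↦ ?_⟩))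
  exact A.opNorm_le_bound zero_le_one fun x ↦ by
    rw [one_mul, A.norm_map_of_mem_unitary hA]

/-- The Haar probability measure on the orthogonal group of `V`. -/
def rotMeasure (V : Type*) [NormedAddCommGroup V] [InnerProductSpace ℝ V]
    [FiniteDimensional ℝ V] : Measure (OrthogonalGroup V) :=
  Measure.haarMeasure ⊤

instance isProbabilityMeasure_rotMeasure : IsProbabilityMeasure (rotMeasure V) :=
  ⟨Measure.haarMeasure_self (K₀ := ⊤)⟩

instance isMulLeftInvariant_rotMeasure : (rotMeasure V).IsMulLeftInvariant :=
  Measure.isMulLeftInvariant_haarMeasure ⊤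

/-- The average of `H` over the orbit of `x` under the orthogonal group. -/
def radialAverage (H : V → ℝ≥0∞) (x : V) : ℝ≥0∞ :=
  ∫⁻ g, H ((rot g).symm x) ∂rotMeasure V

lemma radialAverage_eq_of_norm_eq (H : V → ℝ≥0∞) {v w : V} (h : ‖v‖ = ‖w‖) :
    radialAverage H v = radialAverage H w := by
  obtain ⟨k, rfl⟩ := exists_rot_apply_eq h.symm
  rw [radialAverage, ← lintegral_mul_left_eq_self _ k]
  refine lintegral_congr fun g ↦ ?_
  rw [← rot_inv, ← rot_inv, mul_inv_rev, rot, map_mul]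
  simp [rot]

variable [MeasurableSpace V] [BorelSpace V] {H : V → ℝ≥0∞} (hH : Measurable H)
include hH

lemma measurable_rot_symm_comp :
    Measurable (Function.uncurry fun (x : V) (g : OrthogonalGroup V) ↦ H ((rot g).symm x)) :=
  hH.comp (continuous_rot_symm_apply.comp continuous_swap).measurable

lemma measurable_radialAverage : Measurable (radialAverage H) :=
  (measurable_rot_symm_comp hH).lintegral_prod_right'

lemma lintegral_radialAverage : ∫⁻ x, radialAverage H x = ∫⁻ x, H x := by
  unfold radialAverage
  rw [lintegral_lintegral_swap (measurable_rot_symm_comp hH).aemeasurable]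
  have hrot (g : OrthogonalGroup V) : ∫⁻ x, H ((rot g).symm x) = ∫⁻ x, H x :=
    (rot g).symm.measurePreserving.lintegral_comp hH
  simp only [hrot, lintegral_const, measure_univ, mul_one]

lemma radialAverage_mul_norm (a : ℝ → ℝ≥0∞) (x : V) :
    radialAverage (fun y ↦ a ‖y‖ * H y) x = a ‖x‖ * radialAverage H x := by
  simp only [radialAverage, LinearIsometryEquiv.norm_map]
  exact lintegral_const_mul _ ((measurable_rot_symm_comp hH).of_uncurry_left)

end OrthogonalGroup

section Polar

variable {V : Type*} [NormedAddCommGroup V] [NormedSpace ℝ V] [FiniteDimensional ℝ V]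
  [Nontrivial V] [MeasurableSpace V] [BorelSpace V] (μ : Measure V) [μ.IsAddHaarMeasure]

lemma lintegral_norm_eq_toSphere_mul {f : ℝ → ℝ≥0∞} (hf : Measurable f) :
    ∫⁻ x, f ‖x‖ ∂μ = μ.toSphere univ *
      ∫⁻ r in Ioi (0 : ℝ), ENNReal.ofReal (r ^ (Module.finrank ℝ V - 1)) * f r := by
  set n := Module.finrank ℝ V - 1
  have hm : Measurable fun p : sphere (0 : V) 1 × Ioi (0 : ℝ) ↦ f p.2 :=
    hf.comp (measurable_subtype_coe.comp measurable_snd)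
  calc ∫⁻ x, f ‖x‖ ∂μ = ∫⁻ x in ({0}ᶜ : Set V), f ‖x‖ ∂μ := by rw [restrict_compl_singleton]
    _ = ∫⁻ x : ({0}ᶜ : Set V), f ‖x.1‖ ∂μ.comap (↑) :=
        (lintegral_subtype_comap (measurableSet_singleton _).compl fun x ↦ f ‖x‖).symm
    _ = ∫⁻ p : sphere (0 : V) 1 × Ioi (0 : ℝ), f p.2 ∂μ.toSphere.prod (.volumeIoiPow n) := by
        rw [← μ.measurePreserving_homeomorphUnitSphereProd.lintegral_comp hm]
        simp
    _ = μ.toSphere univ * ∫⁻ r : Ioi (0 : ℝ), f r ∂.volumeIoiPow n := by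
        rw [lintegral_prod _ hm.aemeasurable]
        simp [mul_comm]
    _ = _ := by
        have hf' : Measurable fun r : Ioi (0 : ℝ) ↦ f r := hf.comp measurable_subtype_coe
        rw [Measure.volumeIoiPow, lintegral_withDensity_eq_lintegral_mul _ (by fun_prop) hf',
          ← lintegral_subtype_comap measurableSet_Ioi]
        rfl

end Polar

/-! ### Fourier transforms of measures -/

section Fourier

open Module (finrank)
open Complex (I conj_ofReal)
open scoped Real RealInnerProductSpace FourierTransform ComplexConjugate

variable {V : Type*} [NormedAddCommGroup V] {R : ℝ}

/-- The Gaussian cutoff to the frequencies `‖ξ‖ ≲ R`, with Fourier transform `gaussianKernel R`. -/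
def gaussianCutoff (R : ℝ) (ξ : V) : ℝ := Real.exp (-(π / R ^ 2) * ‖ξ‖ ^ 2)

lemma continuous_gaussianCutoff (R : ℝ) : Continuous (gaussianCutoff R : V → ℝ) := by
  unfold gaussianCutoff; fun_prop

lemma gaussianCutoff_nonneg (R : ℝ) (ξ : V) : 0 ≤ gaussianCutoff R ξ := (Real.exp_pos _).le

lemma tendsto_gaussianCutoff (ξ : V) :
    Filter.Tendsto (fun n : ℕ ↦ gaussianCutoff (n + 1 : ℝ) ξ) Filter.atTop (𝓝 1) := by
  have hsq : Filter.Tendsto (fun n : ℕ ↦ ((n : ℝ) + 1) ^ 2) Filter.atTop Filter.atTop :=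
    (Filter.tendsto_pow_atTop two_ne_zero).comp
      (Filter.tendsto_atTop_add_const_right _ _ tendsto_natCast_atTop_atTop)
  simpa only [gaussianCutoff, neg_zero, zero_mul, Real.exp_zero] using
    (((hsq.const_div_atTop π).neg.mul_const (‖ξ‖ ^ 2)).rexp)

variable [InnerProductSpace ℝ V]

/-- The Gaussian of width `R⁻¹` and integral `1` on `V`. -/
def gaussianKernel (R : ℝ) (v : V) : ℝ := R ^ finrank ℝ V * Real.exp (-(π * R ^ 2) * ‖v‖ ^ 2)

lemma continuous_gaussianKernel (R : ℝ) : Continuous (gaussianKernel R : V → ℝ) := by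
  unfold gaussianKernel; fun_prop

lemma gaussianKernel_nonneg (hR : 0 < R) (v : V) : 0 ≤ gaussianKernel R v := by
  unfold gaussianKernel; positivity

lemma gaussianKernel_sub_comm (R : ℝ) (v w : V) :
    gaussianKernel R (v - w) = gaussianKernel R (w - v) := by
  simp only [gaussianKernel, norm_sub_rev]

variable [MeasurableSpace V] [BorelSpace V]

/-- The Fourier transform of the complex measure `f ρ`. -/
abbrev measureFourier (ρ : Measure V) (f : V → ℂ) : V → ℂ :=
  VectorFourier.fourierIntegral 𝐞 ρ (innerₗ V) f

lemma continuous_measureFourier {ρ : Measure V} {f : V → ℂ} (hf : Integrable f ρ) :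
    Continuous (measureFourier ρ f) :=
  VectorFourier.fourierIntegral_continuous Real.continuous_fourierChar continuous_inner hf

variable [FiniteDimensional ℝ V]

lemma measurable_gaussianKernel_sub (R : ℝ) :
    Measurable fun p : V × V ↦ ENNReal.ofReal (gaussianKernel R (p.1 - p.2)) :=
  ((continuous_gaussianKernel R).comp (continuous_fst.sub continuous_snd)).measurable.ennreal_ofReal

lemma integrable_gaussianCutoff (hR : 0 < R) : Integrable (gaussianCutoff R : V → ℝ) := by
  refine .of_integral_ne_zero ?_
  simp only [gaussianCutoff]
  rw [GaussianFourier.integral_rexp_neg_mul_sq_norm (by positivity)]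
  positivity

lemma integral_gaussianKernel (hR : 0 < R) : ∫ v : V, gaussianKernel R v = 1 := by
  simp only [gaussianKernel]
  rw [integral_const_mul, GaussianFourier.integral_rexp_neg_mul_sq_norm (by positivity),
    div_mul_cancel_left₀ Real.pi_ne_zero, Real.inv_rpow (by positivity),
    ← Real.rpow_natCast_mul hR.le]
  rw [show ((2 : ℕ) : ℝ) * (finrank ℝ V / 2 : ℝ) = (finrank ℝ V : ℕ) by push_cast; ring,
    Real.rpow_natCast, mul_inv_cancel₀ (by positivity)]

lemma lintegral_gaussianKernel (hR : 0 < R) :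
    ∫⁻ v : V, ENNReal.ofReal (gaussianKernel R v) = 1 := by
  have hint : Integrable (gaussianKernel R : V → ℝ) :=
    .of_integral_ne_zero (by rw [integral_gaussianKernel hR]; exact one_ne_zero)
  rw [← ofReal_integral_eq_lintegral_ofReal hint (ae_of_all _ (gaussianKernel_nonneg hR)),
    integral_gaussianKernel hR, ENNReal.ofReal_one]

lemma fourier_gaussianCutoff (hR : 0 < R) (w : V) :
    𝓕 (fun ξ : V ↦ (gaussianCutoff R ξ : ℂ)) w = gaussianKernel R w := by
  have hR' : (R : ℂ) ≠ 0 := by exact_mod_cast hR.ne'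
  have hb : 0 < (((π / R ^ 2 : ℝ) : ℂ)).re := by rw [Complex.ofReal_re]; positivity
  have hcutoff (ξ : V) : (gaussianCutoff R ξ : ℂ) =
      Complex.exp (-((π / R ^ 2 : ℝ) : ℂ) * ‖ξ‖ ^ 2) := by
    rw [gaussianCutoff]; push_cast; rfl
  have hconst : ((π : ℂ) / ((π / R ^ 2 : ℝ) : ℂ)) ^ (finrank ℝ V / 2 : ℂ) = R ^ finrank ℝ V := by
    have hexp : (finrank ℝ V / 2 : ℂ) = ((finrank ℝ V / 2 : ℝ) : ℂ) := by push_cast; rfl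
    rw [← Complex.ofReal_div, div_div_cancel₀ Real.pi_ne_zero, hexp,
      ← Complex.ofReal_cpow (by positivity), ← Real.rpow_natCast_mul hR.le, ← Complex.ofReal_pow,
      ← Real.rpow_natCast]
    congr 2
    push_cast
    ring
  simp_rw [hcutoff]
  rw [fourier_gaussian_innerProductSpace hb, hconst, gaussianKernel]
  push_cast
  congr 2
  field_simp

lemma integral_integral_fourierChar_mul_gaussianCutoff {X : Type*} [MeasurableSpace X]
    {ρ : Measure X} [SFinite ρ] {T : X → V} (hT : Measurable T) {f : X → ℂ} (hf : Integrable f ρ)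
    (hR : 0 < R) :
    ∫ ξ, (∫ x, 𝐞 (-⟪T x, ξ⟫) * f x ∂ρ) * gaussianCutoff R ξ =
      ∫ x, f x * gaussianKernel R (T x) ∂ρ := by
  simp_rw [← integral_mul_const]
  rw [integral_integral_swap]
  · congr 1 with x
    rw [← fourier_gaussianCutoff hR, Real.fourier_eq, ← integral_const_mul]
    congr 1 with ξ
    rw [real_inner_comm, Circle.smul_def, smul_eq_mul]
    ring
  · have hprod : Integrable (fun q : V × X ↦ (gaussianCutoff R q.1 : ℂ) * f q.2)
        (volume.prod ρ) := (integrable_gaussianCutoff hR).ofReal.mul_prod hf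
    have hchar : Measurable fun q : V × X ↦ (𝐞 (-⟪T q.2, q.1⟫) : ℂ) :=
      (continuous_subtype_val.comp Real.continuous_fourierChar).measurable.comp
        ((hT.comp measurable_snd).inner measurable_fst).neg
    refine (hprod.bdd_mul (c := 1) hchar.aestronglyMeasurable
      (ae_of_all _ fun q ↦ (Circle.norm_coe _).le)).congr (ae_of_all _ fun q ↦ ?_)
    simp only [Function.uncurry]
    ring

section SFinite

variable {ρ : Measure V} [SFinite ρ] {f : V → ℂ}

lemma integral_normSq_measureFourier_mul_gaussianCutoff (hR : 0 < R) (hf : Integrable f ρ) :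
    ∫ ξ, measureFourier ρ f ξ * conj (measureFourier ρ f ξ) * gaussianCutoff R ξ =
      ∫ p, f p.1 * conj (f p.2) * gaussianKernel R (p.1 - p.2) ∂ρ.prod ρ := by
  have hfc : Integrable (fun x ↦ conj (f x)) ρ :=
    Complex.conjLIE.toContinuousLinearEquiv.integrable_comp_iff.2 hf
  have hexpand (ξ : V) : measureFourier ρ f ξ * conj (measureFourier ρ f ξ) =
      ∫ p, 𝐞 (-⟪p.1 - p.2, ξ⟫) * (f p.1 * conj (f p.2)) ∂ρ.prod ρ := by
    rw [measureFourier, VectorFourier.fourierIntegral, ← integral_conj, ← integral_prod_mul]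
    congr 1 with p
    rw [inner_sub_left, neg_sub', sub_eq_add_neg, AddChar.map_add_eq_mul]
    simp only [Circle.smul_def, Circle.coe_mul, AddChar.map_neg_eq_inv, Circle.coe_inv_eq_conj,
      innerₗ_apply_apply, smul_eq_mul, map_mul]
    ring
  simp_rw [hexpand]
  exact integral_integral_fourierChar_mul_gaussianCutoff (measurable_fst.sub measurable_snd)
    (hf.mul_prod hfc) hR

lemma lintegral_enorm_measureFourier_sq_mul_gaussianCutoff_le (hR : 0 < R)
    (hf : Integrable f ρ) :
    ∫⁻ ξ, ‖measureFourier ρ f ξ‖ₑ ^ 2 * ENNReal.ofReal (gaussianCutoff R ξ) ≤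
      ∫⁻ p, ‖f p.1‖ₑ * ‖f p.2‖ₑ * ENNReal.ofReal (gaussianKernel R (p.1 - p.2)) ∂ρ.prod ρ := by
  have hnonneg (ξ : V) : 0 ≤ ‖measureFourier ρ f ξ‖ ^ 2 * gaussianCutoff R ξ :=
    mul_nonneg (sq_nonneg _) (gaussianCutoff_nonneg R ξ)
  have hint : Integrable fun ξ ↦ ‖measureFourier ρ f ξ‖ ^ 2 * gaussianCutoff R ξ := by
    refine (integrable_gaussianCutoff hR).bdd_mul (c := (∫ x, ‖f x‖ ∂ρ) ^ 2)
      ((continuous_measureFourier hf).norm.pow 2).aestronglyMeasurable (ae_of_all _ fun ξ ↦ ?_)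
    rw [Real.norm_of_nonneg (by positivity)]
    gcongr
    exact VectorFourier.norm_fourierIntegral_le_integral_norm ..
  calc ∫⁻ ξ, ‖measureFourier ρ f ξ‖ₑ ^ 2 * ENNReal.ofReal (gaussianCutoff R ξ)
      = ∫⁻ ξ, ENNReal.ofReal (‖measureFourier ρ f ξ‖ ^ 2 * gaussianCutoff R ξ) := by
        refine lintegral_congr fun ξ ↦ ?_
        rw [ENNReal.ofReal_mul (by positivity), ENNReal.ofReal_pow (norm_nonneg _), ofReal_norm]
    _ = ‖((∫ ξ, ‖measureFourier ρ f ξ‖ ^ 2 * gaussianCutoff R ξ : ℝ) : ℂ)‖ₑ := by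
        rw [← ofReal_integral_eq_lintegral_ofReal hint (ae_of_all _ hnonneg), ← ofReal_norm,
          Complex.norm_of_nonneg (integral_nonneg hnonneg)]
    _ = ‖∫ p, f p.1 * conj (f p.2) * gaussianKernel R (p.1 - p.2) ∂ρ.prod ρ‖ₑ := by
        rw [← integral_normSq_measureFourier_mul_gaussianCutoff hR hf, ← integral_complex_ofReal]
        congr 2 with ξ
        rw [Complex.mul_conj, Complex.normSq_eq_norm_sq]
        push_cast
        rfl
    _ ≤ ∫⁻ p, ‖f p.1 * conj (f p.2) * gaussianKernel R (p.1 - p.2)‖ₑ ∂ρ.prod ρ :=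
        enorm_integral_le_lintegral_enorm _
    _ = _ := by
        refine lintegral_congr fun p ↦ ?_
        have hker := gaussianKernel_nonneg hR (p.1 - p.2)
        simp only [enorm_mul, RCLike.enorm_conj, ← ofReal_norm (gaussianKernel _ _ : ℂ),
          Complex.norm_of_nonneg hker]

lemma two_mul_le_sq_add_sq (a b : ℝ≥0∞) : 2 * (a * b) ≤ a ^ 2 + b ^ 2 := by
  rcases le_total a b with h | h <;> obtain ⟨c, rfl⟩ := exists_add_of_le h <;> ring_nf <;> simp

lemma lintegral_mul_mul_le_of_lintegral_kernel_le {X : Type*} [MeasurableSpace X] {μ : Measure X}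
    [SFinite μ] {K : X → X → ℝ≥0∞} (hK : Measurable (Function.uncurry K))
    (hsymm : ∀ x y, K x y = K y x) {A : ℝ≥0∞} (hA : ∀ x, ∫⁻ y, K x y ∂μ ≤ A) {g : X → ℝ≥0∞}
    (hg : AEMeasurable g μ) :
    ∫⁻ p, g p.1 * g p.2 * K p.1 p.2 ∂μ.prod μ ≤ A * ∫⁻ x, g x ^ 2 ∂μ := by
  have hfst : AEMeasurable (fun p : X × X ↦ g p.1 ^ 2 * K p.1 p.2) (μ.prod μ) :=
    (hg.comp_fst.pow_const 2).mul hK.aemeasurable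
  have hsnd : AEMeasurable (fun p : X × X ↦ g p.2 ^ 2 * K p.1 p.2) (μ.prod μ) :=
    (hg.comp_snd.pow_const 2).mul hK.aemeasurable
  have hbound : ∫⁻ x, ∫⁻ y, g x ^ 2 * K x y ∂μ ∂μ ≤ A * ∫⁻ x, g x ^ 2 ∂μ := by
    rw [← lintegral_const_mul'' _ (hg.pow_const 2)]
    refine lintegral_mono fun x ↦ ?_
    simp only
    rw [lintegral_const_mul _ hK.of_uncurry_left, mul_comm]
    gcongr
    exact hA x
  refine (ENNReal.mul_le_mul_iff_right two_ne_zero ENNReal.ofNat_ne_top).1 ?_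
  calc 2 * ∫⁻ p, g p.1 * g p.2 * K p.1 p.2 ∂μ.prod μ
      ≤ ∫⁻ p, (g p.1 ^ 2 * K p.1 p.2 + g p.2 ^ 2 * K p.1 p.2) ∂μ.prod μ := by
        rw [← lintegral_const_mul' _ _ ENNReal.ofNat_ne_top]
        refine lintegral_mono fun p ↦ ?_
        simp only
        rw [← add_mul, ← mul_assoc]
        gcongr
        exact two_mul_le_sq_add_sq _ _
    _ = ∫⁻ x, ∫⁻ y, g x ^ 2 * K x y ∂μ ∂μ + ∫⁻ x, ∫⁻ y, g x ^ 2 * K x y ∂μ ∂μ := by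
        rw [lintegral_add_left' hfst, lintegral_prod _ hfst, lintegral_prod_symm _ hsnd]
        simp_rw [fun x y ↦ hsymm y x]
    _ ≤ 2 * (A * ∫⁻ x, g x ^ 2 ∂μ) := by
        rw [two_mul]
        gcongr

lemma lintegral_enorm_measureFourier_sq_mul_gaussianCutoff_le_of_kernel (hR : 0 < R)
    {A : ℝ≥0∞} (hA : ∀ x, ∫⁻ y, ENNReal.ofReal (gaussianKernel R (x - y)) ∂ρ ≤ A)
    (hf : Integrable f ρ) :
    ∫⁻ ξ, ‖measureFourier ρ f ξ‖ₑ ^ 2 * ENNReal.ofReal (gaussianCutoff R ξ) ≤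
      A * ∫⁻ x, ‖f x‖ₑ ^ 2 ∂ρ :=
  (lintegral_enorm_measureFourier_sq_mul_gaussianCutoff_le hR hf).trans
    (lintegral_mul_mul_le_of_lintegral_kernel_le (measurable_gaussianKernel_sub R)
      (fun x y ↦ by rw [gaussianKernel_sub_comm]) hA hf.1.enorm)

end SFinite

lemma lintegral_enorm_measureFourier_volume_sq_le {f : V → ℂ} (hf : Integrable f) :
    ∫⁻ ξ, ‖measureFourier volume f ξ‖ₑ ^ 2 ≤ ∫⁻ x, ‖f x‖ₑ ^ 2 := by
  set g : ℕ → V → ℝ≥0∞ := fun n ξ ↦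
    ‖measureFourier volume f ξ‖ₑ ^ 2 * ENNReal.ofReal (gaussianCutoff (n + 1 : ℝ) ξ)
  have hmeas (n : ℕ) : Measurable (g n) :=
    ((continuous_measureFourier hf).enorm.measurable.pow_const 2).mul
      (continuous_gaussianCutoff _).measurable.ennreal_ofReal
  have hlim (ξ : V) :
      Filter.Tendsto (g · ξ) Filter.atTop (𝓝 (‖measureFourier volume f ξ‖ₑ ^ 2)) := by
    simpa using ENNReal.Tendsto.const_mul (a := ‖measureFourier volume f ξ‖ₑ ^ 2)
      (ENNReal.tendsto_ofReal (tendsto_gaussianCutoff ξ)) (Or.inr (by simp))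
  have hbound (n : ℕ) : ∫⁻ ξ, g n ξ ≤ ∫⁻ x, ‖f x‖ₑ ^ 2 := by
    rw [← one_mul (∫⁻ x, ‖f x‖ₑ ^ 2)]
    refine lintegral_enorm_measureFourier_sq_mul_gaussianCutoff_le_of_kernel (by positivity)
      (fun x ↦ ?_) hf
    rw [lintegral_sub_left_eq_self (fun v ↦ ENNReal.ofReal (gaussianKernel (n + 1 : ℝ) v)) x,
      lintegral_gaussianKernel (by positivity)]
  calc ∫⁻ ξ, ‖measureFourier volume f ξ‖ₑ ^ 2 = ∫⁻ ξ, Filter.liminf (g · ξ) Filter.atTop :=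
        lintegral_congr fun ξ ↦ (hlim ξ).liminf_eq.symm
    _ ≤ Filter.liminf (fun n ↦ ∫⁻ ξ, g n ξ) Filter.atTop := lintegral_liminf_le hmeas
    _ ≤ ∫⁻ x, ‖f x‖ₑ ^ 2 :=
        Filter.liminf_le_of_frequently_le' (Filter.Frequently.of_forall hbound)

end Fourier

section Energy

open Module (finrank)
open scoped Real

lemma summable_add_one_rpow_mul_exp_neg (s : ℝ) :
    Summable fun n : ℕ ↦ ((n : ℝ) + 1) ^ s * Real.exp (-n) := by
  have hshift := (summable_nat_add_iff 1).2
    (Real.summable_pow_mul_exp_neg_nat_mul ⌈s⌉₊ one_pos)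
  refine .of_nonneg_of_le (fun n ↦ by positivity) (fun n ↦ ?_) (hshift.mul_left (Real.exp 1))
  have hexp : Real.exp (-(n : ℝ)) = Real.exp 1 * Real.exp (-1 * ((n + 1 : ℕ) : ℝ)) := by
    rw [← Real.exp_add]
    push_cast
    ring_nf
  have hpow : ((n : ℝ) + 1) ^ s ≤ ((n + 1 : ℕ) : ℝ) ^ ⌈s⌉₊ := by
    rw [← Real.rpow_natCast, Nat.cast_add_one]
    exact Real.rpow_le_rpow_of_exponent_le (by linarith [n.cast_nonneg (α := ℝ)]) (Nat.le_ceil s)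
  calc ((n : ℝ) + 1) ^ s * Real.exp (-n)
      ≤ ((n + 1 : ℕ) : ℝ) ^ ⌈s⌉₊ * (Real.exp 1 * Real.exp (-1 * ((n + 1 : ℕ) : ℝ))) := by
        rw [hexp]
        gcongr
    _ = _ := by ring

variable {V : Type*} [NormedAddCommGroup V] {R : ℝ}

lemma one_le_exp_pi_mul_gaussianCutoff (hR : 0 < R) {ξ : V} (hξ : ξ ∈ closedBall 0 R) :
    1 ≤ Real.exp π * gaussianCutoff R ξ := by
  rw [mem_closedBall_zero_iff] at hξ
  rw [gaussianCutoff, ← Real.exp_add, Real.one_le_exp_iff]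
  have hsq : π / R ^ 2 * ‖ξ‖ ^ 2 ≤ π / R ^ 2 * R ^ 2 := by gcongr
  rw [div_mul_cancel₀ _ (by positivity)] at hsq
  linarith

variable [InnerProductSpace ℝ V]

-- The kernel is summed over the shells `n ≤ R ‖x - y‖ < n + 1`.
lemma gaussianKernel_sub_le_tsum (hR : 0 < R) (x y : V) :
    ENNReal.ofReal (gaussianKernel R (x - y)) ≤
      ∑' n : ℕ, (closedBall x ((n + 1) / R)).indicator
        (fun _ ↦ ENNReal.ofReal (R ^ finrank ℝ V * Real.exp (-n))) y := by
  set t := R * ‖x - y‖ with ht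
  have hy : y ∈ closedBall x ((⌊t⌋₊ + 1) / R) := by
    rw [mem_closedBall, dist_comm, dist_eq_norm, le_div_iff₀ hR, mul_comm]
    exact (Nat.lt_floor_add_one t).le
  have hfloor : (⌊t⌋₊ : ℝ) ≤ π * R ^ 2 * ‖x - y‖ ^ 2 :=
    calc (⌊t⌋₊ : ℝ) ≤ (⌊t⌋₊ : ℝ) ^ 2 := by exact_mod_cast Nat.le_self_pow two_ne_zero _
      _ ≤ t ^ 2 := by gcongr; exact Nat.floor_le (by positivity)
      _ ≤ π * t ^ 2 := le_mul_of_one_le_left (sq_nonneg t) (by linarith [Real.pi_gt_three])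
      _ = _ := by rw [ht]; ring
  refine le_trans ?_ (ENNReal.le_tsum ⌊t⌋₊)
  rw [indicator_of_mem hy, gaussianKernel, neg_mul]
  gcongr

variable [MeasurableSpace V] [BorelSpace V] {μ : Measure V} {C s : ℝ}

lemma IsFrostman.lintegral_gaussianKernel_sub_le (h : IsFrostman μ C s) (hC : 0 ≤ C) (hR : 0 < R)
    (x : V) :
    ∫⁻ y, ENNReal.ofReal (gaussianKernel R (x - y)) ∂μ ≤
      ENNReal.ofReal
        (C * (∑' n : ℕ, ((n : ℝ) + 1) ^ s * Real.exp (-n)) * R ^ (finrank ℝ V - s)) := by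
  calc ∫⁻ y, ENNReal.ofReal (gaussianKernel R (x - y)) ∂μ
      ≤ ∫⁻ y, ∑' n : ℕ, (closedBall x ((n + 1) / R)).indicator
          (fun _ ↦ ENNReal.ofReal (R ^ finrank ℝ V * Real.exp (-n))) y ∂μ :=
        lintegral_mono (gaussianKernel_sub_le_tsum hR x)
    _ = ∑' n : ℕ, ENNReal.ofReal (R ^ finrank ℝ V * Real.exp (-n)) *
          μ (closedBall x ((n + 1) / R)) := by
        rw [lintegral_tsum fun n ↦
          (measurable_const.indicator measurableSet_closedBall).aemeasurable]
        simp only [lintegral_indicator_const measurableSet_closedBall]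
    _ ≤ ∑' n : ℕ, ENNReal.ofReal (C * R ^ (finrank ℝ V - s) *
          (((n : ℝ) + 1) ^ s * Real.exp (-n))) := by
        refine ENNReal.tsum_le_tsum fun n ↦ ?_
        calc _ ≤ ENNReal.ofReal (R ^ finrank ℝ V * Real.exp (-n)) *
              ENNReal.ofReal (C * ((n + 1) / R) ^ s) := by
              gcongr
              exact h x _ (by positivity)
          _ = _ := by
            rw [← ENNReal.ofReal_mul (by positivity), Real.div_rpow (by positivity) hR.le,
              Real.rpow_sub hR, Real.rpow_natCast]
            ring_nf
    _ = _ := by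
        rw [← ENNReal.ofReal_tsum_of_nonneg (fun n ↦ by positivity)
          ((summable_add_one_rpow_mul_exp_neg s).mul_left _), tsum_mul_left, mul_right_comm]

variable [FiniteDimensional ℝ V]

lemma IsFrostman.exists_setLIntegral_enorm_measureFourier_sq_le [SFinite μ]
    (h : IsFrostman μ C s) (hC : 0 ≤ C) :
    ∃ C' ≥ 0, ∀ f : V → ℂ, Integrable f μ → ∀ R > 0,
      ∫⁻ ξ in closedBall 0 R, ‖measureFourier μ f ξ‖ₑ ^ 2 ≤
        ENNReal.ofReal (C' * R ^ (finrank ℝ V - s)) * ∫⁻ x, ‖f x‖ₑ ^ 2 ∂μ := by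
  refine ⟨Real.exp π * (C * ∑' n : ℕ, ((n : ℝ) + 1) ^ s * Real.exp (-n)), ?_, fun f hf R hR ↦ ?_⟩
  · exact mul_nonneg (Real.exp_nonneg π) (mul_nonneg hC (tsum_nonneg fun n ↦ by positivity))
  calc ∫⁻ ξ in closedBall 0 R, ‖measureFourier μ f ξ‖ₑ ^ 2
      ≤ ∫⁻ ξ in closedBall 0 R, ENNReal.ofReal (Real.exp π) *
          (‖measureFourier μ f ξ‖ₑ ^ 2 * ENNReal.ofReal (gaussianCutoff R ξ)) := by
        refine setLIntegral_mono' measurableSet_closedBall fun ξ hξ ↦ ?_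
        rw [mul_left_comm, ← ENNReal.ofReal_mul (Real.exp_nonneg π)]
        refine le_mul_of_one_le_right' ?_
        rw [ENNReal.one_le_ofReal]
        exact one_le_exp_pi_mul_gaussianCutoff hR hξ
    _ ≤ ENNReal.ofReal (Real.exp π) *
          ∫⁻ ξ, ‖measureFourier μ f ξ‖ₑ ^ 2 * ENNReal.ofReal (gaussianCutoff R ξ) := by
        rw [← lintegral_const_mul' _ _ ENNReal.ofReal_ne_top]
        exact setLIntegral_le_lintegral _ _
    _ ≤ _ := by
        rw [mul_assoc (Real.exp π), ENNReal.ofReal_mul (Real.exp_nonneg π), mul_assoc]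
        gcongr 1
        exact lintegral_enorm_measureFourier_sq_mul_gaussianCutoff_le_of_kernel hR
          (h.lintegral_gaussianKernel_sub_le hC hR) hf

end Energy

/-! ### Decay of spherical averages -/

section SphericalAverage

open Module (finrank)
open Complex (I)
open scoped Real RealInnerProductSpace FourierTransform

section Sobolev

variable {X : Type*} [MeasurableSpace X] {μ : Measure X} {f g : X → ℝ≥0∞}

lemma lintegral_mul_sq_le (hf : AEMeasurable f μ) (hg : AEMeasurable g μ) :
    (∫⁻ x, f x * g x ∂μ) ^ 2 ≤ (∫⁻ x, f x ^ 2 ∂μ) * ∫⁻ x, g x ^ 2 ∂μ := by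
  have h := ENNReal.lintegral_mul_le_Lp_mul_Lq μ Real.HolderConjugate.two_two hf hg
  calc (∫⁻ x, f x * g x ∂μ) ^ 2
      ≤ ((∫⁻ x, f x ^ (2 : ℝ) ∂μ) ^ (1 / 2 : ℝ) * (∫⁻ x, g x ^ (2 : ℝ) ∂μ) ^ (1 / 2 : ℝ)) ^ 2 := by
        gcongr
        exact h
    _ = _ := by
        rw [mul_pow, ← ENNReal.rpow_natCast, ← ENNReal.rpow_mul, ← ENNReal.rpow_natCast,
          ← ENNReal.rpow_mul]
        norm_num

lemma lintegral_sq_le (hf : AEMeasurable f μ) :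
    (∫⁻ x, f x ∂μ) ^ 2 ≤ μ univ * ∫⁻ x, f x ^ 2 ∂μ := by
  simpa using lintegral_mul_sq_le aemeasurable_const hf (f := fun _ ↦ 1)

lemma add_sq_le_two_mul (a b : ℝ≥0∞) : (a + b) ^ 2 ≤ 2 * (a ^ 2 + b ^ 2) :=
  calc (a + b) ^ 2 = a ^ 2 + b ^ 2 + 2 * (a * b) := by ring
    _ ≤ a ^ 2 + b ^ 2 + (a ^ 2 + b ^ 2) := by gcongr; exact two_mul_le_sq_add_sq a b
    _ = _ := by ring

lemma enorm_sq_le_two_mul_setLIntegral_Icc {F : Type*} [NormedAddCommGroup F] [NormedSpace ℝ F]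
    [CompleteSpace F] {f f' : ℝ → F} (hf : ∀ t, HasDerivAt f (f' t) t) (hf' : Continuous f')
    (r : ℝ) :
    ‖f r‖ₑ ^ 2 ≤ 2 * ∫⁻ t in Icc r (r + 1), (‖f t‖ₑ ^ 2 + ‖f' t‖ₑ ^ 2) := by
  have hvol : volume (Icc r (r + 1)) = 1 := by simp
  set L := ∫⁻ t in Icc r (r + 1), ‖f' t‖ₑ
  have hpoint (t : ℝ) (ht : t ∈ Icc r (r + 1)) : ‖f r‖ₑ ≤ ‖f t‖ₑ + L := by
    have hftc := intervalIntegral.integral_eq_sub_of_hasDerivAt (a := r) (b := t)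
      (fun x _ ↦ hf x) (hf'.intervalIntegrable _ _)
    rw [show f r = f t - ∫ x in r..t, f' x by rw [hftc, sub_sub_cancel]]
    refine enorm_sub_le.trans ?_
    gcongr
    rw [intervalIntegral.integral_of_le ht.1]
    exact (enorm_integral_le_lintegral_enorm _).trans
      (lintegral_mono_set fun x hx ↦ ⟨hx.1.le, hx.2.trans ht.2⟩)
  have hL_sq : L ^ 2 ≤ ∫⁻ t in Icc r (r + 1), ‖f' t‖ₑ ^ 2 := by
    simpa only [Measure.restrict_apply_univ, hvol, one_mul] using
      lintegral_sq_le (μ := volume.restrict (Icc r (r + 1))) hf'.enorm.measurable.aemeasurable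
  calc ‖f r‖ₑ ^ 2 = ∫⁻ t in Icc r (r + 1), ‖f r‖ₑ ^ 2 := by
        rw [setLIntegral_const, hvol, mul_one]
    _ ≤ ∫⁻ t in Icc r (r + 1), 2 * (‖f t‖ₑ ^ 2 + L ^ 2) := by
        refine setLIntegral_mono' measurableSet_Icc fun t ht ↦ ?_
        refine le_trans ?_ (add_sq_le_two_mul _ _)
        gcongr
        exact hpoint t ht
    _ = 2 * ((∫⁻ t in Icc r (r + 1), ‖f t‖ₑ ^ 2) + L ^ 2) := by
        rw [lintegral_const_mul' _ _ ENNReal.ofNat_ne_top, lintegral_add_right _ measurable_const,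
          setLIntegral_const, hvol, mul_one]
    _ ≤ 2 * ((∫⁻ t in Icc r (r + 1), ‖f t‖ₑ ^ 2) + ∫⁻ t in Icc r (r + 1), ‖f' t‖ₑ ^ 2) := by
        gcongr
    _ = _ := by rw [lintegral_add_right _ (hf'.enorm.measurable.pow_const 2)]

end Sobolev

lemma enorm_sq_le_sum_orthonormalBasis {V ι : Type*} [NormedAddCommGroup V]
    [InnerProductSpace ℝ V] [Fintype ι] (b : OrthonormalBasis ι ℝ V) (L : V →L[ℝ] ℂ) :
    ‖L‖ₑ ^ 2 ≤ ∑ i, ‖L (b i)‖ₑ ^ 2 := by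
  have hreal : ‖L‖ ≤ √(∑ i, ‖L (b i)‖ ^ 2) := by
    refine L.opNorm_le_bound (Real.sqrt_nonneg _) fun x ↦ ?_
    calc ‖L x‖ = ‖∑ i, b.repr x i • L (b i)‖ := by
          conv_lhs => rw [← b.sum_repr x, map_sum]
          simp only [map_smul]
      _ ≤ ∑ i, ‖L (b i)‖ * ‖b.repr x i‖ :=
          (norm_sum_le _ _).trans_eq (Finset.sum_congr rfl fun i _ ↦ by
            rw [norm_smul, mul_comm])
      _ ≤ √(∑ i, ‖L (b i)‖ ^ 2) * √(∑ i, ‖b.repr x i‖ ^ 2) :=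
          Real.sum_mul_le_sqrt_mul_sqrt _ _ _
      _ = √(∑ i, ‖L (b i)‖ ^ 2) * ‖x‖ := by
          rw [← EuclideanSpace.norm_eq, LinearIsometryEquiv.norm_map]
  simp only [← ofReal_norm, ← ENNReal.ofReal_pow (norm_nonneg _)]
  rw [← ENNReal.ofReal_sum_of_nonneg fun i _ ↦ by positivity]
  refine ENNReal.ofReal_le_ofReal ?_
  exact (Real.le_sqrt (norm_nonneg _) (Finset.sum_nonneg fun i _ ↦ by positivity)).1 hreal

variable {V : Type*} [NormedAddCommGroup V] [InnerProductSpace ℝ V] [FiniteDimensional ℝ V]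
  [MeasurableSpace V] [BorelSpace V]

lemma lintegral_radialAverage_smul {H : V → ℝ≥0∞} (hH : Measurable H) (ν : Measure ℝ) [SFinite ν]
    (e : V) : ∫⁻ t, radialAverage H (t • e) ∂ν =
      ∫⁻ q, ∫⁻ t, H (t • (rot q).symm e) ∂ν ∂rotMeasure V := by
  have hray : Measurable fun p : ℝ × OrthogonalGroup V ↦ (p.1 • e, p.2) :=
    (measurable_fst.smul_const e).prodMk measurable_snd
  have hswap := lintegral_lintegral_swap (f := fun t q ↦ H ((rot q).symm (t • e)))
    ((measurable_rot_symm_comp hH).comp hray).aemeasurable (μ := ν) (ν := rotMeasure V)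
  simpa only [radialAverage, map_smul] using hswap

lemma radialAverage_enorm_sq_le {F : Type*} [NormedAddCommGroup F] [NormedSpace ℝ F]
    [CompleteSpace F] {g : V → F} (hg : ContDiff ℝ 1 g) {e : V} (he : ‖e‖ = 1) (r : ℝ) :
    radialAverage (fun ξ ↦ ‖g ξ‖ₑ ^ 2) (r • e) ≤
      2 * ∫⁻ t in Icc r (r + 1),
        radialAverage (fun ξ ↦ ‖g ξ‖ₑ ^ 2 + ‖fderiv ℝ g ξ‖ₑ ^ 2) (t • e) := by
  have hfd : Continuous (fderiv ℝ g) := hg.continuous_fderiv one_ne_zero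
  have hmeas : Measurable fun ξ ↦ ‖g ξ‖ₑ ^ 2 + ‖fderiv ℝ g ξ‖ₑ ^ 2 :=
    (hg.continuous.enorm.measurable.pow_const 2).add (hfd.enorm.measurable.pow_const 2)
  rw [lintegral_radialAverage_smul hmeas, ← lintegral_const_mul' _ _ ENNReal.ofNat_ne_top]
  simp only [radialAverage, map_smul]
  refine lintegral_mono fun q ↦ ?_
  set η := (rot q).symm e with hη_def
  have hη : ‖η‖ = 1 := by rw [hη_def, LinearIsometryEquiv.norm_map, he]
  have hline : Continuous fun t : ℝ ↦ t • η := continuous_id.smul continuous_const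
  have hderiv (t : ℝ) : HasDerivAt (fun t : ℝ ↦ g (t • η)) (fderiv ℝ g (t • η) η) t := by
    have hsmul : HasDerivAt (fun t : ℝ ↦ t • η) η t := by
      simpa using (hasDerivAt_id t).smul_const η
    exact ((hg.differentiable one_ne_zero (t • η)).hasFDerivAt).comp_hasDerivAt t hsmul
  refine (enorm_sq_le_two_mul_setLIntegral_Icc hderiv
    ((hfd.comp hline).clm_apply continuous_const) r).trans ?_
  gcongr with t
  simpa [enorm_le_iff_norm_le, hη] using (fderiv ℝ g (t • η)).le_opNorm η

lemma toSphere_mul_setLIntegral_radialAverage_le [Nontrivial V] {H : V → ℝ≥0∞}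
    (hH : Measurable H) {e : V} (he : ‖e‖ = 1) {r : ℝ} (hr : 0 < r) :
    (volume : Measure V).toSphere univ * (ENNReal.ofReal (r ^ (finrank ℝ V - 1)) *
      ∫⁻ t in Icc r (r + 1), radialAverage H (t • e)) ≤ ∫⁻ ξ in closedBall 0 (r + 1), H ξ := by
  set a : ℝ → ℝ≥0∞ := (Icc r (r + 1)).indicator 1 with ha_def
  have ha : Measurable a := measurable_one.indicator measurableSet_Icc
  have hradial : Measurable fun t : ℝ ↦ radialAverage H (t • e) :=
    (measurable_radialAverage hH).comp (measurable_id.smul_const e)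
  calc _ ≤ (volume : Measure V).toSphere univ *
        ∫⁻ t in Ioi (0 : ℝ), ENNReal.ofReal (t ^ (finrank ℝ V - 1)) *
          (a t * radialAverage H (t • e)) := by
        gcongr 1
        rw [← lintegral_const_mul' _ _ ENNReal.ofReal_ne_top,
          ← lintegral_indicator measurableSet_Icc, ← lintegral_indicator measurableSet_Ioi]
        refine lintegral_mono fun t ↦ indicator_le (fun t ht ↦ ?_) t
        have ht0 : t ∈ Ioi 0 := hr.trans_le ht.1
        rw [indicator_of_mem ht0, ha_def, indicator_of_mem ht,
          Pi.one_apply, one_mul]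
        gcongr
        exact ht.1
    _ = ∫⁻ x : V, a ‖x‖ * radialAverage H (‖x‖ • e) :=
        (lintegral_norm_eq_toSphere_mul volume (ha.mul hradial)).symm
    _ = ∫⁻ x : V, radialAverage (fun y ↦ a ‖y‖ * H y) x := by
        refine lintegral_congr fun x ↦ ?_
        rw [radialAverage_mul_norm hH, radialAverage_eq_of_norm_eq H]
        rw [norm_smul, he, norm_norm, mul_one]
    _ = ∫⁻ x : V, a ‖x‖ * H x := lintegral_radialAverage ((ha.comp measurable_norm).mul hH)
    _ ≤ ∫⁻ ξ in closedBall 0 (r + 1), H ξ := by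
        rw [← lintegral_indicator measurableSet_closedBall]
        refine lintegral_mono fun x ↦ ?_
        by_cases hx : ‖x‖ ∈ Icc r (r + 1)
        · rw [indicator_of_mem (mem_closedBall_zero_iff.2 hx.2), ha_def, indicator_of_mem hx,
            Pi.one_apply, one_mul]
        · simp [ha_def, indicator_of_notMem hx]

lemma setLIntegral_radialAverage_le_rpow [Nontrivial V] {H : V → ℝ≥0∞} (hH : Measurable H)
    {C s : ℝ} (hC : 0 ≤ C) (hs : s ≤ finrank ℝ V)
    (hHC : ∀ R > 0, ∫⁻ ξ in closedBall 0 R, H ξ ≤ ENNReal.ofReal (C * R ^ (finrank ℝ V - s)))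
    {e : V} (he : ‖e‖ = 1) {r : ℝ} (hr : 1 ≤ r) :
    ∫⁻ t in Icc r (r + 1), radialAverage H (t • e) ≤ ENNReal.ofReal
      (C * 2 ^ (finrank ℝ V - s) / ((volume : Measure V).toSphere univ).toReal * r ^ (1 - s)) := by
  set n := finrank ℝ V
  have hn : 1 ≤ n := Module.finrank_pos
  have hr0 : 0 < r := one_pos.trans_le hr
  set σ := (volume : Measure V).toSphere univ
  have hσ : 0 < σ.toReal := ENNReal.toReal_pos
    (Measure.measure_univ_ne_zero.2 (Measure.toSphere_ne_zero _)) (measure_ne_top _ _)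
  set Q := ∫⁻ t in Icc r (r + 1), radialAverage H (t • e)
  have hshell : ENNReal.ofReal (σ.toReal * r ^ (n - 1)) * Q ≤
      ENNReal.ofReal (C * (2 * r) ^ (n - s)) := by
    rw [ENNReal.ofReal_mul hσ.le, ENNReal.ofReal_toReal (measure_ne_top _ _), mul_assoc]
    refine ((toSphere_mul_setLIntegral_radialAverage_le hH he hr0).trans
      (hHC (r + 1) (by linarith))).trans (ENNReal.ofReal_le_ofReal ?_)
    gcongr
    linarith
  have hpos : 0 < σ.toReal * r ^ (n - 1) := by positivity
  have hpow : r ^ ((n : ℝ) - s) = r ^ (1 - s) * r ^ (n - 1) := by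
    rw [← Real.rpow_natCast, ← Real.rpow_add hr0, Nat.cast_sub hn]
    congr 1
    push_cast
    ring
  have hdiv : C * (2 * r) ^ (n - s) / (σ.toReal * r ^ (n - 1)) =
      C * 2 ^ (n - s) / σ.toReal * r ^ (1 - s) := by
    rw [Real.mul_rpow zero_le_two hr0.le, hpow]
    field_simp
  rwa [← hdiv, ENNReal.ofReal_div_of_pos hpos, ENNReal.le_div_iff_mul_le
    (.inl (ENNReal.ofReal_pos.2 hpos).ne') (.inl ENNReal.ofReal_ne_top), mul_comm]

lemma exists_radialAverage_enorm_sq_le_rpow [Nontrivial V] {F : Type*} [NormedAddCommGroup F]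
    [NormedSpace ℝ F] [CompleteSpace F] {g : V → F} (hg : ContDiff ℝ 1 g) {C s : ℝ} (hC : 0 ≤ C)
    (hs : s ≤ finrank ℝ V)
    (hgC : ∀ R > 0, ∫⁻ ξ in closedBall 0 R, (‖g ξ‖ₑ ^ 2 + ‖fderiv ℝ g ξ‖ₑ ^ 2) ≤
      ENNReal.ofReal (C * R ^ (finrank ℝ V - s))) :
    ∃ C', ∀ ξ : V, 1 ≤ ‖ξ‖ →
      radialAverage (fun ξ ↦ ‖g ξ‖ₑ ^ 2) ξ ≤ ENNReal.ofReal (C' * ‖ξ‖ ^ (1 - s)) := by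
  have hmeas : Measurable fun ξ ↦ ‖g ξ‖ₑ ^ 2 + ‖fderiv ℝ g ξ‖ₑ ^ 2 :=
    (hg.continuous.enorm.measurable.pow_const 2).add
      ((hg.continuous_fderiv one_ne_zero).enorm.measurable.pow_const 2)
  refine ⟨2 * (C * 2 ^ (finrank ℝ V - s) / ((volume : Measure V).toSphere univ).toReal),
    fun ξ hξ ↦ ?_⟩
  have hξ0 : ξ ≠ 0 := norm_pos_iff.1 (one_pos.trans_le hξ)
  have he : ‖‖ξ‖⁻¹ • ξ‖ = 1 := norm_smul_inv_norm (𝕜 := ℝ) hξ0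
  rw [mul_assoc, ENNReal.ofReal_mul zero_le_two, ENNReal.ofReal_ofNat]
  calc radialAverage (fun ξ ↦ ‖g ξ‖ₑ ^ 2) ξ
      ≤ 2 * ∫⁻ t in Icc ‖ξ‖ (‖ξ‖ + 1),
          radialAverage (fun ξ ↦ ‖g ξ‖ₑ ^ 2 + ‖fderiv ℝ g ξ‖ₑ ^ 2) (t • ‖ξ‖⁻¹ • ξ) := by
        simpa only [smul_inv_smul₀ (norm_ne_zero_iff.2 hξ0)] using
          radialAverage_enorm_sq_le hg he ‖ξ‖
    _ ≤ _ := by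
        gcongr
        exact setLIntegral_radialAverage_le_rpow hmeas hC hs hgC he hξ

section Frostman

variable {μ : Measure V} [IsFiniteMeasure μ]

lemma contDiff_measureFourier_one (hμ : Integrable id μ) :
    ContDiff ℝ 1 (measureFourier μ fun _ ↦ 1) := by
  refine VectorFourier.contDiff_fourierIntegral (N := 1) (innerSL ℝ) fun n hn ↦ ?_
  obtain rfl | rfl : n = 0 ∨ n = 1 := by
    have : n ≤ 1 := by exact_mod_cast hn
    omega
  · simp
  · simpa using hμ.norm

lemma fderiv_measureFourier_one_apply (hμ : Integrable id μ) (ξ v : V) :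
    fderiv ℝ (measureFourier μ fun _ ↦ 1) ξ v =
      measureFourier μ (fun x ↦ -(2 * π * I) * ⟪x, v⟫) ξ := by
  have hint : Integrable (fun x ↦ ‖x‖ * ‖(1 : ℂ)‖) μ := by simpa using hμ.norm
  have hderiv : Integrable (VectorFourier.fourierSMulRight (innerSL ℝ) fun _ : V ↦ (1 : ℂ)) μ :=
    (hμ.norm.const_mul (2 * π * ‖innerSL ℝ (E := V)‖)).mono'
      aestronglyMeasurable_const.fourierSMulRight (.of_forall fun x ↦ by
        simpa using VectorFourier.norm_fourierSMulRight_le (innerSL ℝ) (fun _ ↦ (1 : ℂ)) x)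
  have hfderiv : fderiv ℝ (measureFourier μ fun _ ↦ 1) ξ = _ :=
    (VectorFourier.hasFDerivAt_fourierIntegral (innerSL ℝ) (integrable_const 1) hint ξ).fderiv
  rw [hfderiv]
  refine (Real.fourierIntegral_continuousLinearMap_apply' hderiv).trans ?_
  simp only [VectorFourier.fourierSMulRight_apply, Complex.real_smul, mul_one, smul_eq_mul,
    neg_mul, measureFourier]
  rfl

lemma IsFrostman.exists_radialAverage_measureFourier_le [Nontrivial V] {C s : ℝ}
    (h : IsFrostman μ C s) (hC : 0 ≤ C) (hs : s ≤ finrank ℝ V) (hμ : MemLp id 2 μ) :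
    ∃ C', ∀ ξ : V, 1 ≤ ‖ξ‖ →
      radialAverage (fun ξ ↦ ‖measureFourier μ (fun _ ↦ 1) ξ‖ₑ ^ 2) ξ ≤
        ENNReal.ofReal (C' * ‖ξ‖ ^ (1 - s)) := by
  have hid : Integrable id μ := hμ.integrable one_le_two
  set b := stdOrthonormalBasis ℝ V
  set f : Fin (finrank ℝ V) → V → ℂ := fun i x ↦ -(2 * π * I) * ⟪x, b i⟫
  have hf (i) : MemLp (f i) 2 μ :=
    ((hμ.inner_const (b i)).ofReal (K := ℂ)).const_mul (-(2 * π * I))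
  have hfi (i) : Integrable (f i) μ := (hf i).integrable one_le_two
  set K := (∫⁻ _, ‖(1 : ℂ)‖ₑ ^ 2 ∂μ) + ∑ i, ∫⁻ x, ‖f i x‖ₑ ^ 2 ∂μ
  have hK : K ≠ ∞ := by
    refine ENNReal.add_ne_top.2 ⟨by simp, ENNReal.sum_ne_top.2 fun i _ ↦ ?_⟩
    have := lintegral_rpow_enorm_lt_top_of_eLpNorm_lt_top two_ne_zero ENNReal.ofNat_ne_top
      (hf i).eLpNorm_lt_top
    simpa using this.ne
  obtain ⟨A, hA, henergy⟩ := h.exists_setLIntegral_enorm_measureFourier_sq_le hC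
  refine exists_radialAverage_enorm_sq_le_rpow (contDiff_measureFourier_one hid)
    (C := A * K.toReal) (by positivity) hs fun R hR ↦ ?_
  calc ∫⁻ ξ in closedBall 0 R, (‖measureFourier μ (fun _ ↦ 1) ξ‖ₑ ^ 2 +
          ‖fderiv ℝ (measureFourier μ fun _ ↦ 1) ξ‖ₑ ^ 2)
      ≤ ∫⁻ ξ in closedBall 0 R, (‖measureFourier μ (fun _ ↦ 1) ξ‖ₑ ^ 2 +
          ∑ i, ‖measureFourier μ (f i) ξ‖ₑ ^ 2) := by
        gcongr with ξ
        refine (enorm_sq_le_sum_orthonormalBasis b _).trans_eq (Finset.sum_congr rfl fun i _ ↦ ?_)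
        rw [fderiv_measureFourier_one_apply hid]
    _ = (∫⁻ ξ in closedBall 0 R, ‖measureFourier μ (fun _ ↦ 1) ξ‖ₑ ^ 2) +
          ∑ i, ∫⁻ ξ in closedBall 0 R, ‖measureFourier μ (f i) ξ‖ₑ ^ 2 := by
        rw [lintegral_add_left ((continuous_measureFourier
          (integrable_const 1)).enorm.measurable.pow_const 2), lintegral_finsetSum _ fun i _ ↦
            (continuous_measureFourier (hfi i)).enorm.measurable.pow_const 2]
    _ ≤ ENNReal.ofReal (A * R ^ (finrank ℝ V - s)) * K := by
        rw [mul_add, Finset.mul_sum]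
        gcongr with i
        · exact henergy _ (integrable_const 1) R hR
        · exact henergy _ (hfi i) R hR
    _ = _ := by
        rw [mul_right_comm, ENNReal.ofReal_mul (p := _ * _) (by positivity),
          ENNReal.ofReal_toReal hK]

end Frostman

end SphericalAverage

/-! ### Correlations of a Frostman measure under rigid motions -/

section Summation

variable {p : ℕ}

lemma tsum_pow_le_tsum_pow_mul_tsum_div_pow {ι : Type*} (hp : p ≠ 0) (t : ι → ℝ≥0∞)
    {a : ι → ℝ≥0∞} (ha : ∀ j, a j ≠ 0) (ha' : ∀ j, a j ≠ ∞) :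
    (∑' j, t j) ^ p ≤ (∑' j, a j) ^ p * ∑' j, (t j / a j) ^ p := by
  set S := (∑' j, (t j / a j) ^ p) ^ (p : ℝ)⁻¹
  have hle (j) : t j ≤ a j * S := by
    rw [mul_comm, ← ENNReal.div_le_iff (ha j) (ha' j),
      ENNReal.le_rpow_inv_iff (by positivity), ENNReal.rpow_natCast]
    exact ENNReal.le_tsum (f := fun j ↦ (t j / a j) ^ p) j
  calc (∑' j, t j) ^ p ≤ (∑' j, a j * S) ^ p := by gcongr with j; exact hle j
    _ = _ := by rw [ENNReal.tsum_mul_right, mul_pow, ENNReal.rpow_inv_natCast_pow hp]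

lemma exists_lintegral_tsum_pow_le {X : Type*} [MeasurableSpace X] {μ : Measure X} (hp : p ≠ 0)
    {C r : ℝ≥0∞} (hC : C ≠ ∞) (hr₀ : r ≠ 0) (hr : r < 1) :
    ∃ K ≠ ∞, ∀ f : ℕ → X → ℝ≥0∞, (∀ j, AEMeasurable (f j) μ) →
      (∀ j, ∫⁻ x, f j x ^ p ∂μ ≤ C * r ^ j) → ∫⁻ x, (∑' j, f j x) ^ p ∂μ ≤ K := by
  have hrtop : r ≠ ∞ := hr.ne_top
  set c := r ^ (1 / 2 : ℝ)
  set b := c ^ (p : ℝ)⁻¹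
  have hc₀ : c ≠ 0 := (ENNReal.rpow_pos hr₀.bot_lt hrtop).ne'
  have hc : c < 1 := ENNReal.rpow_lt_one hr (by norm_num)
  have hcr : r = c * c := by
    rw [← ENNReal.rpow_add _ _ hr₀ hrtop]
    norm_num
  have hb₀ : b ≠ 0 := (ENNReal.rpow_pos hc₀.bot_lt hc.ne_top).ne'
  have hb : b < 1 := ENNReal.rpow_lt_one hc (by positivity)
  have hbp (j : ℕ) : (b ^ j) ^ p = c ^ j := by
    rw [← pow_mul, mul_comm, pow_mul, ENNReal.rpow_inv_natCast_pow hp]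
  refine ⟨(∑' j, b ^ j) ^ p * (C * ∑' j, c ^ j), ?_, fun f hf hle ↦ ?_⟩
  · simp only [ENNReal.tsum_geometric]
    refine ENNReal.mul_ne_top (ENNReal.pow_ne_top ?_) (ENNReal.mul_ne_top hC ?_) <;>
      simpa only [ne_eq, ENNReal.inv_eq_top, tsub_eq_zero_iff_le, not_le]
  have hterm (j : ℕ) : ∫⁻ x, (f j x / b ^ j) ^ p ∂μ ≤ C * c ^ j := by
    have hinv : (b ^ j)⁻¹ ^ p = (c ^ j)⁻¹ := by rw [← hbp, ENNReal.inv_pow (a := b ^ j)]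
    simp_rw [div_eq_mul_inv, mul_pow, hinv]
    rw [lintegral_mul_const' _ _ (by simp [hc₀]), ← div_eq_mul_inv]
    refine ENNReal.div_le_of_le_mul ((hle j).trans_eq ?_)
    rw [hcr, mul_pow, mul_assoc]
  calc ∫⁻ x, (∑' j, f j x) ^ p ∂μ
      ≤ ∫⁻ x, (∑' j, b ^ j) ^ p * ∑' j, (f j x / b ^ j) ^ p ∂μ :=
        lintegral_mono fun x ↦ tsum_pow_le_tsum_pow_mul_tsum_div_pow hp _
          (fun j ↦ pow_ne_zero j hb₀) fun j ↦ ENNReal.pow_ne_top hb.ne_top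
    _ = (∑' j, b ^ j) ^ p * ∑' j, ∫⁻ x, (f j x / b ^ j) ^ p ∂μ := by
        rw [lintegral_const_mul'', lintegral_tsum fun j ↦ ((hf j).div_const _).pow_const p]
        · exact AEMeasurable.tsum fun j ↦ ((hf j).div_const _).pow_const p
    _ ≤ (∑' j, b ^ j) ^ p * (C * ∑' j, c ^ j) := by
        rw [← ENNReal.tsum_mul_left (a := C)]
        gcongr with j
        exact hterm j

end Summation

section Correlation

open Module (finrank)
open scoped RealInnerProductSpace FourierTransform ComplexConjugate

variable {V : Type*} [NormedAddCommGroup V] [InnerProductSpace ℝ V] [MeasurableSpace V]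

/-- The power spectrum of `μ`, the squared modulus of its Fourier transform. -/
def powerSpectrum (μ : Measure V) (ξ : V) : ℝ≥0∞ := ‖measureFourier μ (fun _ ↦ 1) ξ‖ₑ ^ 2

variable {μ : Measure V} {R : ℝ}

lemma norm_measureFourier_one_le (ξ : V) : ‖measureFourier μ (fun _ ↦ 1) ξ‖ ≤ μ.real univ := by
  simpa only [norm_one, integral_const, smul_eq_mul, mul_one] using
    VectorFourier.norm_fourierIntegral_le_integral_norm 𝐞 μ (innerₗ V) (fun _ ↦ (1 : ℂ)) ξ

lemma measurable_powerSpectrum [BorelSpace V] [IsFiniteMeasure μ] :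
    Measurable (powerSpectrum μ) :=
  (continuous_measureFourier (integrable_const 1)).enorm.measurable.pow_const 2

variable [FiniteDimensional ℝ V]

/-- The correlation at scale `R⁻¹` of `μ` with its image under the rigid motion
`x ↦ rot p.1 x + p.2`. -/
def smoothedCorrelation (μ : Measure V) (R : ℝ) (p : OrthogonalGroup V × V) : ℝ≥0∞ :=
  ∫⁻ x, ENNReal.ofReal (gaussianKernel R (rot p.1 x.1 + p.2 - x.2)) ∂μ.prod μ

/-- The cross spectrum at scale `R⁻¹` of `μ` with its image under the rotation `g`; its Fourier
transform is `smoothedCorrelation`. -/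
def crossSpectrum (μ : Measure V) (R : ℝ) (g : OrthogonalGroup V) (ξ : V) : ℂ :=
  measureFourier μ (fun _ ↦ 1) ((rot g).symm ξ) * conj (measureFourier μ (fun _ ↦ 1) ξ) *
    gaussianCutoff R ξ

lemma enorm_crossSpectrum_le (g : OrthogonalGroup V) (ξ : V) :
    ‖crossSpectrum μ R g ξ‖ₑ ≤
      ‖measureFourier μ (fun _ ↦ 1) ((rot g).symm ξ)‖ₑ * ‖measureFourier μ (fun _ ↦ 1) ξ‖ₑ := by
  rw [crossSpectrum, enorm_mul, enorm_mul, RCLike.enorm_conj]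
  refine mul_le_of_le_one_right' ?_
  rw [← ofReal_norm, Complex.norm_of_nonneg (gaussianCutoff_nonneg R ξ), ENNReal.ofReal_le_one,
    gaussianCutoff, Real.exp_le_one_iff, neg_mul, neg_nonpos]
  positivity

lemma radialAverage_powerSpectrum_le (ξ : V) :
    radialAverage (powerSpectrum μ) ξ ≤ ENNReal.ofReal (μ.real univ ^ 2) := by
  have hle (η : V) : powerSpectrum μ η ≤ ENNReal.ofReal (μ.real univ ^ 2) := by
    rw [powerSpectrum, ← ofReal_norm, ← ENNReal.ofReal_pow (norm_nonneg _)]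
    gcongr
    exact norm_measureFourier_one_le η
  calc radialAverage (powerSpectrum μ) ξ
      ≤ ∫⁻ _, ENNReal.ofReal (μ.real univ ^ 2) ∂rotMeasure V := lintegral_mono fun g ↦ hle _
    _ = _ := by rw [lintegral_const, measure_univ, mul_one]

lemma fourierChar_smul_crossSpectrum [SFinite μ] (p : OrthogonalGroup V × V) (ξ : V) :
    𝐞 (-⟪ξ, p.2⟫) • crossSpectrum μ R p.1 ξ =
      (∫ x, 𝐞 (-⟪rot p.1 x.1 + p.2 - x.2, ξ⟫) * (1 : ℂ) ∂μ.prod μ) * gaussianCutoff R ξ := by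
  rw [crossSpectrum, measureFourier, VectorFourier.fourierIntegral, VectorFourier.fourierIntegral,
    ← integral_conj, Circle.smul_def, smul_eq_mul, ← mul_assoc, ← integral_prod_mul,
    ← integral_const_mul]
  congr 2 with x
  have hinner : -⟪rot p.1 x.1 + p.2 - x.2, ξ⟫ =
      -⟪ξ, p.2⟫ + (-⟪x.1, (rot p.1).symm ξ⟫ + ⟪x.2, ξ⟫) := by
    rw [inner_sub_left, inner_add_left, real_inner_comm ξ p.2,
      ← (rot p.1).inner_map_map x.1, LinearIsometryEquiv.apply_symm_apply]
    ring
  simp only [hinner, AddChar.map_add_eq_mul, Circle.smul_def, Circle.coe_mul,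
    AddChar.map_neg_eq_inv, Circle.coe_inv_eq_conj, innerₗ_apply_apply, smul_eq_mul, mul_one,
    Complex.conj_conj]

variable [BorelSpace V]

/-- The contribution to `smoothedCorrelation` of the frequencies with norm in `S`. -/
def bandCorrelation (μ : Measure V) (R : ℝ) (S : Set ℝ) (p : OrthogonalGroup V × V) : ℝ≥0∞ :=
  ‖measureFourier volume ((norm ⁻¹' S).indicator (crossSpectrum μ R p.1)) p.2‖ₑ

lemma bandCorrelation_eq_enorm_setIntegral {S : Set ℝ} (hS : MeasurableSet S)
    (p : OrthogonalGroup V × V) :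
    bandCorrelation μ R S p =
      ‖∫ ξ in norm ⁻¹' S, 𝐞 (-⟪ξ, p.2⟫) • crossSpectrum μ R p.1 ξ‖ₑ := by
  rw [← integral_indicator (measurable_norm hS), bandCorrelation, measureFourier,
    VectorFourier.fourierIntegral]
  congr 2 with ξ
  by_cases hξ : ξ ∈ norm ⁻¹' S
  · simp only [indicator_of_mem hξ, innerₗ_apply_apply]
  · simp only [indicator_of_notMem hξ, smul_zero]

variable [IsFiniteMeasure μ]

lemma continuous_crossSpectrum :
    Continuous fun q : OrthogonalGroup V × V ↦ crossSpectrum μ R q.1 q.2 := by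
  have hφ : Continuous (measureFourier μ fun _ ↦ 1) :=
    continuous_measureFourier (integrable_const 1)
  exact ((hφ.comp continuous_rot_symm_apply).mul
    (Complex.continuous_conj.comp (hφ.comp continuous_snd))).mul
      (Complex.continuous_ofReal.comp ((continuous_gaussianCutoff R).comp continuous_snd))

lemma integrable_crossSpectrum (hR : 0 < R) (g : OrthogonalGroup V) :
    Integrable (crossSpectrum μ R g) := by
  have hφ : Continuous (measureFourier μ fun _ ↦ 1) :=
    continuous_measureFourier (integrable_const 1)
  refine (integrable_gaussianCutoff hR).ofReal.bdd_mul (c := μ.real univ * μ.real univ)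
    ((hφ.comp (rot g).symm.continuous).mul
      (Complex.continuous_conj.comp hφ)).aestronglyMeasurable (ae_of_all _ fun ξ ↦ ?_)
  simp only [norm_mul, RCLike.norm_conj]
  gcongr <;> exact norm_measureFourier_one_le _

lemma smoothedCorrelation_eq_enorm_measureFourier (hR : 0 < R) (p : OrthogonalGroup V × V) :
    smoothedCorrelation μ R p = ‖measureFourier volume (crossSpectrum μ R p.1) p.2‖ₑ := by
  set T : V × V → V := fun x ↦ rot p.1 x.1 + p.2 - x.2
  have hT : Continuous T :=
    (((rot p.1).continuous.comp continuous_fst).add continuous_const).sub continuous_snd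
  have hker : Integrable (fun x ↦ gaussianKernel R (T x)) (μ.prod μ) := by
    refine .of_bound ((continuous_gaussianKernel R).comp hT).aestronglyMeasurable
      (R ^ finrank ℝ V) (ae_of_all _ fun x ↦ ?_)
    rw [Real.norm_of_nonneg (gaussianKernel_nonneg hR _), gaussianKernel]
    refine mul_le_of_le_one_right (by positivity) (Real.exp_le_one_iff.2 ?_)
    rw [neg_mul, neg_nonpos]
    positivity
  calc smoothedCorrelation μ R p = ENNReal.ofReal (∫ x, gaussianKernel R (T x) ∂μ.prod μ) :=
        (ofReal_integral_eq_lintegral_ofReal hker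
          (ae_of_all _ fun x ↦ gaussianKernel_nonneg hR _)).symm
    _ = ‖∫ x, (1 : ℂ) * gaussianKernel R (T x) ∂μ.prod μ‖ₑ := by
        simp_rw [one_mul]
        rw [integral_complex_ofReal, ← ofReal_norm, Complex.norm_of_nonneg
          (integral_nonneg fun x ↦ gaussianKernel_nonneg hR _)]
    _ = _ := by
        rw [← integral_integral_fourierChar_mul_gaussianCutoff hT.measurable (integrable_const 1)
          hR, measureFourier, VectorFourier.fourierIntegral]
        simp only [innerₗ_apply_apply, fourierChar_smul_crossSpectrum, T]

variable {S : Set ℝ}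

lemma measurable_bandCorrelation (hS : MeasurableSet S) : Measurable (bandCorrelation μ R S) := by
  have hband : Measurable fun q : (OrthogonalGroup V × V) × V ↦
      (norm ⁻¹' S).indicator (crossSpectrum μ R q.1.1) q.2 :=
    (continuous_crossSpectrum.measurable.comp (measurable_fst.fst.prodMk measurable_snd)).indicator
      (hS.preimage measurable_snd.norm)
  have hchar : Measurable fun q : (OrthogonalGroup V × V) × V ↦ (𝐞 (-⟪q.2, q.1.2⟫) : ℂ) :=
    (continuous_subtype_val.comp Real.continuous_fourierChar).measurable.comp
      (measurable_snd.inner measurable_fst.snd).neg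
  exact (hchar.mul hband).stronglyMeasurable.integral_prod_right'.measurable.enorm

lemma smoothedCorrelation_le_tsum_bandCorrelation (hR : 0 < R) {level : ℝ → ℕ}
    (hlevel : Measurable level) (p : OrthogonalGroup V × V) :
    smoothedCorrelation μ R p ≤ ∑' j, bandCorrelation μ R (level ⁻¹' {j}) p := by
  set h : V → ℂ := fun ξ ↦ 𝐞 (-⟪ξ, p.2⟫) • crossSpectrum μ R p.1 ξ
  set A : ℕ → Set V := fun j ↦ norm ⁻¹' (level ⁻¹' {j})
  have hA (j) : MeasurableSet (A j) := (hlevel.comp measurable_norm) (measurableSet_singleton j)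
  have hdisj : Pairwise (Function.onFun Disjoint A) :=
    pairwise_disjoint_fiber fun ξ : V ↦ level ‖ξ‖
  have hunion : ⋃ j, A j = univ := iUnion_eq_univ_iff.2 fun ξ ↦ ⟨level ‖ξ‖, rfl⟩
  have hint : Integrable h := by
    refine (integrable_crossSpectrum hR p.1).bdd_mul (c := 1)
      (continuous_subtype_val.comp (Real.continuous_fourierChar.comp
        (by fun_prop : Continuous fun ξ : V ↦ -⟪ξ, p.2⟫))).aestronglyMeasurable
      (ae_of_all _ fun ξ ↦ (Circle.norm_coe _).le)
  calc smoothedCorrelation μ R p = ‖∫ ξ in ⋃ j, A j, h ξ‖ₑ := by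
        rw [smoothedCorrelation_eq_enorm_measureFourier hR, hunion, setIntegral_univ]
        rfl
    _ = ‖∑' j, ∫ ξ in A j, h ξ‖ₑ := by rw [integral_iUnion hA hdisj hint.integrableOn]
    _ ≤ ∑' j, ‖∫ ξ in A j, h ξ‖ₑ := enorm_tsum_le_tsum_enorm
    _ = _ := by
        simp_rw [bandCorrelation_eq_enorm_setIntegral (hlevel (measurableSet_singleton _))]
        rfl

lemma bandCorrelation_le (hS : MeasurableSet S) (p : OrthogonalGroup V × V) :
    bandCorrelation μ R S p ≤ ∫⁻ ξ in norm ⁻¹' S, powerSpectrum μ ξ := by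
  set φ := measureFourier μ fun _ ↦ 1
  set A : Set V := norm ⁻¹' S
  have hφ : Measurable fun ξ ↦ ‖φ ξ‖ₑ :=
    (continuous_measureFourier (integrable_const 1)).enorm.measurable
  have hrot : ∫⁻ ξ in A, ‖φ ((rot p.1).symm ξ)‖ₑ ^ 2 = ∫⁻ ξ in A, ‖φ ξ‖ₑ ^ 2 := by
    have hA : (rot p.1).symm ⁻¹' A = A := by
      ext ξ
      simp only [A, mem_preimage, LinearIsometryEquiv.norm_map]
    nth_rw 1 [← hA]
    exact (rot p.1).symm.measurePreserving.setLIntegral_comp_preimage (measurable_norm hS)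
      (hφ.pow_const 2)
  have hle : bandCorrelation μ R S p ≤ ∫⁻ ξ in A, ‖φ ((rot p.1).symm ξ)‖ₑ * ‖φ ξ‖ₑ := by
    rw [bandCorrelation_eq_enorm_setIntegral hS]
    refine (enorm_integral_le_lintegral_enorm _).trans (lintegral_mono fun ξ ↦ ?_)
    rw [← ofReal_norm, Circle.norm_smul, ofReal_norm]
    exact enorm_crossSpectrum_le _ _
  refine hle.trans ((ENNReal.pow_le_pow_left_iff two_ne_zero).1 ?_)
  calc _ ≤ _ := lintegral_mul_sq_le
        (hφ.comp (rot p.1).symm.continuous.measurable).aemeasurable hφ.aemeasurable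
    _ = (∫⁻ ξ in A, ‖φ ξ‖ₑ ^ 2) ^ 2 := by rw [sq (∫⁻ ξ in A, _), ← hrot]; rfl

lemma lintegral_bandCorrelation_sq_le (hR : 0 < R) (hS : MeasurableSet S) :
    ∫⁻ p, bandCorrelation μ R S p ^ 2 ∂(rotMeasure V).prod volume ≤
      ∫⁻ ξ in norm ⁻¹' S, powerSpectrum μ ξ * radialAverage (powerSpectrum μ) ξ := by
  have hA : MeasurableSet (norm ⁻¹' S : Set V) := measurable_norm hS
  have hP : Measurable (powerSpectrum μ) := measurable_powerSpectrum
  have hbessel (g : OrthogonalGroup V) : ∫⁻ ζ, bandCorrelation μ R S (g, ζ) ^ 2 ≤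
      ∫⁻ ξ in norm ⁻¹' S, powerSpectrum μ ξ * powerSpectrum μ ((rot g).symm ξ) := by
    refine (lintegral_enorm_measureFourier_volume_sq_le
      ((integrable_crossSpectrum hR g).indicator hA)).trans ?_
    rw [← lintegral_indicator hA]
    refine lintegral_mono fun ξ ↦ ?_
    by_cases hξ : ξ ∈ norm ⁻¹' S
    · simp only [indicator_of_mem hξ, powerSpectrum, ← mul_pow]
      rw [mul_comm]
      gcongr
      exact enorm_crossSpectrum_le _ _
    · simp [hξ]
  calc ∫⁻ p, bandCorrelation μ R S p ^ 2 ∂(rotMeasure V).prod volume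
      = ∫⁻ g, ∫⁻ ζ, bandCorrelation μ R S (g, ζ) ^ 2 ∂volume ∂rotMeasure V :=
        lintegral_prod _ ((measurable_bandCorrelation hS).pow_const 2).aemeasurable
    _ ≤ ∫⁻ g, (∫⁻ ξ in norm ⁻¹' S, powerSpectrum μ ξ * powerSpectrum μ ((rot g).symm ξ))
          ∂rotMeasure V := lintegral_mono hbessel
    _ = ∫⁻ ξ in norm ⁻¹' S, ∫⁻ g, powerSpectrum μ ξ * powerSpectrum μ ((rot g).symm ξ)
          ∂rotMeasure V := lintegral_lintegral_swap
        (((hP.comp measurable_fst).mul (measurable_rot_symm_comp hP)).comp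
          measurable_swap).aemeasurable
    _ = _ := by
        refine lintegral_congr fun ξ ↦ ?_
        exact lintegral_const_mul _ (measurable_rot_symm_comp hP).of_uncurry_left

lemma lintegral_bandCorrelation_pow_le (hR : 0 < R) (hS : MeasurableSet S) {k : ℕ} (hk : 1 ≤ k)
    {A B : ℝ≥0∞} (hA : ∫⁻ ξ in norm ⁻¹' S, powerSpectrum μ ξ ≤ A)
    (hB : ∀ ξ : V, ‖ξ‖ ∈ S → radialAverage (powerSpectrum μ) ξ ≤ B) :
    ∫⁻ p, bandCorrelation μ R S p ^ (k + 1) ∂(rotMeasure V).prod volume ≤ A ^ k * B := by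
  obtain ⟨m, rfl⟩ := Nat.exists_eq_add_of_le' hk
  calc ∫⁻ p, bandCorrelation μ R S p ^ (m + 1 + 1) ∂(rotMeasure V).prod volume
      ≤ ∫⁻ p, A ^ m * bandCorrelation μ R S p ^ 2 ∂(rotMeasure V).prod volume := by
        refine lintegral_mono fun p ↦ ?_
        rw [add_assoc, pow_add]
        gcongr
        exact (bandCorrelation_le hS p).trans hA
    _ ≤ A ^ m * ∫⁻ ξ in norm ⁻¹' S, powerSpectrum μ ξ * B := by
        rw [lintegral_const_mul _ ((measurable_bandCorrelation hS).pow_const 2)]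
        gcongr
        refine (lintegral_bandCorrelation_sq_le hR hS).trans
          (setLIntegral_mono' (measurable_norm hS) fun ξ hξ ↦ ?_)
        gcongr
        exact hB ξ hξ
    _ ≤ A ^ m * (A * B) := by
        rw [lintegral_mul_const _ measurable_powerSpectrum]
        gcongr
    _ = _ := by ring

/-- The integer `j` with `2 ^ j ≤ r < 2 ^ (j + 1)`, or `0` if `r < 1`. -/
def dyadicLevel (r : ℝ) : ℕ := Nat.log 2 ⌊r⌋₊

lemma measurable_dyadicLevel : Measurable dyadicLevel :=
  (measurable_from_top (f := Nat.log 2)).comp Nat.measurable_floor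

lemma lt_two_pow_dyadicLevel (r : ℝ) : r < 2 ^ (dyadicLevel r + 1) :=
  Nat.lt_of_floor_lt (Nat.lt_pow_succ_log_self one_lt_two _) |>.trans_eq (by push_cast; rfl)

lemma two_pow_dyadicLevel_le {r : ℝ} (hr : dyadicLevel r ≠ 0) : 2 ^ dyadicLevel r ≤ r := by
  have hfloor : ⌊r⌋₊ ≠ 0 := fun h ↦ hr (by rw [dyadicLevel, h, Nat.log_zero_right])
  calc (2 : ℝ) ^ dyadicLevel r ≤ ⌊r⌋₊ := by exact_mod_cast Nat.pow_log_le_self 2 hfloor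
    _ ≤ r := Nat.floor_le (Nat.pos_of_floor_pos hfloor.bot_lt).le

variable {C s : ℝ}

lemma IsFrostman.exists_setLIntegral_powerSpectrum_le (h : IsFrostman μ C s) (hC : 0 ≤ C) :
    ∃ A ≠ ∞, ∀ j : ℕ, ∫⁻ ξ in norm ⁻¹' (dyadicLevel ⁻¹' {j}), powerSpectrum μ ξ ≤
      A * ENNReal.ofReal (2 ^ (finrank ℝ V - s)) ^ j := by
  obtain ⟨C', hC', hle⟩ := h.exists_setLIntegral_enorm_measureFourier_sq_le hC
  refine ⟨ENNReal.ofReal (C' * 2 ^ (finrank ℝ V - s)) * ∫⁻ _, ‖(1 : ℂ)‖ₑ ^ 2 ∂μ,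
    ENNReal.mul_ne_top ENNReal.ofReal_ne_top (by simp), fun j ↦ ?_⟩
  have hsub : norm ⁻¹' (dyadicLevel ⁻¹' {j}) ⊆ closedBall (0 : V) (2 ^ (j + 1)) := by
    rintro ξ rfl
    exact mem_closedBall_zero_iff.2 (lt_two_pow_dyadicLevel _).le
  calc ∫⁻ ξ in norm ⁻¹' (dyadicLevel ⁻¹' {j}), powerSpectrum μ ξ
      ≤ ∫⁻ ξ in closedBall 0 (2 ^ (j + 1)), powerSpectrum μ ξ := lintegral_mono_set hsub
    _ ≤ ENNReal.ofReal (C' * (2 ^ (j + 1)) ^ (finrank ℝ V - s)) * ∫⁻ _, ‖(1 : ℂ)‖ₑ ^ 2 ∂μ :=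
        hle _ (integrable_const 1) _ (by positivity)
    _ = _ := by
        rw [mul_right_comm, ← ENNReal.ofReal_pow (by positivity),
          ← ENNReal.ofReal_mul (by positivity), ← Real.rpow_pow_comm zero_le_two, pow_succ' _ j,
          mul_assoc]

lemma IsFrostman.exists_radialAverage_powerSpectrum_le [Nontrivial V] (h : IsFrostman μ C s)
    (hC : 0 ≤ C) (hs₁ : 1 ≤ s) (hs : s ≤ finrank ℝ V) (hμ : MemLp id 2 μ) :
    ∃ B ≠ ∞, ∀ ξ : V, radialAverage (powerSpectrum μ) ξ ≤
      B * ENNReal.ofReal (2 ^ (1 - s)) ^ dyadicLevel ‖ξ‖ := by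
  obtain ⟨C', hle⟩ := h.exists_radialAverage_measureFourier_le hC hs hμ
  refine ⟨ENNReal.ofReal (max (μ.real univ ^ 2) C'), ENNReal.ofReal_ne_top, fun ξ ↦ ?_⟩
  by_cases hξ : dyadicLevel ‖ξ‖ = 0
  · rw [hξ, pow_zero, mul_one]
    exact (radialAverage_powerSpectrum_le ξ).trans (ENNReal.ofReal_le_ofReal (le_max_left _ _))
  · have hpow := two_pow_dyadicLevel_le hξ
    calc radialAverage (powerSpectrum μ) ξ ≤ ENNReal.ofReal (C' * ‖ξ‖ ^ (1 - s)) :=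
          hle ξ ((one_le_pow₀ one_le_two).trans hpow)
      _ ≤ ENNReal.ofReal (max (μ.real univ ^ 2) C' * (2 ^ (1 - s)) ^ dyadicLevel ‖ξ‖) := by
          rw [Real.rpow_pow_comm zero_le_two]
          gcongr ENNReal.ofReal (?_ * ?_)
          · exact le_max_right _ _
          · exact Real.rpow_le_rpow_of_nonpos (by positivity) hpow (by linarith)
      _ = _ := by
          rw [← ENNReal.ofReal_pow (by positivity), ← ENNReal.ofReal_mul (by positivity)]

lemma IsFrostman.exists_lintegral_smoothedCorrelation_pow_le [Nontrivial V]
    (h : IsFrostman μ C s) (hC : 0 ≤ C) (hs : s ≤ finrank ℝ V) (hμ : MemLp id 2 μ) {k : ℕ}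
    (hk : 1 ≤ k) (hks : finrank ℝ V * k + 1 < s * (k + 1)) :
    ∃ K ≠ ∞, ∀ R > 0,
      ∫⁻ p, smoothedCorrelation μ R p ^ (k + 1) ∂(rotMeasure V).prod volume ≤ K := by
  obtain ⟨A, hA, henergy⟩ := h.exists_setLIntegral_powerSpectrum_le hC
  obtain ⟨B, hB, hdecay⟩ := h.exists_radialAverage_powerSpectrum_le hC (by nlinarith) hs hμ
  set a := ENNReal.ofReal (2 ^ (finrank ℝ V - s))
  set b := ENNReal.ofReal (2 ^ (1 - s))
  have hab : a ^ k * b = ENNReal.ofReal (2 ^ ((finrank ℝ V - s) * k + (1 - s))) := by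
    rw [← ENNReal.ofReal_pow (by positivity), ← ENNReal.ofReal_mul (by positivity),
      Real.rpow_add two_pos, Real.rpow_mul_natCast zero_le_two]
  have hab₀ : a ^ k * b ≠ 0 := by
    rw [hab, ENNReal.ofReal_ne_zero_iff]
    positivity
  have hab₁ : a ^ k * b < 1 := by
    rw [hab, ENNReal.ofReal_lt_one]
    exact Real.rpow_lt_one_of_one_lt_of_neg one_lt_two (by linarith)
  obtain ⟨K, hK, hsum⟩ := exists_lintegral_tsum_pow_le
    (μ := (rotMeasure V).prod (volume : Measure V))
    k.succ_ne_zero (ENNReal.mul_ne_top (ENNReal.pow_ne_top hA) hB : A ^ k * B ≠ ∞) hab₀ hab₁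
  have hS (j : ℕ) : MeasurableSet (dyadicLevel ⁻¹' {j}) :=
    measurable_dyadicLevel (measurableSet_singleton j)
  refine ⟨K, hK, fun R hR ↦ le_trans ?_ (hsum (fun j ↦ bandCorrelation μ R (dyadicLevel ⁻¹' {j}))
    (fun j ↦ (measurable_bandCorrelation (hS j)).aemeasurable) fun j ↦ ?_)⟩
  · gcongr with p
    exact smoothedCorrelation_le_tsum_bandCorrelation hR measurable_dyadicLevel p
  · refine (lintegral_bandCorrelation_pow_le hR (hS j) hk (henergy j)
      (B := B * b ^ j) fun ξ hξ ↦ ?_).trans_eq (by ring)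
    rw [← show dyadicLevel ‖ξ‖ = j from hξ]
    exact hdecay ξ

end Correlation

/-! ### Nondegenerate tuples in the support -/

section FrostmanDimension

variable {X : Type*} [PseudoMetricSpace X] [MeasurableSpace X] {μ : Measure X} {C s : ℝ}

lemma IsFrostman.measure_le_mul_ediam_rpow (h : IsFrostman μ C s) (hC : 0 ≤ C) (hs : 0 < s)
    {A : Set X} (hA : ediam A ≠ ∞) : μ A ≤ ENNReal.ofReal C * ediam A ^ s := by
  obtain rfl | ⟨x, hx⟩ := A.eq_empty_or_nonempty
  · simp
  have hlim : Filter.Tendsto (fun r : ℝ ↦ ENNReal.ofReal (C * r ^ s)) (𝓝[>] (ediam A).toReal)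
      (𝓝 (ENNReal.ofReal (C * (ediam A).toReal ^ s))) :=
    (ENNReal.continuous_ofReal.comp
      (continuous_const.mul (Real.continuous_rpow_const hs.le))).continuousWithinAt
  rw [ENNReal.ofReal_mul hC, ← ENNReal.ofReal_rpow_of_nonneg ENNReal.toReal_nonneg hs.le,
    ENNReal.ofReal_toReal hA] at hlim
  refine ge_of_tendsto hlim (eventually_mem_nhdsWithin.mono fun r hr ↦ ?_)
  refine (measure_mono fun y hy ↦ ?_).trans (h x r (ENNReal.toReal_nonneg.trans_lt hr))
  rw [mem_closedBall, dist_edist]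
  exact (ENNReal.toReal_mono hA (edist_le_ediam_of_mem hy hx)).trans (mem_Ioi.1 hr).le

end FrostmanDimension

section FrostmanRank

variable {X : Type*} [MetricSpace X] [MeasurableSpace X] [BorelSpace X] {V : Type*}
  [NormedAddCommGroup V] [NormedSpace ℝ V] [FiniteDimensional ℝ V] [MeasurableSpace V]
  [BorelSpace V] {C s : ℝ}

lemma IsFrostman.measure_eq_zero_of_dimH_lt {μ : Measure X} (h : IsFrostman μ C s) (hC : 0 < C)
    (hs : 0 < s) {A : Set X} (hA : dimH A < ENNReal.ofReal s) : μ A = 0 := by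
  have hle : (ENNReal.ofReal C)⁻¹ • μ ≤ μH[s] := by
    refine Measure.le_hausdorffMeasure s _ 1 one_pos fun B hB ↦ ?_
    rw [Measure.smul_apply, smul_eq_mul, mul_comm, ← div_eq_mul_inv]
    exact ENNReal.div_le_of_le_mul'
      (h.measure_le_mul_ediam_rpow hC.le hs (ne_top_of_le_ne_top ENNReal.one_ne_top hB))
  have hnull : μH[s] A = 0 := by
    simpa only [Real.coe_toNNReal s hs.le] using hausdorffMeasure_of_dimH_lt (d := s.toNNReal) hA
  simpa using (hle A).trans_eq hnull

lemma IsFrostman.le_finrank_vectorSpan {μ : Measure V} (h : IsFrostman μ C s) (hC : 0 < C)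
    (hs : 0 < s) {S : Set V} (hS : μ S ≠ 0) : s ≤ Module.finrank ℝ (vectorSpan ℝ S) := by
  by_contra! hlt
  obtain ⟨x₀, hx₀⟩ := nonempty_of_measure_ne_zero hS
  have hiso : Isometry fun v : vectorSpan ℝ S ↦ (v : V) + x₀ :=
    (IsometryEquiv.addRight x₀).isometry.comp isometry_subtype_coe
  have hsub : S ⊆ range fun v : vectorSpan ℝ S ↦ (v : V) + x₀ := fun x hx ↦
    ⟨⟨x - x₀, vsub_mem_vectorSpan ℝ hx hx₀⟩, sub_add_cancel x x₀⟩
  refine hS (measure_mono_null hsub (h.measure_eq_zero_of_dimH_lt hC hs ?_))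
  rw [← image_univ, hiso.dimH_image, Real.dimH_univ_eq_finrank, ← ENNReal.ofReal_natCast]
  exact (ENNReal.ofReal_lt_ofReal_iff hs).2 hlt

end FrostmanRank

lemma exists_affineIndependent_fin {K V : Type*} [DivisionRing K] [AddCommGroup V] [Module K V]
    [FiniteDimensional K V] {S : Set V} (hS : S.Nonempty) {k : ℕ}
    (hk : k ≤ Module.finrank K (vectorSpan K S)) :
    ∃ x : Fin (k + 1) → V, AffineIndependent K x ∧ ∀ i, x i ∈ S := by
  obtain ⟨t, hts, hspan, hind⟩ := exists_affineIndependent K V S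
  have hfin : Finite t := finite_set_of_fin_dim_affineIndependent K hind
  have : Fintype t := Fintype.ofFinite t
  have : Nonempty t := by
    rw [nonempty_coe_sort, ← affineSpan_nonempty K, hspan, affineSpan_nonempty]
    exact hS
  have hcard := hind.finrank_vectorSpan_add_one
  rw [Subtype.range_coe, ← direction_affineSpan, hspan, direction_affineSpan] at hcard
  obtain ⟨e⟩ : Nonempty (Fin (k + 1) ↪ t) :=
    Function.Embedding.nonempty_of_card_le (by rw [Fintype.card_fin, ← hcard]; gcongr)
  exact ⟨fun i ↦ e i, hind.comp_embedding e, fun i ↦ hts (e i).2⟩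

section Nondegenerate

variable {d k : ℕ}

lemma nondeg_of_affineIndependent {x : Fin (k + 1) → Pt d} (hx : AffineIndependent ℝ x) :
    Nondeg d k x :=
  ((affineIndependent_iff_linearIndependent_vsub ℝ x 0).1 hx).comp
    (fun i : Fin k ↦ ⟨i.succ, i.succ_ne_zero⟩) fun _ _ hij ↦
      Fin.succ_injective k (Subtype.mk.inj hij)

lemma isOpen_nondeg : IsOpen {x : Fin (k + 1) → Pt d | Nondeg d k x} :=
  (isOpen_setOfPred_linearIndependent (𝕜 := ℝ) (E := Pt d)).preimage
    (f := fun (x : Fin (k + 1) → Pt d) (i : Fin k) ↦ x i.succ - x 0) (by fun_prop)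

lemma IsFrostman.exists_isCompact_nondeg {μ : Measure (Pt d)} [NeZero μ] {C s : ℝ}
    (h : IsFrostman μ C s) (hC : 0 < C) (hs : 0 < s) (hks : k < s + 1) {E : Set (Pt d)}
    (hE : IsCompact E) (hμE : μ Eᶜ = 0) :
    ∃ K : Fin (k + 1) → Set (Pt d), (∀ i, IsCompact (K i)) ∧ (∀ i, K i ⊆ E) ∧
      (∀ i, μ (K i) ≠ 0) ∧ ∀ x : Fin (k + 1) → Pt d, (∀ i, x i ∈ K i) → Nondeg d k x := by
  have hsupp : μ μ.support ≠ 0 := by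
    rw [← univ_inter μ.support, measure_inter_conull Measure.measure_compl_support]
    exact Measure.measure_univ_ne_zero.2 (NeZero.ne μ)
  obtain ⟨x, hx, hxs⟩ : ∃ x : Fin (k + 1) → Pt d, Nondeg d k x ∧ ∀ i, x i ∈ μ.support := by
    have hrank : k < Module.finrank ℝ (vectorSpan ℝ μ.support) + 1 := by
      exact_mod_cast hks.trans_le (add_le_add_left (h.le_finrank_vectorSpan hC hs hsupp) 1)
    obtain ⟨x, hx, hxs⟩ := exists_affineIndependent_fin
      (nonempty_of_measure_ne_zero hsupp) (Nat.lt_succ_iff.1 hrank)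
    exact ⟨x, nondeg_of_affineIndependent hx, hxs⟩
  obtain ⟨ε, hε, hball⟩ := Metric.nhds_basis_closedBall.mem_iff.1 (isOpen_nondeg.mem_nhds hx)
  refine ⟨fun i ↦ closedBall (x i) ε ∩ E, fun i ↦ hE.inter_left isClosed_closedBall,
    fun i ↦ inter_subset_right, fun i ↦ ?_, fun y hy ↦
      hball ((dist_pi_le_iff hε.le).2 fun i ↦ (hy i).1)⟩
  rw [measure_inter_conull hμE]
  exact ((Measure.mem_support_iff_forall _).1 (hxs i) _ (closedBall_mem_nhds _ hε)).ne'

end Nondegenerate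

/-! ### Averages over rigid motions -/

lemma lintegral_pi_prod_eq_prod_lintegral : ∀ {n : ℕ} {X : Fin n → Type*}
    [∀ i, MeasurableSpace (X i)] (μ : ∀ i, Measure (X i)) [∀ i, SigmaFinite (μ i)]
    {f : ∀ i, X i → ℝ≥0∞}, (∀ i, Measurable (f i)) →
      ∫⁻ w, ∏ i, f i (w i) ∂Measure.pi μ = ∏ i, ∫⁻ x, f i x ∂μ i
  | 0, _, _, μ, _, _, _ => by simp [Measure.pi_empty_univ]
  | n + 1, X, _, μ, _, f, hf => by
    have hmeas : Measurable fun w : ∀ j : Fin n, X j.succ ↦ ∏ j, f j.succ (w j) :=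
      Finset.measurable_prod _ fun j _ ↦ (hf j.succ).comp (measurable_pi_apply j)
    calc ∫⁻ w, ∏ i, f i (w i) ∂Measure.pi μ
        = ∫⁻ p : X 0 × ∀ j : Fin n, X j.succ, f 0 p.1 * ∏ j, f j.succ (p.2 j)
            ∂(μ 0).prod (Measure.pi fun j ↦ μ j.succ) := by
          simp_rw [Fin.prod_univ_succ]
          exact (measurePreserving_piFinSuccAbove μ 0).lintegral_comp
            (((hf 0).comp measurable_fst).mul (hmeas.comp measurable_snd))
      _ = ∏ i, ∫⁻ x, f i x ∂μ i := by
          rw [lintegral_prod_mul (hf 0).aemeasurable hmeas.aemeasurable,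
            lintegral_pi_prod_eq_prod_lintegral _ fun j ↦ hf j.succ, Fin.prod_univ_succ]

section RigidMotion

variable {V : Type*} [NormedAddCommGroup V] [InnerProductSpace ℝ V] [FiniteDimensional ℝ V]

/-- The rigid motion `x ↦ g x + z` of `V` given by the pair `p = (g, z)`. -/
def rigidMotion (p : OrthogonalGroup V × V) : V ≃ᵢ V :=
  (rot p.1).toIsometryEquiv.trans (IsometryEquiv.addRight p.2)

lemma rigidMotion_apply (p : OrthogonalGroup V × V) (x : V) :
    rigidMotion p x = rot p.1 x + p.2 := rfl

lemma rigidMotion_symm_apply (p : OrthogonalGroup V × V) (x : V) :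
    (rigidMotion p).symm x = (rot p.1).symm (x - p.2) := by
  rw [sub_eq_add_neg]; rfl

lemma continuous_rigidMotion_apply :
    Continuous fun q : (OrthogonalGroup V × V) × V ↦ rigidMotion q.1 q.2 :=
  (continuous_rot_apply.comp (continuous_fst.fst.prodMk continuous_snd)).add continuous_fst.snd

lemma continuous_rigidMotion_symm_apply :
    Continuous fun q : (OrthogonalGroup V × V) × V ↦ (rigidMotion q.1).symm q.2 := by
  simp_rw [rigidMotion_symm_apply]
  exact continuous_rot_symm_apply.comp
    (continuous_fst.fst.prodMk (continuous_snd.sub continuous_fst.snd))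

/-- The parameters of the rigid motion `(rigidMotion p)⁻¹ ∘ rigidMotion q`. -/
def relativeMotion (p q : OrthogonalGroup V × V) : OrthogonalGroup V × V :=
  (p.1⁻¹ * q.1, (rot p.1).symm (q.2 - p.2))

lemma rigidMotion_relativeMotion_apply (p q : OrthogonalGroup V × V) (x : V) :
    rigidMotion (relativeMotion p q) x = (rigidMotion p).symm (rigidMotion q x) := by
  rw [rigidMotion_symm_apply, rigidMotion_apply, rigidMotion_apply, relativeMotion, rot, map_mul,
    add_sub_assoc, map_add, ← rot_inv p.1]
  rfl

variable [MeasurableSpace V] [BorelSpace V]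

lemma measurePreserving_rigidMotion (p : OrthogonalGroup V × V) :
    MeasurePreserving (rigidMotion p) :=
  (measurePreserving_add_right volume p.2).comp (rot p.1).measurePreserving

lemma measurePreserving_relativeMotion (p : OrthogonalGroup V × V) :
    MeasurePreserving (relativeMotion p) ((rotMeasure V).prod volume)
      ((rotMeasure V).prod volume) :=
  (measurePreserving_mul_left (rotMeasure V) p.1⁻¹).prod
    ((rot p.1).symm.measurePreserving.comp (measurePreserving_sub_right volume p.2))

/-- The correlation of `F` with its image under a rigid motion. -/
def autocorrelation (F : V → ℝ≥0∞) (p : OrthogonalGroup V × V) : ℝ≥0∞ :=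
  ∫⁻ x, F (rigidMotion p x) * F x

lemma measurable_autocorrelation {F : V → ℝ≥0∞} (hF : Measurable F) :
    Measurable (autocorrelation F) :=
  Measurable.lintegral_prod_right' (f := fun q : (OrthogonalGroup V × V) × V ↦
      F (rigidMotion q.1 q.2) * F q.2)
    ((hF.comp continuous_rigidMotion_apply.measurable).mul (hF.comp measurable_snd))

lemma lintegral_mul_comp_rigidMotion_symm {F : V → ℝ≥0∞} (hF : Measurable F)
    (p q : OrthogonalGroup V × V) :
    ∫⁻ x, F ((rigidMotion p).symm x) * F ((rigidMotion q).symm x) =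
      autocorrelation F (relativeMotion p q) := by
  have hchange := (measurePreserving_rigidMotion q).lintegral_comp
    ((hF.comp (rigidMotion p).symm.continuous.measurable).mul
      (hF.comp (rigidMotion q).symm.continuous.measurable))
  simp only [Pi.mul_apply, Function.comp_apply, IsometryEquiv.symm_apply_apply] at hchange
  simp only [autocorrelation, rigidMotion_relativeMotion_apply, hchange]

/-- The average over rigid motions, weighted by `ν`, of the images of the tensor product of
the `f i`. -/
def averagedProduct {n : ℕ} (ν : Measure (OrthogonalGroup V × V)) (f : Fin n → V → ℝ≥0∞)
    (w : Fin n → V) : ℝ≥0∞ :=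
  ∫⁻ p, ∏ i, f i ((rigidMotion p).symm (w i)) ∂ν

variable {n : ℕ} {ν : Measure (OrthogonalGroup V × V)} {f : Fin n → V → ℝ≥0∞}

lemma measurable_prod_rigidMotion_symm (hf : ∀ i, Measurable (f i)) :
    Measurable fun q : (Fin n → V) × (OrthogonalGroup V × V) ↦
      ∏ i, f i ((rigidMotion q.2).symm (q.1 i)) := by
  have hfactor (i : Fin n) : Measurable fun q : (Fin n → V) × (OrthogonalGroup V × V) ↦
      (rigidMotion q.2).symm (q.1 i) :=
    continuous_rigidMotion_symm_apply.measurable.comp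
      (f := fun q : (Fin n → V) × (OrthogonalGroup V × V) ↦ (q.2, q.1 i))
      (measurable_snd.prodMk (measurable_fst.eval (a := i)))
  exact Finset.measurable_prod _ fun i _ ↦ (hf i).comp (hfactor i)

lemma measurable_averagedProduct [SFinite ν] (hf : ∀ i, Measurable (f i)) :
    Measurable (averagedProduct ν f) :=
  (measurable_prod_rigidMotion_symm hf).lintegral_prod_right'

lemma lintegral_averagedProduct [SFinite ν] (hf : ∀ i, Measurable (f i)) :
    ∫⁻ w, averagedProduct ν f w = (∏ i, ∫⁻ x, f i x) * ν univ := by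
  have hinner (p : OrthogonalGroup V × V) :
      ∫⁻ w : Fin n → V, ∏ i, f i ((rigidMotion p).symm (w i)) = ∏ i, ∫⁻ x, f i x := by
    have hsymm : MeasurePreserving (rigidMotion p).symm :=
      (measurePreserving_rigidMotion p).symm (rigidMotion p).toHomeomorph.toMeasurableEquiv
    rw [volume_pi, lintegral_pi_prod_eq_prod_lintegral (fun _ ↦ volume)
      (f := fun i x ↦ f i ((rigidMotion p).symm x)) fun i ↦ (hf i).comp hsymm.measurable]
    exact Finset.prod_congr rfl fun i _ ↦ hsymm.lintegral_comp (hf i)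
  simp_rw [averagedProduct]
  rw [lintegral_lintegral_swap (measurable_prod_rigidMotion_symm hf).aemeasurable]
  simp_rw [hinner, lintegral_const]

lemma lintegral_averagedProduct_sq_le [SFinite ν] (hf : ∀ i, Measurable (f i)) {F : V → ℝ≥0∞}
    (hF : Measurable F) (hfF : ∀ i, f i ≤ F) :
    ∫⁻ w, averagedProduct ν f w ^ 2 ≤
      ∫⁻ p, ∫⁻ q, autocorrelation F (relativeMotion p q) ^ n ∂ν ∂ν := by
  have hmeas (w : Fin n → V) :
      Measurable fun p : OrthogonalGroup V × V ↦ ∏ i, f i ((rigidMotion p).symm (w i)) :=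
    (measurable_prod_rigidMotion_symm hf).comp (f := fun p ↦ (w, p)) measurable_prodMk_left
  have hsq (w : Fin n → V) : averagedProduct ν f w ^ 2 = ∫⁻ r : (_ × _) × (_ × _),
      (∏ i, f i ((rigidMotion r.1).symm (w i))) * ∏ i, f i ((rigidMotion r.2).symm (w i))
        ∂ν.prod ν := by
    rw [lintegral_prod_mul (hmeas w).aemeasurable (hmeas w).aemeasurable, averagedProduct, sq]
  have hswap : AEMeasurable (Function.uncurry fun (w : Fin n → V) r ↦
      (∏ i, f i ((rigidMotion r.1).symm (w i))) * ∏ i, f i ((rigidMotion r.2).symm (w i)))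
      (volume.prod (ν.prod ν)) := by
    have hprod := measurable_prod_rigidMotion_symm hf
    exact ((hprod.comp (f := fun q : _ × (_ × _) ↦ (q.1, q.2.1)) (by fun_prop)).mul
      (hprod.comp (f := fun q : _ × (_ × _) ↦ (q.1, q.2.2)) (by fun_prop))).aemeasurable
  simp_rw [hsq]
  rw [lintegral_lintegral_swap hswap]
  refine (lintegral_mono fun r ↦ ?_).trans
    (lintegral_prod_le fun r ↦ autocorrelation F (relativeMotion r.1 r.2) ^ n)
  calc ∫⁻ w : Fin n → V,
        (∏ i, f i ((rigidMotion r.1).symm (w i))) * ∏ i, f i ((rigidMotion r.2).symm (w i))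
      = ∏ i, ∫⁻ x, f i ((rigidMotion r.1).symm x) * f i ((rigidMotion r.2).symm x) := by
        simp_rw [← Finset.prod_mul_distrib]
        exact lintegral_pi_prod_eq_prod_lintegral (fun _ ↦ volume) fun i ↦
          ((hf i).comp (rigidMotion r.1).symm.continuous.measurable).mul
            ((hf i).comp (rigidMotion r.2).symm.continuous.measurable)
    _ ≤ ∏ _i : Fin n, ∫⁻ x, F ((rigidMotion r.1).symm x) * F ((rigidMotion r.2).symm x) :=
        Finset.prod_le_prod' fun i _ ↦ lintegral_mono fun x ↦ mul_le_mul' (hfF i _) (hfF i _)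
    _ = autocorrelation F (relativeMotion r.1 r.2) ^ n := by
        rw [Finset.prod_const, Finset.card_univ, Fintype.card_fin,
          lintegral_mul_comp_rigidMotion_symm hF]

lemma setLIntegral_autocorrelation_relativeMotion_le {F : V → ℝ≥0∞} (hF : Measurable F)
    (Ω : Set (OrthogonalGroup V × V)) :
    ∫⁻ p in Ω, ∫⁻ q in Ω, autocorrelation F (relativeMotion p q) ^ n ∂(rotMeasure V).prod volume
        ∂(rotMeasure V).prod volume ≤
      (∫⁻ p, autocorrelation F p ^ n ∂(rotMeasure V).prod volume) *
        (rotMeasure V).prod volume Ω := by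
  rw [← setLIntegral_const]
  refine lintegral_mono fun p ↦ (setLIntegral_le_lintegral _ _).trans_eq ?_
  exact (measurePreserving_relativeMotion p).lintegral_comp
    ((measurable_autocorrelation hF).pow_const n)

lemma prod_lintegral_mul_sq_le (hf : ∀ i, Measurable (f i)) {F : V → ℝ≥0∞} (hF : Measurable F)
    (hfF : ∀ i, f i ≤ F) {Ω : Set (OrthogonalGroup V × V)} (hΩ : MeasurableSet Ω)
    {O : Set (Fin n → V)} (hO : MeasurableSet O)
    (hfO : ∀ p ∈ Ω, ∀ w, (∀ i, f i ((rigidMotion p).symm (w i)) ≠ 0) → w ∈ O) :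
    ((∏ i, ∫⁻ x, f i x) * (rotMeasure V).prod volume Ω) ^ 2 ≤
      volume O * ((∫⁻ p, autocorrelation F p ^ n ∂(rotMeasure V).prod volume) *
        (rotMeasure V).prod volume Ω) := by
  set ν := ((rotMeasure V).prod volume).restrict Ω with hν
  have hsupp : ∀ w, w ∉ O → averagedProduct ν f w = 0 := fun w hw ↦ by
    refine (lintegral_congr_ae ((ae_restrict_mem hΩ).mono fun p hp ↦ ?_)).trans lintegral_zero
    obtain ⟨i, hi⟩ := not_forall_not.1 fun h ↦ hw (hfO p hp w h)
    exact Finset.prod_eq_zero (Finset.mem_univ i) hi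
  calc ((∏ i, ∫⁻ x, f i x) * (rotMeasure V).prod volume Ω) ^ 2
      = (∫⁻ w, O.indicator 1 w * averagedProduct ν f w) ^ 2 := by
        rw [← Measure.restrict_apply_univ, ← lintegral_averagedProduct hf]
        congr 2 with w
        by_cases hw : w ∈ O <;> simp [← hν, hw, hsupp]
    _ ≤ (∫⁻ w, O.indicator 1 w ^ 2) * ∫⁻ w, averagedProduct ν f w ^ 2 :=
        lintegral_mul_sq_le (measurable_one.indicator hO).aemeasurable
          (measurable_averagedProduct hf).aemeasurable
    _ ≤ volume O * ((∫⁻ p, autocorrelation F p ^ n ∂(rotMeasure V).prod volume) *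
          (rotMeasure V).prod volume Ω) := by
        refine mul_le_mul' (le_of_eq ?_) ((lintegral_averagedProduct_sq_le hf hF hfF).trans
          (setLIntegral_autocorrelation_relativeMotion_le hF Ω))
        rw [← lintegral_indicator_one hO]
        congr 1 with w
        by_cases hw : w ∈ O <;> simp [hw]

end RigidMotion

section BallDensity

open Module (finrank)
open scoped Real

variable {V : Type*} [NormedAddCommGroup V] [InnerProductSpace ℝ V]

lemma one_le_exp_mul_gaussianKernel {ε : ℝ} (hε : 0 < ε) {v : V} (hv : ‖v‖ ≤ 2 * ε) :
    1 ≤ Real.exp (4 * π) * ε ^ finrank ℝ V * gaussianKernel ε⁻¹ v := by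
  have hεn : ε ^ finrank ℝ V * ε⁻¹ ^ finrank ℝ V = 1 := by
    rw [← mul_pow, mul_inv_cancel₀ hε.ne', one_pow]
  calc 1 ≤ Real.exp (4 * π + -(π * ε⁻¹ ^ 2) * ‖v‖ ^ 2) := by
        have hle : ε⁻¹ * ‖v‖ ≤ 2 := by rwa [inv_mul_le_iff₀ hε, mul_comm ε]
        have hsq : (ε⁻¹ * ‖v‖) ^ 2 ≤ 2 ^ 2 := pow_le_pow_left₀ (by positivity) hle 2
        rw [Real.one_le_exp_iff]
        linear_combination π * hsq
    _ = Real.exp (4 * π) * ε ^ finrank ℝ V * gaussianKernel ε⁻¹ v := by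
        rw [Real.exp_add, gaussianKernel]
        linear_combination
          -(Real.exp (4 * π) * Real.exp (-(π * ε⁻¹ ^ 2) * ‖v‖ ^ 2)) * hεn

variable [FiniteDimensional ℝ V] [MeasurableSpace V] [BorelSpace V]

/-- The density of the mollification of `ρ` by the normalised indicator of the ball of
radius `ε`. -/
def ballDensity (ρ : Measure V) (ε : ℝ) (x : V) : ℝ≥0∞ :=
  (volume (closedBall (0 : V) ε))⁻¹ * ρ (closedBall x ε)

lemma measurable_ballDensity (ρ : Measure V) [SFinite ρ] (ε : ℝ) : Measurable (ballDensity ρ ε) :=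
  (measurable_measure_prodMk_left (ν := ρ)
    (isClosed_le (continuous_snd.dist continuous_fst) continuous_const).measurableSet).const_mul _

lemma lintegral_ballDensity (ρ : Measure V) [SFinite ρ] {ε : ℝ} (hε : 0 < ε) :
    ∫⁻ x, ballDensity ρ ε x = ρ univ := by
  have hS : MeasurableSet {p : V × V | dist p.2 p.1 ≤ ε} :=
    (isClosed_le (continuous_snd.dist continuous_fst) continuous_const).measurableSet
  have hball (y : V) : (fun x ↦ (x, y)) ⁻¹' {p : V × V | dist p.2 p.1 ≤ ε} = closedBall y ε :=
    ext fun x ↦ by rw [mem_preimage, mem_ofPred, dist_comm, mem_closedBall]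
  calc ∫⁻ x, ballDensity ρ ε x
      = (volume (closedBall (0 : V) ε))⁻¹ * ∫⁻ x, ρ (closedBall x ε) :=
        lintegral_const_mul _ (measurable_measure_prodMk_left hS)
    _ = (volume (closedBall (0 : V) ε))⁻¹ * ∫⁻ y, volume (closedBall y ε) ∂ρ := by
        congr 1
        refine (Measure.prod_apply (μ := volume) hS).symm.trans ?_
        simp_rw [Measure.prod_apply_symm hS, hball]
    _ = ρ univ := by
        simp_rw [Measure.addHaar_closedBall_center, lintegral_const]
        rw [← mul_assoc, ENNReal.inv_mul_cancel (measure_closedBall_pos _ _ hε).ne'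
          measure_closedBall_lt_top.ne, one_mul]

lemma volume_closedBall_inter_le_gaussianKernel {ε : ℝ} (hε : 0 < ε) (p : OrthogonalGroup V × V)
    (x y : V) :
    volume {v | x ∈ closedBall v ε ∧ y ∈ closedBall (rigidMotion p v) ε} ≤
      volume (closedBall (0 : V) ε) * ENNReal.ofReal (Real.exp (4 * π) * ε ^ finrank ℝ V) *
        ENNReal.ofReal (gaussianKernel ε⁻¹ (rot p.1 x + p.2 - y)) := by
  obtain hempty | ⟨v, hxv, hyv⟩ :=
    {v | x ∈ closedBall v ε ∧ y ∈ closedBall (rigidMotion p v) ε}.eq_empty_or_nonempty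
  · rw [hempty, measure_empty]
    exact zero_le
  have hnorm : ‖rot p.1 x + p.2 - y‖ ≤ 2 * ε := by
    rw [← rigidMotion_apply, ← dist_eq_norm, two_mul]
    refine (dist_triangle_right _ _ (rigidMotion p v)).trans (add_le_add ?_ hyv)
    rwa [(rigidMotion p).dist_eq]
  rw [mul_assoc, ← ENNReal.ofReal_mul (by positivity)]
  calc volume {v | x ∈ closedBall v ε ∧ y ∈ closedBall (rigidMotion p v) ε}
      ≤ volume (closedBall x ε) := measure_mono fun v hv ↦ mem_closedBall_comm.1 hv.1
    _ = volume (closedBall (0 : V) ε) * 1 := by rw [Measure.addHaar_closedBall_center, mul_one]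
    _ ≤ _ := by
        gcongr
        exact ENNReal.one_le_ofReal.2 (one_le_exp_mul_gaussianKernel hε hnorm)

lemma lintegral_measure_closedBall_mul_le {μ : Measure V} [SFinite μ] {ε : ℝ} (hε : 0 < ε)
    (p : OrthogonalGroup V × V) :
    ∫⁻ v, μ (closedBall (rigidMotion p v) ε) * μ (closedBall v ε) ≤
      volume (closedBall (0 : V) ε) * ENNReal.ofReal (Real.exp (4 * π) * ε ^ finrank ℝ V) *
        smoothedCorrelation μ ε⁻¹ p := by
  let S : Set (V × (V × V)) :=
    {q | q.2.1 ∈ closedBall q.1 ε ∧ q.2.2 ∈ closedBall (rigidMotion p q.1) ε}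
  have hS : MeasurableSet S :=
    ((isClosed_le (continuous_snd.fst.dist continuous_fst) continuous_const).inter
      (isClosed_le (continuous_snd.snd.dist ((rigidMotion p).continuous.comp continuous_fst))
        continuous_const)).measurableSet
  calc ∫⁻ v, μ (closedBall (rigidMotion p v) ε) * μ (closedBall v ε)
      = ∫⁻ v, μ.prod μ (Prod.mk v ⁻¹' S) := by
        refine lintegral_congr fun v ↦ ?_
        rw [mul_comm, ← Measure.prod_prod]
        rfl
    _ = ∫⁻ x, volume ((fun v ↦ (v, x)) ⁻¹' S) ∂μ.prod μ := by
        rw [← Measure.prod_apply hS, Measure.prod_apply_symm hS]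
    _ ≤ ∫⁻ x, volume (closedBall (0 : V) ε) * ENNReal.ofReal (Real.exp (4 * π) * ε ^ finrank ℝ V) *
          ENNReal.ofReal (gaussianKernel ε⁻¹ (rot p.1 x.1 + p.2 - x.2)) ∂μ.prod μ :=
        lintegral_mono fun x ↦ volume_closedBall_inter_le_gaussianKernel hε p x.1 x.2
    _ = _ := lintegral_const_mul' _ _
        (ENNReal.mul_ne_top measure_closedBall_lt_top.ne ENNReal.ofReal_ne_top)

lemma autocorrelation_ballDensity_le {μ : Measure V} [SFinite μ] {ε : ℝ} (hε : 0 < ε)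
    (p : OrthogonalGroup V × V) :
    autocorrelation (ballDensity μ ε) p ≤
      ENNReal.ofReal (Real.exp (4 * π)) * (volume (closedBall (0 : V) 1))⁻¹ *
        smoothedCorrelation μ ε⁻¹ p := by
  set b := volume (closedBall (0 : V) ε) with hb
  have hb0 : b ≠ 0 := (measure_closedBall_pos _ _ hε).ne'
  have hbtop : b ≠ ∞ := measure_closedBall_lt_top.ne
  have hεn : ENNReal.ofReal (ε ^ finrank ℝ V) ≠ 0 := (ENNReal.ofReal_pos.2 (by positivity)).ne'
  calc autocorrelation (ballDensity μ ε) p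
      = b⁻¹ * b⁻¹ * ∫⁻ v, μ (closedBall (rigidMotion p v) ε) * μ (closedBall v ε) := by
        rw [← lintegral_const_mul' _ _ (ENNReal.mul_ne_top (ENNReal.inv_ne_top.2 hb0)
          (ENNReal.inv_ne_top.2 hb0))]
        exact lintegral_congr fun v ↦ mul_mul_mul_comm _ _ _ _
    _ ≤ b⁻¹ * b⁻¹ * (b * ENNReal.ofReal (Real.exp (4 * π) * ε ^ finrank ℝ V) *
          smoothedCorrelation μ ε⁻¹ p) := by
        gcongr
        exact lintegral_measure_closedBall_mul_le hε p
    _ = b⁻¹ * b * (ENNReal.ofReal (Real.exp (4 * π)) *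
          (b⁻¹ * ENNReal.ofReal (ε ^ finrank ℝ V)) * smoothedCorrelation μ ε⁻¹ p) := by
        rw [ENNReal.ofReal_mul (by positivity)]; ring
    _ = _ := by
        rw [ENNReal.inv_mul_cancel hb0 hbtop, one_mul, hb, Measure.addHaar_closedBall' _ _ hε.le,
          ENNReal.mul_inv (.inl hεn) (.inl ENNReal.ofReal_ne_top), mul_right_comm _⁻¹,
          ENNReal.inv_mul_cancel hεn ENNReal.ofReal_ne_top, one_mul]

end BallDensity

section MovedTuples

open scoped Real

variable {V : Type*} [NormedAddCommGroup V] [InnerProductSpace ℝ V] [FiniteDimensional ℝ V] {n : ℕ}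

/-- The image of a tuple of points under a rigid motion. -/
def moveTuple (q : (OrthogonalGroup V × V) × (Fin n → V)) : Fin n → V :=
  fun i ↦ rigidMotion q.1 (q.2 i)

lemma continuous_moveTuple :
    Continuous (moveTuple : (OrthogonalGroup V × V) × (Fin n → V) → Fin n → V) :=
  continuous_pi fun i ↦ continuous_rigidMotion_apply.comp
    (f := fun q : (OrthogonalGroup V × V) × (Fin n → V) ↦ (q.1, q.2 i)) (by fun_prop)

variable [MeasurableSpace V] [BorelSpace V] {μ : Measure V} [SFinite μ]
  {K : Fin n → Set V} {Ω : Set (OrthogonalGroup V × V)}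

lemma prod_measure_mul_sq_le_volume_cthickening (hΩ : MeasurableSet Ω) {ε : ℝ}
    (hε : 0 < ε) :
    ((∏ i, μ (K i)) * (rotMeasure V).prod volume Ω) ^ 2 ≤
      volume (cthickening ε (moveTuple '' (Ω ×ˢ univ.pi K))) *
        ((∫⁻ p, autocorrelation (ballDensity μ ε) p ^ n ∂(rotMeasure V).prod volume) *
          (rotMeasure V).prod volume Ω) := by
  have hmass (i : Fin n) : ∫⁻ x, ballDensity (μ.restrict (K i)) ε x = μ (K i) := by
    rw [lintegral_ballDensity _ hε, Measure.restrict_apply_univ]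
  simp_rw [← hmass]
  refine prod_lintegral_mul_sq_le (fun i ↦ measurable_ballDensity _ ε) (measurable_ballDensity μ ε)
    (fun i x ↦ mul_le_mul_right (Measure.restrict_le_self _) _) hΩ
    isClosed_cthickening.measurableSet fun p hp w hw ↦ ?_
  have hnear (i : Fin n) : ∃ x ∈ K i, dist x ((rigidMotion p).symm (w i)) ≤ ε := by
    have hne := right_ne_zero_of_mul (hw i)
    rw [Measure.restrict_apply isClosed_closedBall.measurableSet] at hne
    obtain ⟨x, hx, hxK⟩ := nonempty_of_measure_ne_zero hne
    exact ⟨x, hxK, hx⟩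
  choose x hxK hx using hnear
  refine mem_cthickening_of_dist_le w (moveTuple (p, x)) ε _
    (mem_image_of_mem _ ⟨hp, fun i _ ↦ hxK i⟩) ((dist_pi_le_iff hε.le).2 fun i ↦ ?_)
  rw [moveTuple, ← (rigidMotion p).symm.dist_eq, IsometryEquiv.symm_apply_apply, dist_comm]
  exact hx i

lemma volume_moveTuple_image_ne_zero {J : ℝ≥0∞} (hJ : J ≠ ∞)
    (hμJ : ∀ R > 0, ∫⁻ p, smoothedCorrelation μ R p ^ n ∂(rotMeasure V).prod volume ≤ J)
    (hK : ∀ i, IsCompact (K i)) (hμK : ∀ i, μ (K i) ≠ 0) (hΩ : IsCompact Ω)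
    (hΩ0 : (rotMeasure V).prod volume Ω ≠ 0) :
    volume (moveTuple '' (Ω ×ˢ univ.pi K)) ≠ 0 := by
  set c := ENNReal.ofReal (Real.exp (4 * π)) * (volume (closedBall (0 : V) 1))⁻¹
  set m := (rotMeasure V).prod volume Ω
  set S := moveTuple '' (Ω ×ˢ univ.pi K)
  have hc : c ^ n ≠ ∞ := ENNReal.pow_ne_top (ENNReal.mul_ne_top ENNReal.ofReal_ne_top
    (ENNReal.inv_ne_top.2 (measure_closedBall_pos _ _ one_pos).ne'))
  have hbound : c ^ n * J * m ≠ ∞ :=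
    ENNReal.mul_ne_top (ENNReal.mul_ne_top hc hJ) hΩ.measure_lt_top.ne
  have hS : IsCompact S := (hΩ.prod (isCompact_univ_pi hK)).image continuous_moveTuple
  have hle : ∀ ε > 0, ((∏ i, μ (K i)) * m) ^ 2 ≤ volume (cthickening ε S) * (c ^ n * J * m) := by
    intro ε hε
    refine (prod_measure_mul_sq_le_volume_cthickening hΩ.measurableSet hε).trans ?_
    gcongr
    calc ∫⁻ p, autocorrelation (ballDensity μ ε) p ^ n ∂(rotMeasure V).prod volume
        ≤ ∫⁻ p, c ^ n * smoothedCorrelation μ ε⁻¹ p ^ n ∂(rotMeasure V).prod volume := by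
          gcongr with p
          rw [← mul_pow]
          exact pow_le_pow_left' (autocorrelation_ballDensity_le hε p) n
      _ ≤ c ^ n * J := by
          rw [lintegral_const_mul' _ _ hc]
          exact mul_le_mul_right (hμJ ε⁻¹ (inv_pos.2 hε)) _
  have hlim : Filter.Tendsto (fun ε ↦ volume (cthickening ε S) * (c ^ n * J * m)) (𝓝[>] 0)
      (𝓝 (volume S * (c ^ n * J * m))) :=
    (ENNReal.Tendsto.mul_const (tendsto_measure_cthickening_of_isCompact hS)
      (.inr hbound)).mono_left nhdsWithin_le_nhds
  have hpos : ((∏ i, μ (K i)) * m) ^ 2 ≠ 0 :=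
    pow_ne_zero 2 (mul_ne_zero (Finset.prod_ne_zero_iff.2 fun i _ ↦ hμK i) hΩ0)
  intro h0
  rw [h0, zero_mul] at hlim
  exact hpos (nonpos_iff_eq_zero.1
    (ge_of_tendsto hlim (eventually_mem_nhdsWithin.mono hle)))

end MovedTuples

lemma memLp_id_of_isBounded {V : Type*} [NormedAddCommGroup V] [MeasurableSpace V]
    [BorelSpace V] [SecondCountableTopology V] {μ : Measure V} [IsFiniteMeasure μ] {E : Set V}
    (hE : Bornology.IsBounded E) (hμ : μ Eᶜ = 0) (q : ℝ≥0∞) : MemLp id q μ := by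
  obtain ⟨M, hM⟩ := hE.exists_norm_le
  have hE_ae : ∀ᵐ x ∂μ, x ∈ E := hμ
  exact .of_bound measurable_id.aestronglyMeasurable M (hE_ae.mono hM)

lemma le_finrank_of_ofReal_lt_dimH {V : Type*} [NormedAddCommGroup V] [NormedSpace ℝ V]
    [FiniteDimensional ℝ V] {E : Set V} {s : ℝ} (h : ENNReal.ofReal s < dimH E) :
    s ≤ Module.finrank ℝ V := by
  have hle : dimH E ≤ Module.finrank ℝ V :=
    (dimH_mono (subset_univ E)).trans_eq (Real.dimH_univ_eq_finrank V)
  rw [← ENNReal.ofReal_natCast] at hle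
  exact (ENNReal.ofReal_lt_ofReal_iff'.1 (h.trans_le hle)).1.le

section Configurations

variable {d k : ℕ}

lemma nondeg_moveTuple {x : Fin (k + 1) → Pt d} (hx : Nondeg d k x)
    (p : OrthogonalGroup (Pt d) × Pt d) : Nondeg d k (moveTuple (p, x)) := by
  have hlin := hx.map' (rot p.1).toLinearEquiv.toLinearMap (LinearEquiv.ker _)
  have hsub : (fun i : Fin k ↦ moveTuple (p, x) i.succ - moveTuple (p, x) 0) =
      (rot p.1).toLinearEquiv.toLinearMap ∘ fun i : Fin k ↦ x i.succ - x 0 :=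
    funext fun i ↦ by simp [moveTuple, rigidMotion_apply]
  rw [Nondeg, hsub]
  exact hlin

lemma simplexMap_moveTuple (p : OrthogonalGroup (Pt d) × Pt d) (x : Fin (k + 1) → Pt d) :
    simplexMap d k (moveTuple (p, x)) = simplexMap d k x :=
  funext fun _ ↦ (rigidMotion p).dist_eq _ _

lemma volume_moveTuple_image_eq_zero {E : Set (Pt d)} (hE : volume (Tconf d k E) = 0)
    {K : Fin (k + 1) → Set (Pt d)} (hKE : ∀ i, K i ⊆ E)
    (hK : ∀ x, (∀ i, x i ∈ K i) → Nondeg d k x) (Ω : Set (OrthogonalGroup (Pt d) × Pt d)) :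
    volume (moveTuple '' (Ω ×ˢ univ.pi K)) = 0 := by
  refine measure_mono_null ?_ (volume_nondeg_simplexMap_mem_eq_zero hE)
  rintro _ ⟨⟨p, x⟩, ⟨-, hx⟩, rfl⟩
  have hnondeg : Nondeg d k x := hK x fun i ↦ hx i (mem_univ i)
  refine ⟨nondeg_moveTuple hnondeg p, ?_⟩
  rw [simplexMap_moveTuple]
  exact ⟨x, ⟨fun i ↦ hKE i (hx i (mem_univ i)), hnondeg⟩, rfl⟩

lemma exists_exponent_of_lt_dimH {E : Set (Pt d)}
    (h : ((d * k + 1 : ℕ) : ℝ≥0∞) / ((k + 1 : ℕ) : ℝ≥0∞) < dimH E) :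
    ∃ s : ℝ, (d : ℝ) * k + 1 < s * (k + 1) ∧ ENNReal.ofReal s < dimH E := by
  obtain ⟨t, htl, htr⟩ := ENNReal.lt_iff_exists_nnreal_btwn.1 h
  refine ⟨t, ?_, by rwa [ENNReal.ofReal_coe_nnreal]⟩
  have hmul := (ENNReal.div_lt_iff (.inl (by simp)) (.inl (ENNReal.natCast_ne_top _))).1 htl
  exact_mod_cast hmul

end Configurations

theorem stmt2_general (d k : ℕ) (hk : 1 ≤ k) (hkd : k ≤ d) (E : Set (Pt d)) (hE : IsCompact E)
    (hdim : ((d * k + 1 : ℕ) : ℝ≥0∞) / ((k + 1 : ℕ) : ℝ≥0∞) < dimH E) :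
    0 < volume (Tconf d k E) := by
  obtain ⟨s, hs, hsE⟩ := exists_exponent_of_lt_dimH hdim
  have hk' : (1 : ℝ) ≤ k := by exact_mod_cast hk
  have hkd' : (k : ℝ) ≤ d := by exact_mod_cast hkd
  have hs_one : 1 ≤ s := by nlinarith
  have hks : k < s + 1 := by nlinarith
  have hs_pos : 0 < s := one_pos.trans_le hs_one
  have : NeZero d := ⟨by lia⟩
  obtain ⟨μ, _, hμE, C, hC, hμ⟩ := exists_isFrostman_of_lt_dimH hE hs_pos hsE
  obtain ⟨J, hJ, hμJ⟩ := hμ.exists_lintegral_smoothedCorrelation_pow_le hC.le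
    (le_finrank_of_ofReal_lt_dimH hsE) (memLp_id_of_isBounded hE.isBounded hμE 2) hk
    (by rwa [finrank_euclideanSpace_fin])
  obtain ⟨K, hKc, hKE, hμK, hK⟩ := hμ.exists_isCompact_nondeg hC hs_pos hks hE hμE
  have hΩ : (rotMeasure (Pt d)).prod volume (univ ×ˢ closedBall (0 : Pt d) 1) ≠ 0 := by
    rw [Measure.prod_prod, measure_univ, one_mul]
    exact (measure_closedBall_pos _ _ one_pos).ne'
  refine pos_iff_ne_zero.2 fun hT ↦ volume_moveTuple_image_ne_zero hJ hμJ hKc hμK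
    (isCompact_univ.prod (isCompact_closedBall 0 1)) hΩ ?_
  exact volume_moveTuple_image_eq_zero hT hKE hK _

theorem stmt2 (d k : ℕ) (hd : 2 ≤ d) (hk : 2 ≤ k) (hkd : k ≤ d)
    (E : Set (Pt d)) (hE : IsCompact E)
    (hdim : ((d * k + 1 : ℕ) : ℝ≥0∞) / ((k + 1 : ℕ) : ℝ≥0∞) < dimH E) :
    0 < volume (Tconf d k E) :=
  stmt2_general d k (one_le_two.trans hk) hkd E hE hdim
end
end

section
/- For every real number s with 0 < s < 3/2 there exists a compact set E ⊂ [0,1]² with Hausdorff dimension equal to s such that the 3-dimensional Lebesgue measure of T_2(E) is zero. Consequently the optimal exponent α_{2,2}, defined as the infimum of those α for which dim_H(E) > α implies that T_2(E) has positive 3-dimensional Lebesgue measure, satisfies α_{2,2} ≥ 3/2. -/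
/-!
For `0 < s < (k + 1) / 2` put `τ = d / s`, and let `E` be the `d`-th power of the set of reals in
`[0, 1]` whose binary digits vanish at all positions in the windows `[i!, τ * i!)`. With
`q = 2 ^ (i!)`, every point of `E` is within `O(q ^ (-τ))` of the grid of mesh `1 / q`. Covering
`E` by `O(q ^ d)` balls of that radius gives `dim E ≤ d / τ`. Conversely, each window is preceded by
so many free positions that the windows leave lower density `1 / τ` free, so reading off the free
digits maps `E` onto `[0, 1] ^ d` and is Hölder of every exponent below `1 / τ`, whence
`dim E ≥ d / τ = s`.

Distances are translation invariant, so the distance vectors of `(k + 1)`-tuples of grid points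
are already attained with first vertex `0`, and there are only `O(q ^ (d * k))` of them. Hence
`T_k(E)` is covered by that many balls of radius `O(q ^ (-τ))` in dimension `k * (k + 1) / 2`, of
total volume `O(q ^ (d * k - τ * k * (k + 1) / 2))`. The exponent is negative exactly when
`s < (k + 1) / 2`.
-/

open MeasureTheory Metric Set Topology
open scoped ENNReal

noncomputable section

open Filter
open scoped NNReal

section Digits

variable {b : ℕ}

/-- The integer written by the first `n` digits of `a` in base `b`; dividing it by `b ^ n` gives
the `n`-th truncation of `Real.ofDigits a`. -/
def digitPrefix (a : ℕ → Fin b) : ℕ → ℕ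
  | 0 => 0
  | n + 1 => b * digitPrefix a n + a n

lemma digitPrefix_lt_pow (a : ℕ → Fin b) (n : ℕ) : digitPrefix a n < b ^ n := by
  induction n with
  | zero => simp [digitPrefix]
  | succ n ih =>
    calc b * digitPrefix a n + a n < b * digitPrefix a n + b := by gcongr; exact (a n).isLt
      _ = b * (digitPrefix a n + 1) := by ring
      _ ≤ b ^ (n + 1) := by rw [pow_succ']; gcongr; exact ih

lemma ofDigits_eq_digitPrefix_add_div (a : ℕ → Fin b) (n : ℕ) :
    Real.ofDigits a = (digitPrefix a n + Real.ofDigits fun i => a (i + n)) / (b : ℝ) ^ n := by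
  have hb : (b : ℝ) ≠ 0 := Nat.cast_ne_zero.2 (Fin.pos (a 0)).ne'
  have hsum : ∑ i ∈ Finset.range n, Real.ofDigitsTerm a i = digitPrefix a n / (b : ℝ) ^ n := by
    induction n with
    | zero => simp [digitPrefix]
    | succ n ih =>
      rw [Finset.sum_range_succ, ih, Real.ofDigitsTerm, digitPrefix]
      push_cast
      field_simp
      ring
  rw [Real.ofDigits_eq_sum_add_ofDigits a n, hsum, add_div, div_eq_inv_mul (Real.ofDigits _)]

lemma abs_pow_mul_ofDigits_sub_sub_digitPrefix_sub_le (a a' : ℕ → Fin b) (n : ℕ) :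
    |(b : ℝ) ^ n * (Real.ofDigits a - Real.ofDigits a') -
      ((digitPrefix a n : ℝ) - digitPrefix a' n)| ≤ 1 := by
  have hb : (b : ℝ) ≠ 0 := Nat.cast_ne_zero.2 (Fin.pos (a 0)).ne'
  have hdiff : (b : ℝ) ^ n * (Real.ofDigits a - Real.ofDigits a') -
      ((digitPrefix a n : ℝ) - digitPrefix a' n) =
      Real.ofDigits (fun i => a (i + n)) - Real.ofDigits fun i => a' (i + n) := by
    rw [ofDigits_eq_digitPrefix_add_div a n, ofDigits_eq_digitPrefix_add_div a' n]
    field_simp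
    ring
  rw [hdiff]
  exact abs_sub_le_of_nonneg_of_le (Real.ofDigits_nonneg _) (Real.ofDigits_le_one _)
    (Real.ofDigits_nonneg _) (Real.ofDigits_le_one _)

lemma ofDigits_le_inv_pow_of_eq_zero [NeZero b] {a : ℕ → Fin b} {n : ℕ}
    (ha : ∀ i < n, a i = 0) : Real.ofDigits a ≤ ((b : ℝ) ^ n)⁻¹ := by
  have hzero : Real.ofDigits (fun _ => 0 : ℕ → Fin b) = 0 := by
    simp [Real.ofDigits, Real.ofDigitsTerm]
  simpa [hzero] using
    (le_abs_self _).trans (Real.abs_ofDigits_sub_ofDigits_le (y := fun _ => 0) ha)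

variable [NeZero b] (P : ℕ → Prop) [DecidablePred P]

/-- The digit sequence that carries the digits of `a`, in order, at the positions satisfying `P`
and `0` at all others. -/
def spreadDigits (a : ℕ → Fin b) (n : ℕ) : Fin b :=
  if P n then a (Nat.count P n) else 0

lemma continuous_spreadDigits : Continuous (spreadDigits P : (ℕ → Fin b) → ℕ → Fin b) := by
  refine continuous_pi fun n => ?_
  by_cases h : P n
  · simpa only [spreadDigits, h, if_true] using continuous_apply _
  · simpa only [spreadDigits, h, if_false] using continuous_const

lemma digitPrefix_spreadDigits_succ (a : ℕ → Fin b) (n : ℕ) :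
    digitPrefix (spreadDigits P a) (n + 1) =
      b * digitPrefix (spreadDigits P a) n + if P n then (a (Nat.count P n) : ℕ) else 0 := by
  by_cases h : P n <;> simp [digitPrefix, spreadDigits, h]

lemma digitPrefix_sub_le_digitPrefix_spreadDigits_sub (a a' : ℕ → Fin b) (n : ℕ)
    (h : digitPrefix a' (Nat.count P n) ≤ digitPrefix a (Nat.count P n)) :
    (digitPrefix a (Nat.count P n) : ℤ) - digitPrefix a' (Nat.count P n) ≤
      digitPrefix (spreadDigits P a) n - digitPrefix (spreadDigits P a') n := by
  induction n with
  | zero => simp [digitPrefix]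
  | succ n ih =>
    rw [digitPrefix_spreadDigits_succ, digitPrefix_spreadDigits_succ]
    rw [Nat.count_succ] at h ⊢
    by_cases hP : P n
    · simp only [hP, if_true, digitPrefix] at h ⊢
      have hle : digitPrefix a' (Nat.count P n) ≤ digitPrefix a (Nat.count P n) := by
        have := (a (Nat.count P n)).isLt
        by_contra! hlt
        nlinarith
      have := ih hle
      push_cast
      nlinarith
    · simp only [hP, if_false, add_zero] at h ⊢
      have hb : (1 : ℤ) ≤ b := by exact_mod_cast NeZero.one_le
      have := ih h
      have : (digitPrefix a' (Nat.count P n) : ℤ) ≤ digitPrefix a (Nat.count P n) := by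
        exact_mod_cast h
      push_cast
      nlinarith

lemma abs_digitPrefix_sub_le_abs_digitPrefix_spreadDigits_sub (a a' : ℕ → Fin b) (n : ℕ) :
    |(digitPrefix a (Nat.count P n) : ℝ) - digitPrefix a' (Nat.count P n)| ≤
      |(digitPrefix (spreadDigits P a) n : ℝ) - digitPrefix (spreadDigits P a') n| := by
  wlog h : digitPrefix a' (Nat.count P n) ≤ digitPrefix a (Nat.count P n) generalizing a a'
  · rw [abs_sub_comm, abs_sub_comm (digitPrefix (spreadDigits P a) n : ℝ)]
    exact this a' a (le_of_not_ge h)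
  rw [abs_of_nonneg (by simpa using h)]
  refine le_trans ?_ (le_abs_self _)
  exact_mod_cast digitPrefix_sub_le_digitPrefix_spreadDigits_sub P a a' n h

lemma pow_count_mul_abs_ofDigits_sub_le (a a' : ℕ → Fin b) (n : ℕ) :
    (b : ℝ) ^ Nat.count P n * |Real.ofDigits a - Real.ofDigits a'| ≤
      (b : ℝ) ^ n * |Real.ofDigits (spreadDigits P a) - Real.ofDigits (spreadDigits P a')| + 2 := by
  have hcount := abs_pow_mul_ofDigits_sub_sub_digitPrefix_sub_le a a' (Nat.count P n)
  have hspread := abs_pow_mul_ofDigits_sub_sub_digitPrefix_sub_le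
    (spreadDigits P a) (spreadDigits P a') n
  have hprefix := abs_digitPrefix_sub_le_abs_digitPrefix_spreadDigits_sub P a a' n
  rw [abs_sub_comm] at hspread
  have := (abs_sub_abs_le_abs_sub _ _).trans hcount
  have := (abs_sub_abs_le_abs_sub _ _).trans hspread
  simp only [abs_mul, abs_pow, Nat.abs_cast] at *
  linarith

end Digits

lemma le_mul_rpow_of_forall_le_inv_pow {β r K t u : ℝ} (hβ : 1 < β) (hr : 0 < r) (hK : 0 ≤ K)
    (ht₀ : 0 ≤ t) (ht₁ : t ≤ 1)
    (h : ∀ n : ℕ, t ≤ (β ^ n)⁻¹ → u ≤ K * ((β ^ n)⁻¹) ^ r) : u ≤ K * β ^ r * t ^ r := by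
  have hβ₀ : 0 < β := one_pos.trans hβ
  have hβ_inv : β⁻¹ < 1 := inv_lt_one_of_one_lt₀ hβ
  rcases ht₀.eq_or_lt with rfl | ht
  · have hlim : Tendsto (fun n : ℕ => K * ((β ^ n)⁻¹) ^ r) atTop (𝓝 (K * 0 ^ r)) := by
      refine ((Real.continuousAt_rpow_const _ _ (Or.inr hr.le)).tendsto.comp ?_).const_mul K
      simpa only [inv_pow] using
        tendsto_pow_atTop_nhds_zero_of_lt_one (inv_nonneg.2 hβ₀.le) hβ_inv
    rw [Real.zero_rpow hr.ne', mul_zero] at hlim ⊢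
    exact ge_of_tendsto' hlim fun n => h n (by positivity)
  · obtain ⟨n, hlt, hle⟩ := exists_nat_pow_near_of_lt_one ht ht₁ (inv_pos.2 hβ₀) hβ_inv
    calc u ≤ K * ((β ^ n)⁻¹) ^ r := h n (by rwa [← inv_pow])
      _ = K * (β * β⁻¹ ^ (n + 1)) ^ r := by rw [pow_succ', mul_inv_cancel_left₀ hβ₀.ne', inv_pow]
      _ ≤ K * (β * t) ^ r := by gcongr
      _ = K * β ^ r * t ^ r := by rw [Real.mul_rpow hβ₀.le ht₀]; ring

section SparseDigitSet

variable (b : ℕ) [NeZero b] (P : ℕ → Prop) [DecidablePred P]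

/-- The Cantor set of all reals in `[0, 1]` with a base-`b` expansion whose digits vanish at every
position outside `P`; position `n` has weight `b ^ (-(n + 1))`. -/
def sparseDigitSet : Set ℝ :=
  range fun a : ℕ → Fin b => Real.ofDigits (spreadDigits P a)

lemma isCompact_sparseDigitSet : IsCompact (sparseDigitSet b P) :=
  isCompact_range (Real.continuous_ofDigits.comp (continuous_spreadDigits P))

lemma sparseDigitSet_subset_Icc : sparseDigitSet b P ⊆ Icc 0 1 := by
  rintro _ ⟨a, rfl⟩
  exact ⟨Real.ofDigits_nonneg _, Real.ofDigits_le_one _⟩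

variable {b P}

lemma abs_ofDigits_sub_le_mul_rpow (hb : 1 < b) {r C : ℝ} (hr : 0 < r)
    (hP : ∀ n : ℕ, r * n - C ≤ Nat.count P n) (a a' : ℕ → Fin b) :
    |Real.ofDigits a - Real.ofDigits a'| ≤ 3 * (b : ℝ) ^ C * (b : ℝ) ^ r *
      |Real.ofDigits (spreadDigits P a) - Real.ofDigits (spreadDigits P a')| ^ r := by
  have hb₁ : (1 : ℝ) < b := by exact_mod_cast hb
  have hb₀ : (0 : ℝ) < b := one_pos.trans hb₁
  have hle_one := abs_sub_le_of_nonneg_of_le (Real.ofDigits_nonneg (spreadDigits P a))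
    (Real.ofDigits_le_one _) (Real.ofDigits_nonneg (spreadDigits P a')) (Real.ofDigits_le_one _)
  refine le_mul_rpow_of_forall_le_inv_pow hb₁ hr (by positivity) (abs_nonneg _) hle_one
    fun n hn => ?_
  have hscale : (b : ℝ) ^ n *
      |Real.ofDigits (spreadDigits P a) - Real.ofDigits (spreadDigits P a')| ≤ 1 := by
    rwa [mul_comm, ← le_div_iff₀ (by positivity), one_div]
  calc |Real.ofDigits a - Real.ofDigits a'|
      ≤ 3 * ((b : ℝ) ^ Nat.count P n)⁻¹ := by
        rw [← div_eq_mul_inv, le_div_iff₀' (by positivity)]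
        linarith [pow_count_mul_abs_ofDigits_sub_le P a a' n]
    _ ≤ 3 * (b : ℝ) ^ (C - r * n) := by
        rw [← Real.rpow_natCast, ← Real.rpow_neg hb₀.le]
        gcongr
        · exact hb₁.le
        · linarith [hP n]
    _ = 3 * (b : ℝ) ^ C * (((b : ℝ) ^ n)⁻¹) ^ r := by
        rw [← Real.rpow_natCast, ← Real.rpow_neg hb₀.le, ← Real.rpow_mul hb₀.le, mul_assoc,
          ← Real.rpow_add hb₀]
        ring_nf

lemma exists_holderOnWith_surjOn_sparseDigitSet (hb : 1 < b) {r : ℝ≥0} (hr : 0 < r) {C : ℝ}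
    (hP : ∀ n : ℕ, r * n - C ≤ Nat.count P n) :
    ∃ (K : ℝ≥0) (g : ℝ → ℝ), HolderOnWith K r g (sparseDigitSet b P) ∧
      SurjOn g (sparseDigitSet b P) (Icc 0 1) := by
  let encode : (ℕ → Fin b) → ℝ := fun a => Real.ofDigits (spreadDigits P a)
  let K : ℝ≥0 := 3 * (b : ℝ≥0) ^ C * (b : ℝ≥0) ^ (r : ℝ)
  have hdist (a a' : ℕ → Fin b) :
      dist (Real.ofDigits a) (Real.ofDigits a') ≤ K * dist (encode a) (encode a') ^ (r : ℝ) := by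
    simpa [K, Real.dist_eq] using abs_ofDigits_sub_le_mul_rpow hb hr hP a a'
  have hencode (a : ℕ → Fin b) : encode (Function.invFun encode (encode a)) = encode a :=
    Function.invFun_eq ⟨a, rfl⟩
  refine ⟨K, fun x => Real.ofDigits (Function.invFun encode x), ?_, fun y hy => ?_⟩
  · rintro _ ⟨a, rfl⟩ _ ⟨a', rfl⟩
    have h := hdist (Function.invFun encode (encode a)) (Function.invFun encode (encode a'))
    rw [hencode, hencode] at h
    simp only [edist_nndist]
    rw [← ENNReal.coe_rpow_of_nonneg _ r.coe_nonneg]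
    exact_mod_cast h
  · obtain ⟨a, -, rfl⟩ := Real.ofDigits_SurjOn hb hy
    refine ⟨encode a, ⟨a, rfl⟩, dist_le_zero.1 ?_⟩
    have h := hdist (Function.invFun encode (encode a)) a
    rwa [hencode, dist_self, Real.zero_rpow (NNReal.coe_pos.2 hr).ne', mul_zero] at h

lemma exists_abs_sub_div_pow_le_of_mem_sparseDigitSet {N M : ℕ} (hNM : N ≤ M)
    (hP : ∀ n, N ≤ n → n < M → ¬ P n) {x : ℝ} (hx : x ∈ sparseDigitSet b P) :
    ∃ m ≤ b ^ N, |x - m / (b : ℝ) ^ N| ≤ ((b : ℝ) ^ M)⁻¹ := by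
  obtain ⟨a, rfl⟩ := hx
  set c := spreadDigits P a
  have hb : (0 : ℝ) < b := Nat.cast_pos.2 (NeZero.pos b)
  have hgap : Real.ofDigits (fun i => c (i + N)) ≤ ((b : ℝ) ^ (M - N))⁻¹ :=
    ofDigits_le_inv_pow_of_eq_zero fun i hi =>
      if_neg (hP (i + N) (Nat.le_add_left N i) (by omega))
  refine ⟨digitPrefix c N, (digitPrefix_lt_pow c N).le, ?_⟩
  calc |Real.ofDigits c - digitPrefix c N / (b : ℝ) ^ N|
      = Real.ofDigits (fun i => c (i + N)) / (b : ℝ) ^ N := by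
        rw [ofDigits_eq_digitPrefix_add_div c N, add_div, add_sub_cancel_left, abs_of_nonneg]
        exact div_nonneg (Real.ofDigits_nonneg _) (by positivity)
    _ ≤ ((b : ℝ) ^ (M - N))⁻¹ / (b : ℝ) ^ N := by gcongr
    _ = ((b : ℝ) ^ M)⁻¹ := by
        rw [div_eq_mul_inv, ← mul_inv, ← pow_add, Nat.sub_add_cancel hNM]

end SparseDigitSet

section FreePositions

/-- The position `n` lies in none of the windows `[i!, τ * i!)`. Factorials grow fast
enough that the free positions have lower density `1 / τ`, the density at the end of a window. -/
def IsFreePosition (τ : ℝ) (n : ℕ) : Prop := ∀ i : ℕ, i.factorial ≤ n → τ * i.factorial ≤ n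

instance (τ : ℝ) : DecidablePred (IsFreePosition τ) := Classical.decPred _

variable {τ : ℝ}

lemma isFreePosition_of_mem_Ico (hτ : 0 ≤ τ) {i n : ℕ} (hin : τ * i.factorial ≤ n)
    (hni : n < (i + 1).factorial) : IsFreePosition τ n := fun j hj => by
  have hji : j ≤ i := by
    by_contra! h
    exact (hni.trans_le (Nat.factorial_le h)).not_ge hj
  calc τ * j.factorial ≤ τ * i.factorial := by gcongr
    _ ≤ n := hin

lemma count_factorial_add_le_count (hτ : 1 ≤ τ) {i n : ℕ} (hin : i.factorial ≤ n)
    (hni : n ≤ (i + 1).factorial) :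
    Nat.count (IsFreePosition τ) i.factorial + (n - τ * i.factorial - 1) ≤
      Nat.count (IsFreePosition τ) n := by
  set m := ⌈τ * i.factorial⌉₊
  have hm : (m : ℝ) < τ * i.factorial + 1 := Nat.ceil_lt_add_one (by positivity)
  rcases le_total m n with hmn | hnm
  · have him : i.factorial ≤ m := by
      have : (i.factorial : ℝ) ≤ τ * i.factorial := le_mul_of_one_le_left (by positivity) hτ
      exact_mod_cast this.trans (Nat.le_ceil _)
    have hfree : ∀ l < n - m, IsFreePosition τ (m + l) := fun l hl =>
      isFreePosition_of_mem_Ico (by linarith)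
        ((Nat.le_ceil _).trans (by exact_mod_cast Nat.le_add_right m l)) (by omega)
    have hcount : Nat.count (IsFreePosition τ) n = Nat.count (IsFreePosition τ) m + (n - m) := by
      conv_lhs => rw [← Nat.add_sub_of_le hmn, Nat.count_add, Nat.count_of_forall hfree]
    have hmono : (Nat.count (IsFreePosition τ) i.factorial : ℝ) ≤
        Nat.count (IsFreePosition τ) m := by
      exact_mod_cast Nat.count_monotone _ him
    rw [hcount]
    push_cast [Nat.cast_sub hmn]
    linarith
  · have hmono : (Nat.count (IsFreePosition τ) i.factorial : ℝ) ≤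
        Nat.count (IsFreePosition τ) n := by
      exact_mod_cast Nat.count_monotone _ hin
    have hnm' : (n : ℝ) ≤ m := by exact_mod_cast hnm
    linarith

lemma mul_sub_two_le_count_isFreePosition (hτ : 1 ≤ τ) {r : ℝ} (hr : 0 ≤ r) {i n : ℕ}
    (hi : τ ≤ (1 - r * τ) * (i + 1)) (hin : (i + 1).factorial ≤ n)
    (hni : n ≤ (i + 2).factorial) :
    r * n - 2 ≤ Nat.count (IsFreePosition τ) n := by
  have hfactorial : r * τ * (i + 1).factorial - 1 ≤
      Nat.count (IsFreePosition τ) (i + 1).factorial := by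
    have hcount := count_factorial_add_le_count hτ (Nat.factorial_le i.le_succ) le_rfl
    have hwindow : τ * i.factorial ≤ (1 - r * τ) * (i + 1).factorial := by
      rw [Nat.factorial_succ]
      push_cast
      rw [← mul_assoc]
      gcongr
    linarith [Nat.cast_nonneg (α := ℝ) (Nat.count (IsFreePosition τ) i.factorial)]
  rcases le_total (n : ℝ) (τ * (i + 1).factorial) with hn | hn
  · have hmono : (Nat.count (IsFreePosition τ) (i + 1).factorial : ℝ) ≤
        Nat.count (IsFreePosition τ) n := by
      exact_mod_cast Nat.count_monotone _ hin
    have := mul_le_mul_of_nonneg_left hn hr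
    linarith
  · have hr₁ : r ≤ 1 := by
      have hrτ : 0 < 1 - r * τ :=
        pos_of_mul_pos_left (one_pos.trans_le (hτ.trans hi)) (by positivity)
      linarith [le_mul_of_one_le_right hr hτ]
    have := count_factorial_add_le_count hτ hin hni
    have := mul_le_mul_of_nonneg_right hr₁ (sub_nonneg.2 hn)
    linarith

lemma exists_factorial_le_lt_factorial_succ {k n : ℕ} (h : k.factorial ≤ n) :
    ∃ i ≥ k, i.factorial ≤ n ∧ n < (i + 1).factorial := by
  have hkn : k ≤ n := (Nat.self_le_factorial k).trans h
  refine ⟨Nat.findGreatest (fun i => i.factorial ≤ n) n, Nat.le_findGreatest hkn h,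
    Nat.findGreatest_spec (P := fun i => i.factorial ≤ n) hkn h, ?_⟩
  by_contra! hle
  exact Nat.findGreatest_is_greatest (P := fun i => i.factorial ≤ n) (Nat.lt_succ_self _)
    ((Nat.self_le_factorial _).trans hle) hle

lemma exists_mul_sub_le_count_isFreePosition (hτ : 1 ≤ τ) {r : ℝ} (hr : 0 ≤ r)
    (hrτ : r * τ < 1) : ∃ C : ℝ, ∀ n : ℕ, r * n - C ≤ Nat.count (IsFreePosition τ) n := by
  obtain ⟨k, hk⟩ := exists_nat_gt (τ / (1 - r * τ))
  have hrτ' : 0 < 1 - r * τ := sub_pos.2 hrτ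
  rw [div_lt_iff₀' hrτ'] at hk
  refine ⟨r * (k + 1).factorial + 2, fun n => ?_⟩
  rcases lt_or_ge n (k + 1).factorial with hn | hn
  · have : r * n ≤ r * (k + 1).factorial := by gcongr
    linarith [Nat.cast_nonneg (α := ℝ) (Nat.count (IsFreePosition τ) n)]
  · obtain ⟨i, hki, hin, hni⟩ := exists_factorial_le_lt_factorial_succ hn
    obtain ⟨i, rfl⟩ := Nat.exists_eq_add_of_le' (Nat.le_of_add_left_le hki)
    have hki' : (k : ℝ) ≤ i + 1 := by exact_mod_cast (by omega : k ≤ i + 1)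
    have hi : τ ≤ (1 - r * τ) * (i + 1) := hk.le.trans (by gcongr)
    have : 0 ≤ r * (k + 1).factorial := by positivity
    linarith [mul_sub_two_le_count_isFreePosition hτ hr hi hin hni.le]

end FreePositions

lemma hausdorffMeasure_le_of_frequently_subset_iUnion_closedEBall {X : Type*} [EMetricSpace X]
    [MeasurableSpace X] [BorelSpace X] {s : ℝ} (hs : 0 ≤ s) {E : Set X} {C : ℝ≥0∞}
    {ρ : ℕ → ℝ≥0∞} (hρ : Tendsto ρ atTop (𝓝 0)) (t : ℕ → Finset X)
    (h : ∃ᶠ n in atTop, (E ⊆ ⋃ c ∈ t n, closedEBall c (ρ n)) ∧ (t n).card * (2 * ρ n) ^ s ≤ C) :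
    μH[s] E ≤ C := by
  obtain ⟨φ, hφ_mono, hφ⟩ := extraction_of_frequently_atTop h
  have hρφ : Tendsto (fun n => 2 * ρ (φ n)) atTop (𝓝 0) := by
    simpa using ENNReal.Tendsto.const_mul (hρ.comp hφ_mono.tendsto_atTop)
      (Or.inr ENNReal.ofNat_ne_top)
  refine (Measure.hausdorffMeasure_le_liminf_sum s E _ hρφ
    (fun n (c : t (φ n)) => closedEBall (c : X) (ρ (φ n)))
    (.of_forall fun n c => ediam_closedEBall_le)
    (.of_forall fun n => by simpa only [iUnion_subtype] using (hφ n).1)).trans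
    (liminf_le_of_frequently_le' (.of_forall fun n => ?_))
  calc ∑ c : t (φ n), ediam (closedEBall (c : X) (ρ (φ n))) ^ s
      ≤ ∑ _c : t (φ n), (2 * ρ (φ n)) ^ s := by
        gcongr
        exact ediam_closedEBall_le
    _ = (t (φ n)).card * (2 * ρ (φ n)) ^ s := by simp
    _ ≤ C := (hφ n).2

section UniformApproximation

variable {ι : Type*} [Fintype ι]

/-- The point with coordinates `a j / q` of the grid of mesh `1 / q`. -/
def gridPoint (q : ℕ) (a : ι → ℤ) : ι → ℝ := fun j => a j / q

/-- For infinitely many `q`, the grid `q⁻¹ • {0, …, q} ^ ι` approximates every point of `E` within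
`q ^ (-τ)` in the sup distance. This is a uniform form of `τ`-well approximability, in which the
denominators `q` are the same for all points of `E`. -/
def UniformlyWellApproximable (τ : ℝ) (E : Set (ι → ℝ)) : Prop :=
  ∃ᶠ q : ℕ in atTop, ∀ x ∈ E, ∃ a ∈ Icc (0 : ι → ℤ) q, dist x (gridPoint q a) ≤ (q : ℝ) ^ (-τ)

lemma add_one_pow_mul_rpow_le {τ : ℝ} (hτ : 0 < τ) {q : ℕ} (hq : 1 ≤ q) (n : ℕ) :
    ((q : ℝ) + 1) ^ n * (2 * (q : ℝ) ^ (-τ)) ^ (n / τ) ≤ 2 ^ n * 2 ^ (n / τ) := by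
  have hq₁ : (1 : ℝ) ≤ q := by exact_mod_cast hq
  have hq₀ : (0 : ℝ) < q := one_pos.trans_le hq₁
  calc ((q : ℝ) + 1) ^ n * (2 * (q : ℝ) ^ (-τ)) ^ (n / τ)
      ≤ (2 * q) ^ n * (2 * (q : ℝ) ^ (-τ)) ^ (n / τ) := by
        gcongr
        linarith
    _ = 2 ^ n * 2 ^ (n / τ) := by
        rw [Real.mul_rpow two_pos.le (by positivity), ← Real.rpow_mul hq₀.le, neg_mul,
          mul_div_cancel₀ _ hτ.ne', Real.rpow_neg hq₀.le, Real.rpow_natCast, mul_pow]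
        field_simp

lemma UniformlyWellApproximable.dimH_le {τ : ℝ} (hτ : 0 < τ) {E : Set (ι → ℝ)}
    (hE : UniformlyWellApproximable τ E) : dimH E ≤ ENNReal.ofReal (Fintype.card ι / τ) := by
  classical
  set s : ℝ := Fintype.card ι / τ
  have hs : 0 ≤ s := by positivity
  let ρ (q : ℕ) : ℝ≥0∞ := ENNReal.ofReal ((q : ℝ) ^ (-τ))
  let grid (q : ℕ) : Finset (ι → ℝ) := (Finset.Icc (0 : ι → ℤ) q).image (gridPoint q)
  have hρ : Tendsto ρ atTop (𝓝 0) := by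
    rw [← ENNReal.ofReal_zero]
    exact ENNReal.tendsto_ofReal ((tendsto_rpow_neg_atTop hτ).comp tendsto_natCast_atTop_atTop)
  have hcard (q : ℕ) : (grid q).card ≤ (q + 1) ^ Fintype.card ι := by
    simpa [Pi.card_Icc] using Finset.card_image_le (s := Finset.Icc (0 : ι → ℤ) q)
  refine dimH_le_of_hausdorffMeasure_ne_top (d := s.toNNReal) (ne_top_of_le_ne_top
    ENNReal.ofReal_ne_top (b := ENNReal.ofReal (2 ^ Fintype.card ι * 2 ^ s)) ?_)
  rw [Real.coe_toNNReal s hs]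
  refine hausdorffMeasure_le_of_frequently_subset_iUnion_closedEBall hs hρ grid
    ((hE.and_eventually (eventually_ge_atTop 1)).mono fun q hq => ⟨fun x hx => ?_, ?_⟩)
  · obtain ⟨a, ha, hxa⟩ := hq.1 x hx
    refine mem_biUnion (Finset.mem_image_of_mem _ (Finset.mem_Icc.2 ha)) ?_
    rw [mem_closedEBall, edist_dist]
    exact ENNReal.ofReal_le_ofReal hxa
  · calc ((grid q).card : ℝ≥0∞) * (2 * ρ q) ^ s
        ≤ ((q + 1) ^ Fintype.card ι : ℕ) * (2 * ρ q) ^ s := by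
          gcongr
          exact hcard q
      _ = ENNReal.ofReal (((q : ℝ) + 1) ^ Fintype.card ι * (2 * (q : ℝ) ^ (-τ)) ^ s) := by
          rw [← ENNReal.ofReal_natCast, ← ENNReal.ofReal_ofNat 2,
            ← ENNReal.ofReal_mul two_pos.le, ENNReal.ofReal_rpow_of_nonneg (by positivity) hs,
            ← ENNReal.ofReal_mul (Nat.cast_nonneg _)]
          push_cast
          rfl
      _ ≤ ENNReal.ofReal (2 ^ Fintype.card ι * 2 ^ s) :=
          ENNReal.ofReal_le_ofReal (add_one_pow_mul_rpow_le hτ hq.2 _)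

lemma uniformlyWellApproximable_univ_pi_sparseDigitSet {b : ℕ} [NeZero b] (hb : 1 < b)
    {P : ℕ → Prop} [DecidablePred P] {τ : ℝ} (hτ : 1 ≤ τ)
    (hP : ∃ᶠ N : ℕ in atTop, ∀ n : ℕ, N ≤ n → n < τ * N → ¬ P n) :
    UniformlyWellApproximable τ (univ.pi fun _ : ι => sparseDigitSet b P) := by
  refine (tendsto_pow_atTop_atTop_of_one_lt hb).frequently (hP.mono fun N hN x hx => ?_)
  have hNM : N ≤ ⌈τ * N⌉₊ := by
    exact_mod_cast (le_mul_of_one_le_left (Nat.cast_nonneg N) hτ).trans (Nat.le_ceil _)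
  choose m hm hxm using fun j => exists_abs_sub_div_pow_le_of_mem_sparseDigitSet hNM
    (fun n hn hnM => hN n hn (Nat.lt_ceil.1 hnM)) (hx j (mem_univ j))
  refine ⟨fun j => m j, ⟨fun j => by simp, fun j => by simpa using mod_cast hm j⟩,
    (dist_pi_le_iff (by positivity)).2 fun j => ?_⟩
  have hb₀ : (0 : ℝ) < b := by positivity
  calc dist (x j) (gridPoint (b ^ N) (fun j => (m j : ℤ)) j)
      ≤ ((b : ℝ) ^ ⌈τ * N⌉₊)⁻¹ := by simpa [gridPoint, Real.dist_eq] using hxm j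
    _ ≤ ((b : ℝ) ^ (τ * N))⁻¹ := by
        rw [← Real.rpow_natCast]
        gcongr
        · exact_mod_cast hb.le
        · exact Nat.le_ceil _
    _ = ((b ^ N : ℕ) : ℝ) ^ (-τ) := by
        rw [← Real.rpow_neg hb₀.le, Nat.cast_pow, ← Real.rpow_natCast_mul hb₀.le, mul_neg,
          mul_comm]

lemma frequently_forall_not_isFreePosition (τ : ℝ) :
    ∃ᶠ N : ℕ in atTop, ∀ n : ℕ, N ≤ n → n < τ * N → ¬ IsFreePosition τ n :=
  tendsto_atTop_mono Nat.self_le_factorial tendsto_id |>.frequently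
    (.of_forall fun i _ hin hni hn => (hn i hin).not_gt hni)

lemma holderOnWith_pi_map {X Y : Type*} [PseudoEMetricSpace X] [PseudoEMetricSpace Y]
    {K r : ℝ≥0} {g : X → Y} {S : Set X} (hg : HolderOnWith K r g S) :
    HolderOnWith K r (fun (x : ι → X) j => g (x j)) (univ.pi fun _ => S) := fun x hx y hy =>
  edist_pi_le_iff.2 fun j => (hg.edist_le (hx j (mem_univ j)) (hy j (mem_univ j))).trans <| by
    gcongr
    exact edist_le_pi_edist x y j

lemma card_mul_le_dimH_univ_pi {K r : ℝ≥0} (hr : 0 < r) {g : ℝ → ℝ} {S : Set ℝ}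
    (hg : HolderOnWith K r g S) (hgS : SurjOn g S (Icc 0 1)) :
    (Fintype.card ι : ℝ≥0∞) * r ≤ dimH (univ.pi fun _ : ι => S) := by
  have himage : Icc (0 : ι → ℝ) 1 ⊆ (fun x j => g (x j)) '' univ.pi fun _ => S := by
    intro y hy
    choose x hxS hxy using fun j => hgS ⟨hy.1 j, hy.2 j⟩
    exact ⟨x, fun j _ => hxS j, funext hxy⟩
  have hcube : dimH (Icc (0 : ι → ℝ) 1) = Fintype.card ι := by
    rw [Real.dimH_of_nonempty_interior, Module.finrank_pi]
    rw [← pi_univ_Icc, interior_pi_set finite_univ]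
    exact ⟨fun _ => 1 / 2, by norm_num⟩
  rw [← ENNReal.le_div_iff_mul_le (by simp [hr.ne']) (by simp), ← hcube]
  exact (dimH_mono himage).trans ((holderOnWith_pi_map hg).dimH_image_le hr)

lemma dimH_univ_pi_sparseDigitSet_isFreePosition {b : ℕ} [NeZero b] (hb : 1 < b) {τ : ℝ}
    (hτ : 1 ≤ τ) : dimH (univ.pi fun _ : ι => sparseDigitSet b (IsFreePosition τ)) =
      ENNReal.ofReal (Fintype.card ι / τ) := by
  have hτ₀ : 0 < τ := one_pos.trans_le hτ
  refine le_antisymm (UniformlyWellApproximable.dimH_le hτ₀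
    (uniformlyWellApproximable_univ_pi_sparseDigitSet hb hτ
      (frequently_forall_not_isFreePosition τ))) ?_
  rw [div_eq_mul_inv, ENNReal.ofReal_mul (Nat.cast_nonneg _), ENNReal.ofReal_natCast]
  refine ENNReal.mul_le_of_forall_lt fun n hn r hr => ?_
  lift r to ℝ≥0 using hr.ne_top
  rcases eq_zero_or_pos r with rfl | hr₀
  · simp
  have hrτ : r * τ < 1 := by
    rw [← ENNReal.ofReal_coe_nnreal, ENNReal.ofReal_lt_ofReal_iff (by positivity)] at hr
    rwa [← lt_div_iff₀ hτ₀, one_div]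
  obtain ⟨C, hC⟩ := exists_mul_sub_le_count_isFreePosition hτ r.coe_nonneg hrτ
  obtain ⟨K, g, hg, hg_surj⟩ := exists_holderOnWith_surjOn_sparseDigitSet hb hr₀ hC
  calc n * r ≤ (Fintype.card ι : ℝ≥0∞) * r := by gcongr
    _ ≤ _ := card_mul_le_dimH_univ_pi hr₀ hg hg_surj

end UniformApproximation

section Configurations

variable {d k : ℕ}

lemma card_pairIdx (k : ℕ) : Fintype.card (PairIdx k) = (k + 1).choose 2 := by
  calc Fintype.card (PairIdx k) = ∑ j : Fin (k + 1), (Finset.univ.filter (· < j)).card := by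
        simp only [Fintype.card_subtype, Finset.card_filter, Fintype.sum_prod_type_right]
    _ = ∑ j : Fin (k + 1), (j : ℕ) := by simp only [Finset.filter_gt_eq_Iio, Fin.card_Iio]
    _ = (k + 1).choose 2 := by
        rw [Fin.sum_univ_eq_sum_range (fun j => j), Finset.sum_range_id, Nat.choose_two_right]

lemma simplexMap_sub_right (x : Fin (k + 1) → Pt d) (v : Pt d) :
    simplexMap d k (fun i => x i - v) = simplexMap d k x := by
  ext p
  exact dist_sub_right _ _ _

lemma dist_simplexMap_le {x y : Fin (k + 1) → Pt d} {r : ℝ} (h : ∀ i, dist (x i) (y i) ≤ r) :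
    dist (simplexMap d k x) (simplexMap d k y) ≤ 2 * r := by
  have hr : 0 ≤ r := dist_nonneg.trans (h 0)
  refine (dist_pi_le_iff (by positivity)).2 fun p => ?_
  rw [two_mul]
  exact (dist_dist_dist_le _ _ _ _).trans (add_le_add (h _) (h _))

lemma Tconf_subset_iUnion_closedBall {E : Set (Pt d)} {q : ℕ} {ρ : ℝ}
    (hE : ∀ x ∈ E, ∃ a ∈ Icc (0 : Fin d → ℤ) q, dist x (WithLp.toLp 2 (gridPoint q a)) ≤ ρ) :
    Tconf d k E ⊆ ⋃ c ∈ Finset.Icc (-q : Fin k → Fin d → ℤ) q, closedBall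
      (simplexMap d k (Fin.cons 0 fun l => WithLp.toLp 2 (gridPoint q (c l)))) (2 * ρ) := by
  rintro _ ⟨x, ⟨hxE, -⟩, rfl⟩
  choose a ha hxa using fun i => hE (x i) (hxE i)
  have hcenter : simplexMap d k (Fin.cons 0 fun l => WithLp.toLp 2
      (gridPoint q (a (Fin.succ l) - a 0))) =
      simplexMap d k fun i => WithLp.toLp 2 (gridPoint q (a i)) := by
    rw [← simplexMap_sub_right (fun i => WithLp.toLp 2 (gridPoint q (a i)))
      (WithLp.toLp 2 (gridPoint q (a 0)))]
    congr 1
    refine funext (Fin.cases (sub_self _).symm fun l => ?_)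
    ext j
    simp [gridPoint, sub_div]
  refine mem_biUnion (x := fun l => a (Fin.succ l) - a 0)
    (Finset.mem_Icc.2 ⟨fun l => ?_, fun l => ?_⟩) ?_
  · exact (zero_sub (q : Fin d → ℤ)).ge.trans (sub_le_sub (ha _).1 (ha 0).2)
  · exact (sub_le_sub (ha _).2 (ha 0).1).trans (sub_zero _).le
  · rw [mem_closedBall, hcenter]
    exact dist_simplexMap_le hxa

lemma volume_Tconf_le {E : Set (Pt d)} {q : ℕ} {ρ : ℝ} (hρ : 0 ≤ ρ)
    (hE : ∀ x ∈ E, ∃ a ∈ Icc (0 : Fin d → ℤ) q, dist x (WithLp.toLp 2 (gridPoint q a)) ≤ ρ) :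
    volume (Tconf d k E) ≤
      ENNReal.ofReal ((2 * q + 1) ^ (d * k) * (4 * ρ) ^ Fintype.card (PairIdx k)) := by
  have hcard : (Finset.Icc (-q : Fin k → Fin d → ℤ) q).card = (2 * q + 1) ^ (d * k) := by
    have hlen : ((q : ℤ) + 1 + q).toNat = 2 * q + 1 := by omega
    simp [Pi.card_Icc, pow_mul, hlen]
  calc volume (Tconf d k E)
      ≤ ∑ c ∈ Finset.Icc (-q : Fin k → Fin d → ℤ) q, volume (closedBall
        (simplexMap d k (Fin.cons 0 fun l => WithLp.toLp 2 (gridPoint q (c l)))) (2 * ρ)) :=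
        (measure_mono (Tconf_subset_iUnion_closedBall hE)).trans (measure_biUnion_finset_le _ _)
    _ = (Finset.Icc (-q : Fin k → Fin d → ℤ) q).card *
        ENNReal.ofReal ((4 * ρ) ^ Fintype.card (PairIdx k)) := by
        simp only [Real.volume_pi_closedBall _ (mul_nonneg two_pos.le hρ), Finset.sum_const,
          nsmul_eq_mul]
        ring_nf
    _ = ENNReal.ofReal ((2 * q + 1) ^ (d * k) * (4 * ρ) ^ Fintype.card (PairIdx k)) := by
        rw [hcard, ENNReal.ofReal_mul (by positivity), ← ENNReal.ofReal_natCast]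
        push_cast
        rfl

lemma dist_le_sqrt_mul_dist_ofLp (x y : Pt d) :
    dist x y ≤ √d * dist (WithLp.ofLp x) (WithLp.ofLp y) := by
  simpa [Real.sqrt_eq_rpow] using
    (PiLp.antilipschitzWith_ofLp 2 fun _ : Fin d => ℝ).le_mul_dist x y

lemma volume_Tconf_preimage_ofLp_eq_zero {τ : ℝ} {E : Set (Fin d → ℝ)}
    (hE : UniformlyWellApproximable τ E) (hτ : d * k < τ * Fintype.card (PairIdx k)) :
    volume (Tconf d k (WithLp.ofLp ⁻¹' E)) = 0 := by
  set m := Fintype.card (PairIdx k)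
  have hlim : Tendsto (fun q : ℕ => ENNReal.ofReal
      (3 ^ (d * k) * (4 * √d) ^ m * (q : ℝ) ^ (-(τ * m - d * k)))) atTop (𝓝 0) := by
    rw [← ENNReal.ofReal_zero, ← mul_zero (3 ^ (d * k) * (4 * √d) ^ m)]
    exact ENNReal.tendsto_ofReal (((tendsto_rpow_neg_atTop (sub_pos.2 hτ)).comp
      tendsto_natCast_atTop_atTop).const_mul _)
  refine le_antisymm (ge_of_tendsto_of_frequently hlim
    ((hE.and_eventually (eventually_ge_atTop 1)).mono fun q ⟨hq, hq₁⟩ => ?_)) zero_le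
  have hq₀ : (1 : ℝ) ≤ q := by exact_mod_cast hq₁
  have happrox : ∀ x ∈ WithLp.ofLp ⁻¹' E, ∃ a ∈ Icc (0 : Fin d → ℤ) q,
      dist x (WithLp.toLp 2 (gridPoint q a)) ≤ √d * (q : ℝ) ^ (-τ) := fun x hx => by
    obtain ⟨a, ha, hxa⟩ := hq _ hx
    exact ⟨a, ha, (dist_le_sqrt_mul_dist_ofLp _ _).trans (by gcongr)⟩
  refine (volume_Tconf_le (by positivity) happrox).trans (ENNReal.ofReal_le_ofReal ?_)
  calc (2 * (q : ℝ) + 1) ^ (d * k) * (4 * (√d * (q : ℝ) ^ (-τ))) ^ m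
      ≤ (3 * q) ^ (d * k) * (4 * (√d * (q : ℝ) ^ (-τ))) ^ m := by
        gcongr
        linarith
    _ = 3 ^ (d * k) * (4 * √d) ^ m * (q : ℝ) ^ (-(τ * m - d * k)) := by
        have hrpow : (q : ℝ) ^ (-(τ * m - d * k)) = q ^ (d * k) * ((q : ℝ) ^ (-τ)) ^ m := by
          rw [← Real.rpow_mul_natCast (by positivity), ← Real.rpow_natCast,
            ← Real.rpow_add (by positivity)]
          push_cast
          ring_nf
        rw [hrpow]
        ring

end Configurations

lemma exists_isCompact_dimH_eq_volume_Tconf_eq_zero {d k : ℕ} (hk : 1 ≤ k) (hkd : k ≤ d) {s : ℝ}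
    (hs₀ : 0 < s) (hs : s < ((k : ℝ) + 1) / 2) :
    ∃ E : Set (Pt d), IsCompact E ∧ E ⊆ {x : Pt d | ∀ i, x i ∈ Icc (0 : ℝ) 1} ∧
      dimH E = ENNReal.ofReal s ∧ volume (Tconf d k E) = 0 := by
  have hk' : (1 : ℝ) ≤ k := by exact_mod_cast hk
  have hkd' : (k : ℝ) ≤ d := by exact_mod_cast hkd
  have hd : (0 : ℝ) < d := by linarith
  set τ : ℝ := d / s with hτ_def
  have hτ : 1 ≤ τ := by rw [hτ_def, one_le_div hs₀]; linarith
  set F : Set (Fin d → ℝ) := univ.pi fun _ => sparseDigitSet 2 (IsFreePosition τ)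
  have hF : UniformlyWellApproximable τ F :=
    uniformlyWellApproximable_univ_pi_sparseDigitSet one_lt_two hτ
      (frequently_forall_not_isFreePosition τ)
  refine ⟨WithLp.ofLp ⁻¹' F, ?_, fun x hx i => sparseDigitSet_subset_Icc _ _ (hx i (mem_univ i)),
    ?_, volume_Tconf_preimage_ofLp_eq_zero hF ?_⟩
  · exact (EuclideanSpace.equiv (Fin d) ℝ).toHomeomorph.isCompact_preimage.2
      (isCompact_univ_pi fun _ => isCompact_sparseDigitSet _ _)
  · calc dimH (WithLp.ofLp ⁻¹' F : Set (Pt d)) = dimH F :=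
          (EuclideanSpace.equiv (Fin d) ℝ).dimH_preimage F
      _ = ENNReal.ofReal (d / τ) := by
          simpa using dimH_univ_pi_sparseDigitSet_isFreePosition (ι := Fin d) one_lt_two hτ
      _ = ENNReal.ofReal s := by rw [hτ_def, div_div_cancel₀ hd.ne']
  · rw [card_pairIdx, Nat.cast_choose_two, hτ_def, div_mul_eq_mul_div, lt_div_iff₀ hs₀]
    push_cast
    calc (d : ℝ) * k * s < d * k * ((k + 1) / 2) := by gcongr
      _ = d * ((k + 1) * (k + 1 - 1) / 2) := by ring

theorem stmt6_general {d k : ℕ} (hk : 1 ≤ k) (hkd : k ≤ d) :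
    (∀ s : ℝ, 0 < s → s < ((k : ℝ) + 1) / 2 →
      ∃ E : Set (Pt d), IsCompact E ∧ E ⊆ {x : Pt d | ∀ i, x i ∈ Icc (0 : ℝ) 1} ∧
        dimH E = ENNReal.ofReal s ∧ volume (Tconf d k E) = 0) ∧
    ((k : ℝ) + 1) / 2 ≤
      sInf {α : ℝ | ∀ E : Set (Pt d), IsCompact E → ENNReal.ofReal α < dimH E →
        0 < volume (Tconf d k E)} := by
  refine ⟨fun s hs₀ hs => exists_isCompact_dimH_eq_volume_Tconf_eq_zero hk hkd hs₀ hs,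
    le_csInf ⟨d, fun E _ hE => ?_⟩ fun α hα => ?_⟩
  · refine absurd (dimH_mono (subset_univ E)) (not_le.2 ?_)
    simpa [Real.dimH_univ_eq_finrank] using hE
  · by_contra! hlt
    obtain ⟨s, hαs, hs⟩ := exists_between (max_lt hlt (by positivity : (0 : ℝ) < (k + 1) / 2))
    obtain ⟨hαs, hs₀⟩ := max_lt_iff.1 hαs
    obtain ⟨E, hE, -, hdim, hvol⟩ := exists_isCompact_dimH_eq_volume_Tconf_eq_zero hk hkd hs₀ hs
    refine (hα E hE ?_).ne' hvol
    rwa [hdim, ENNReal.ofReal_lt_ofReal_iff hs₀]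

theorem stmt6 :
    (∀ s : ℝ, 0 < s → s < 3 / 2 →
      ∃ E : Set (Pt 2), IsCompact E ∧ E ⊆ {x : Pt 2 | ∀ i, x i ∈ Icc (0 : ℝ) 1} ∧
        dimH E = ENNReal.ofReal s ∧ volume (Tconf 2 2 E) = 0) ∧
    (3 : ℝ) / 2 ≤
      sInf {α : ℝ | ∀ E : Set (Pt 2), IsCompact E → ENNReal.ofReal α < dimH E →
        0 < volume (Tconf 2 2 E)} := by
  have h : ((2 : ℕ) + 1 : ℝ) / 2 = 3 / 2 := by norm_num
  exact h ▸ stmt6_general one_le_two le_rfl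
end
end
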